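/- arXiv:1708.06411 — 3 statements merged into one kernel-verified Lean document; each statement's English description precedes it below -/
import Mathlib

section
/- Every graph G that admits a tree decomposition (T,X) of width t−1 satisfies MinBis(G) ≤ (1/2)·t·Δ(G)·((log₂(1/r(T,X)))² + 9·log₂(1/r(T,X)) + 8), where Δ(G) is the maximum degree of G. -/
/-!
Let `p` be a heaviest path of the decomposition tree, `R` the set of vertices in its clusters and
`n` the number of vertices, so that `r = |R| / n`. Arrange all vertices on a line (read cyclically)
by their position along `p`, on each level with the elements of `R` first (`exists_levels`,
`IsLayout`). Cutting this cyclic order next to an element of `R` costs a single cluster, since that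
cluster separates the levels before, at and behind it (`IsEnum.turn_invariant`). A cyclic interval
with `m` elements which begins and ends next to elements of `R` therefore splits off `m` vertices at
the cost of two clusters.

If there is no such interval, every element of `R`, shifted by `m`, lands in a gap between
consecutive elements of `R`. Averaging over the shifts by `m` and `-m` (`gap_exists`) yields a gap
`S` and a segment `J` that starts and ends in `R` and whose shift lies in `S`, such that
`|J ∩ R| ≥ r * (|J| + |S|)`. As `|J| ≤ |S|`, the density of `R` in `J` is at least `2 * r`, and as
`|J ∩ R| ≤ |J|`, the length of `J` is at least `r * |S|`. Take the interval between `J` and `S`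
together with a suitable part of `S`: the sizes that leave an error which can be made up for inside
`J` form a window of length `|J|`, and a part of `S` of such a size can be split off with
`⌈log₂ (1 / r)⌉` centroid clusters (`exists_approx_cut`). Along with the three clusters at the ends
of `J` and `S` this is at most `log₂ (1 / r) + 4` clusters (`exists_splits`).

It remains to cut `J`, where the density has doubled, so `L = log₂ (1 / r)` drops by at least one in
each round. Since `(L + 4) + ((L - 1) ^ 2 + 9 * (L - 1) + 8) / 2 = (L ^ 2 + 9 * L + 8) / 2`, at most
`(L ^ 2 + 9 * L + 8) / 2` clusters are used in total (`exists_cut`), and each of them meets at most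
`t * Δ(G)` edges (`cutWidth_le`).
-/

open scoped Classical

namespace MinBisection

noncomputable section

variable {V ι : Type*}

/-- The number of edges of `G` with one endpoint in `B` and the other outside of `B`,
i.e., the width `e_G(B, W)` of the cut `(B, W)` where `W` is the complement of `B`. -/
def cutWidth (G : SimpleGraph V) (B : Finset V) : ℕ :=
  Nat.card {e : Sym2 V // ∃ x y, G.Adj x y ∧ x ∈ B ∧ y ∉ B ∧ e = s(x, y)}

/-- The number of edges of `G` whose endpoints lie in two different parts of the
partition `(B, W, Z)` of the vertex set. -/
def cutWidth3 (G : SimpleGraph V) (B W Z : Finset V) : ℕ :=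
  Nat.card {e : Sym2 V // ∃ x y, G.Adj x y ∧ e = s(x, y) ∧
    ¬ ((x ∈ B ∧ y ∈ B) ∨ (x ∈ W ∧ y ∈ W) ∨ (x ∈ Z ∧ y ∈ Z))}

/-- `(B, Bᶜ)` is a bisection: the sizes of the two parts differ by at most one. -/
def IsBisection [Fintype V] (B : Finset V) : Prop :=
  B.card ≤ Bᶜ.card + 1 ∧ Bᶜ.card ≤ B.card + 1

/-- The minimum bisection width `MinBis(G)`. -/
def minBis (G : SimpleGraph V) [Fintype V] : ℕ :=
  sInf {k | ∃ B : Finset V, IsBisection B ∧ cutWidth G B = k}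

/-- The maximum degree `Δ(G)`. -/
def maxDeg (G : SimpleGraph V) [Fintype V] : ℕ :=
  Finset.univ.sup fun v => Nat.card {u // G.Adj v u}

/-- The number of vertices on a longest path in `G`. -/
def longestPathCard (G : SimpleGraph V) : ℕ :=
  sSup {k | ∃ (u v : V) (p : G.Walk u v), p.IsPath ∧ k = p.support.length}

/-- The relative diameter `diam*` of a connected graph: the number of vertices on a
longest path divided by the number of vertices. -/
def diamStar (G : SimpleGraph V) [Fintype V] : ℝ :=
  (longestPathCard G : ℝ) / (Fintype.card V : ℝ)

/-- The number of vertices on a longest path contained in the connected component `c`. -/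
def compLongestPathCard (G : SimpleGraph V) (c : G.ConnectedComponent) : ℕ :=
  sSup {k | ∃ (u v : V) (p : G.Walk u v), p.IsPath ∧ G.connectedComponentMk u = c ∧
    k = p.support.length}

/-- The relative diameter `diam*` of a forest: the sum over all connected components of the
number of vertices on a longest path in the component, divided by the number of vertices. -/
def forestDiamStar (G : SimpleGraph V) [Fintype V] : ℝ :=
  letI : Fintype G.ConnectedComponent := Fintype.ofFinite _
  (∑ c : G.ConnectedComponent, (compLongestPathCard G c : ℝ)) / (Fintype.card V : ℝ)

/-- `(T, X)` is a tree decomposition of `G`. -/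
structure IsTreeDecomp (G : SimpleGraph V) (T : SimpleGraph ι) (X : ι → Finset V) : Prop where
  isTree : T.IsTree
  mem_cluster : ∀ v : V, ∃ i, v ∈ X i
  edge_cluster : ∀ ⦃u v : V⦄, G.Adj u v → ∃ i, u ∈ X i ∧ v ∈ X i
  inter_subset : ∀ ⦃i j : ι⦄ (p : T.Walk i j), p.IsPath → ∀ h ∈ p.support, X i ∩ X j ⊆ X h

/-- The weight `w(P, X)` of a path `p` of the tree `T` with respect to the clusters `X`:
the cardinality of the union of the clusters along the path. -/
def walkWeight (X : ι → Finset V) {T : SimpleGraph ι} {i j : ι} (p : T.Walk i j) : ℕ :=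
  (p.support.toFinset.biUnion X).card

/-- The relative weight `r(T, X)` of a heaviest path in the tree decomposition `(T, X)`. -/
def rTD [Fintype V] (T : SimpleGraph ι) (X : ι → Finset V) : ℝ :=
  (↑(sSup {w : ℕ | ∃ (i j : ι) (p : T.Walk i j), p.IsPath ∧ w = walkWeight X p}) : ℝ) /
    (Fintype.card V : ℝ)

/-- The path `p` is nonredundant: one of its two ends `i` is a nonredundant end, i.e.,
`X i ≠ ∅` and no cluster along the path contains the previous one when traversed from `i`. -/
def NonredundantPath (X : ι → Finset V) {T : SimpleGraph ι} {i j : ι} (p : T.Walk i j) : Prop :=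
  (X i ≠ ∅ ∧ List.Chain' (fun a b => ¬ X b ⊆ X a) p.support) ∨
  (X j ≠ ∅ ∧ List.Chain' (fun a b => ¬ X b ⊆ X a) p.reverse.support)

/-- `R_i`: the set of vertices whose path node (first node along `p`, traversed from the
end `i₀`, whose cluster contains the vertex) is `i`. -/
def Rset (X : ι → Finset V) {T : SimpleGraph ι} {i₀ j₀ : ι} (p : T.Walk i₀ j₀) (i : ι) :
    Set V :=
  {x | ∃ (k : ℕ) (hk : k < p.support.length), p.support.get ⟨k, hk⟩ = i ∧ x ∈ X i ∧
    ∀ (l : ℕ) (hl : l < k), x ∉ X (p.support.get ⟨l, hl.trans hk⟩)}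

/-- `S_i`: the union of the clusters over the component `T_i` of `T - E(P)` containing `i`,
minus `R = ⋃_{h ∈ V(P)} X^h`. -/
def Sset (X : ι → Finset V) {T : SimpleGraph ι} {i₀ j₀ : ι} (p : T.Walk i₀ j₀) (i : ι) :
    Set V :=
  {x | (∃ j, (∃ q : T.Walk i j, ∀ e ∈ q.edges, e ∉ p.edges) ∧ x ∈ X j) ∧
    ∀ h ∈ p.support, x ∉ X h}

end

end MinBisection

/-! ### Gaps between marks of a periodic set of integers -/

namespace MinBisection

theorem exists_prev {N : ℤ} (hN : 0 < N) {ρ : ℤ → Prop} (h0 : ρ 0)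
    (per : ∀ x, ρ (x + N) ↔ ρ x) (x : ℤ) :
    ∃ p, ρ p ∧ p ≤ x ∧ ∀ y, p < y → y ≤ x → ¬ ρ y := by
  have hk : ∀ k : ℕ, ρ (-(k * N)) := by
    intro k
    induction k with
    | zero => simpa using h0
    | succ k ih =>
      rw [← per]
      convert ih using 1
      push_cast
      ring
  obtain ⟨p, ⟨hp, hpx⟩, hmax⟩ := Int.exists_greatest_of_bdd (P := fun z => ρ z ∧ z ≤ x)
    ⟨x, fun z hz => hz.2⟩ ⟨-((x.natAbs : ℕ) * N), hk _, by
      have : -(x.natAbs : ℤ) ≤ x := by omega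
      nlinarith [Int.natCast_nonneg x.natAbs]⟩
  exact ⟨p, hp, hpx, fun y hy hyx hρ => absurd (hmax y ⟨hρ, hyx⟩) (by omega)⟩

theorem exists_next {N : ℤ} (hN : 0 < N) {ρ : ℤ → Prop} (h0 : ρ 0)
    (per : ∀ x, ρ (x + N) ↔ ρ x) (x : ℤ) :
    ∃ p, ρ p ∧ x < p ∧ ∀ y, x < y → y < p → ¬ ρ y := by
  obtain ⟨p, hp, hpx, hmax⟩ := exists_prev hN (ρ := fun z => ρ (-z)) (by simpa using h0)
    (fun z => by rw [← per]; congr! 1; ring) (-x - 1)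
  refine ⟨-p, hp, by omega, fun y hy hyp hρ => ?_⟩
  exact hmax (-y) (by omega) (by omega) (by simpa using hρ)

theorem card_filter_Ico_periodic {N : ℤ} (hN : 0 < N) {Q : ℤ → Prop}
    (per : ∀ x, Q (x + N) ↔ Q x) (c : ℤ) :
    ((Finset.Ico c (c + N)).filter Q).card = ((Finset.Ico 0 N).filter Q).card := by
  have perk : ∀ (k x : ℤ), Q (x + k * N) ↔ Q x := by
    intro k x
    have h : Function.Periodic Q N := fun x => propext (per x)
    exact (h.int_mul k x).to_iff
  refine Finset.card_bij (fun x _ => x % N) ?_ ?_ ?_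
  · intro x hx
    simp only [Finset.mem_filter, Finset.mem_Ico] at hx ⊢
    refine ⟨⟨Int.emod_nonneg _ hN.ne', Int.emod_lt_of_pos _ hN⟩, ?_⟩
    rw [← perk (x / N), mul_comm, Int.emod_add_mul_ediv]
    exact hx.2
  · intro x hx y hy hxy
    simp only [Finset.mem_filter, Finset.mem_Ico] at hx hy
    obtain ⟨k, hk⟩ := Int.ModEq.dvd (show x ≡ y [ZMOD N] from hxy)
    have h1 : k < 1 := by by_contra h; nlinarith
    have h2 : -1 < k := by by_contra h; nlinarith
    have : k = 0 := by omega
    subst this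
    omega
  · intro y hy
    simp only [Finset.mem_filter, Finset.mem_Ico] at hy
    refine ⟨c + (y - c) % N, ?_, ?_⟩
    · simp only [Finset.mem_filter, Finset.mem_Ico]
      have h1 := Int.emod_nonneg (y - c) hN.ne'
      have h2 := Int.emod_lt_of_pos (y - c) hN
      refine ⟨⟨by omega, by omega⟩, ?_⟩
      rw [← perk ((y - c) / N)]
      have := Int.emod_add_mul_ediv (y - c) N
      convert hy.2 using 1
      linarith
    · rw [Int.add_emod_emod]
      simp only [add_sub_cancel]
      exact Int.emod_eq_of_lt hy.1.1 hy.1.2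

/-- `x` lies between two marks `a ≤ b` whose translates by `s` have no mark between them. -/
def Sheltered (ρ : ℤ → Prop) (s x : ℤ) : Prop :=
  ∃ a b, ρ a ∧ ρ b ∧ a ≤ x ∧ x ≤ b ∧ ∀ c, a + s ≤ c → c ≤ b + s → ¬ ρ c

theorem sheltered_periodic {N : ℤ} {ρ : ℤ → Prop}
    (per : ∀ x, ρ (x + N) ↔ ρ x) (s x : ℤ) :
    Sheltered ρ s (x + N) ↔ Sheltered ρ s x := by
  constructor
  · rintro ⟨a, b, ha, hb, hax, hxb, h⟩
    refine ⟨a - N, b - N, ?_, ?_, by omega, by omega, fun c h1 h2 h3 => ?_⟩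
    · rw [← per]; simpa using ha
    · rw [← per]; simpa using hb
    · exact h (c + N) (by omega) (by omega) ((per c).2 h3)
  · rintro ⟨a, b, ha, hb, hax, hxb, h⟩
    refine ⟨a + N, b + N, (per a).2 ha, (per b).2 hb, by omega, by omega, fun c h1 h2 h3 => ?_⟩
    refine h (c - N) (by omega) (by omega) ?_
    rw [← per]; simpa using h3

/-- If no two marks of the `N`-periodic set `ρ` are at distance `m`, then for one of the shifts
`s = m` and `s = -m` there are a gap `(g, g')` between consecutive marks and marks `a ≤ b` whose
shifts lie in this gap such that the density of marks in `[a, b]`, measured against the joint length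
of `[a, b]` and the gap, is at least the overall density. For the average, note that a gap hit by
a shifted mark contains no point that is sheltered from the opposite shift, so that for both shifts
together the lengths add up to at most `2 * N`. -/
theorem gap_exists {N : ℤ} (hN : 0 < N) {ρ : ℤ → Prop} (h0 : ρ 0)
    (per : ∀ x, ρ (x + N) ↔ ρ x) (m : ℤ) (hno : ∀ a, ρ a → ¬ ρ (a + m)) :
    ∃ s, (s = m ∨ s = -m) ∧ ∃ g g' a b, ρ g ∧ ρ g' ∧ g < g' ∧ (∀ y, g < y → y < g' → ¬ ρ y) ∧
      ρ a ∧ ρ b ∧ a ≤ b ∧ g < a + s ∧ b + s < g' ∧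
      (((Finset.Ico 0 N).filter ρ).card : ℤ) * ((b + 1 - a) + (g' - g - 1)) ≤
        N * (((Finset.Icc a b).filter ρ).card : ℤ) := by
  choose σ hσρ hσlt hσ using exists_next hN h0 per
  set P := (Finset.Ico 0 N).filter ρ with hP
  have hNρ : ρ N := by simpa using (per 0).2 h0
  have hσN : ∀ g ∈ P, σ g ≤ N := by
    intro g hg
    simp only [hP, Finset.mem_filter, Finset.mem_Ico] at hg
    by_contra h
    exact hσ g N hg.1.2 (by omega) hNρ
  have hdisj : ∀ s : ℤ, (P : Set ℤ).PairwiseDisjoint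
      (fun g => Finset.Ioo (g - s) (σ g - s)) := by
    intro s g hg g' hg' hne
    simp only [hP, Finset.coe_filter, Set.mem_ofPred_eq] at hg hg'
    rw [Function.onFun, Finset.disjoint_left]
    intro x hx hx'
    simp only [Finset.mem_Ioo] at hx hx'
    rcases lt_or_gt_of_ne hne with h | h
    · exact hσ g g' h (by omega) hg'.2
    · exact hσ g' g h (by omega) hg.2
  let A : ℤ → ℤ → Finset ℤ := fun s g => (Finset.Ioo (g - s) (σ g - s)).filter ρ
  let J : ℤ → ℤ → Finset ℤ := fun s g => (Finset.Ioo (g - s) (σ g - s)).filter (Sheltered ρ s)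
  let Hit : ℤ → Finset ℤ := fun s => P.filter fun g => (A s g).Nonempty
  have hHitP : ∀ s, Hit s ⊆ P := fun s => Finset.filter_subset _ _
  have hQ : ∀ s : ℤ, ((Finset.Ico (-s) (-s + N)).filter (Sheltered ρ s)).card =
      ((Finset.Ico 0 N).filter (Sheltered ρ s)).card := fun s =>
    card_filter_Ico_periodic hN (sheltered_periodic per s) (-s)
  -- every mark lands, after translation by `s`, in a gap between consecutive marks
  have h1 : ∀ s : ℤ, (∀ a, ρ a → ¬ ρ (a + s)) → P.card ≤ ∑ g ∈ Hit s, (A s g).card := by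
    intro s hs
    rw [hP, ← card_filter_Ico_periodic hN per (-s)]
    refine le_trans (Finset.card_le_card ?_) Finset.card_biUnion_le
    intro a ha
    simp only [Finset.mem_filter, Finset.mem_Ico] at ha
    obtain ⟨g, hg, hga, hgmax⟩ := exists_prev hN h0 per (a + s)
    have hg0 : 0 ≤ g := by
      by_contra h
      exact hgmax 0 (by omega) (by omega) h0
    have hne : g ≠ a + s := fun h => hs a ha.2 (h ▸ hg)
    have hσg : a + s < σ g := by
      by_contra h
      exact hgmax (σ g) (hσlt g) (by omega) (hσρ g)
    have haA : a ∈ A s g := by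
      simp only [A, Finset.mem_filter, Finset.mem_Ioo]
      exact ⟨⟨by omega, by omega⟩, ha.2⟩
    simp only [Finset.mem_biUnion, Hit, Finset.mem_filter, hP, Finset.mem_Ico]
    exact ⟨g, ⟨⟨⟨hg0, by omega⟩, hg⟩, ⟨a, haA⟩⟩, haA⟩
  -- a gap hit by a translated mark contains no point sheltered from the opposite translation
  have h2 : ∀ s : ℤ, ∑ g ∈ Hit s, (Finset.Ioo g (σ g)).card ≤
      ((Finset.Ico 0 N).filter fun x => ¬ Sheltered ρ (-s) x).card := by
    intro s
    have hd := (hdisj 0).subset (Finset.coe_subset.2 (hHitP s))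
    simp only [sub_zero] at hd
    rw [← Finset.card_biUnion (fun a ha b hb hab => hd ha hb hab)]
    refine Finset.card_le_card fun x hx => ?_
    simp only [Finset.mem_biUnion] at hx
    obtain ⟨g, hg, hx⟩ := hx
    have hgP := hHitP s hg
    have hgN := hσN g hgP
    simp only [Hit, Finset.mem_filter] at hg
    obtain ⟨c, hc⟩ := hg.2
    simp only [hP, Finset.mem_filter, Finset.mem_Ico, Finset.mem_Ioo, A] at hc hx hgP ⊢
    refine ⟨⟨by omega, by omega⟩, ?_⟩
    rintro ⟨a, b, ha, hb, hax, hxb, h⟩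
    have hag : a ≤ g := by
      by_contra h'
      exact hσ g a (by omega) (by omega) ha
    have hbg : σ g ≤ b := by
      by_contra h'
      exact hσ g b (by omega) (by omega) hb
    exact h c (by omega) (by omega) hc.2
  have h3 : ∀ s : ℤ, ∑ g ∈ Hit s, (J s g).card ≤
      ((Finset.Ico 0 N).filter (Sheltered ρ s)).card := by
    intro s
    have hd := (hdisj s).subset (Finset.coe_subset.2 (hHitP s))
    rw [← hQ s, ← Finset.card_biUnion (fun a ha b hb hab =>
      Finset.disjoint_filter_filter (hd ha hb hab))]
    refine Finset.card_le_card fun x hx => ?_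
    simp only [Finset.mem_biUnion] at hx
    obtain ⟨g, hg, hx⟩ := hx
    have hgP := hHitP s hg
    have hgN := hσN g hgP
    simp only [hP, Finset.mem_filter, Finset.mem_Ico, Finset.mem_Ioo] at hx hgP ⊢
    exact ⟨⟨by omega, by omega⟩, hx.2⟩
  have h4 : ∀ s : ℤ, ((Finset.Ico 0 N).filter (Sheltered ρ s)).card +
      ((Finset.Ico 0 N).filter fun x => ¬ Sheltered ρ s x).card = N.toNat := by
    intro s
    rw [Finset.card_filter_add_card_filter_not]
    simp
  have hno' : ∀ a, ρ a → ¬ ρ (a + -m) := fun a ha h => hno _ h (by simpa using ha)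
  by_contra hcon
  push Not at hcon
  have key : ∀ s : ℤ, (s = m ∨ s = -m) → (∀ a, ρ a → ¬ ρ (a + s)) → ∀ g ∈ Hit s,
      N.toNat * (A s g).card < P.card * ((J s g).card + (Finset.Ioo g (σ g)).card) := by
    intro s hs hsno g hg
    simp only [Hit, Finset.mem_filter] at hg
    set a := (A s g).min' hg.2 with ha
    set b := (A s g).max' hg.2 with hb
    have haA : a ∈ A s g := Finset.min'_mem _ _
    have hbA : b ∈ A s g := Finset.max'_mem _ _
    have hab : a ≤ b := Finset.min'_le _ _ hbA
    have hAeq : A s g ⊆ (Finset.Icc a b).filter ρ := by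
      intro x hx
      rw [Finset.mem_filter, Finset.mem_Icc]
      exact ⟨⟨Finset.min'_le _ _ hx, Finset.le_max' _ _ hx⟩, (Finset.mem_filter.1 hx).2⟩
    have hgρ : ρ g := by
      have := hg.1
      simp only [hP, Finset.mem_filter] at this
      exact this.2
    simp only [A, Finset.mem_filter, Finset.mem_Ioo] at haA hbA
    have hJ : Finset.Icc a b ⊆ J s g := by
      intro x hx
      simp only [J, Finset.mem_filter, Finset.mem_Ioo, Finset.mem_Icc] at hx ⊢
      refine ⟨⟨by omega, by omega⟩, a, b, haA.2, hbA.2, hx.1, hx.2, fun c hc1 hc2 => ?_⟩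
      exact hσ g c (by omega) (by omega)
    have hJc := Finset.card_le_card hJ
    have hAc := Finset.card_le_card hAeq
    have := hcon s hs g (σ g) a b hgρ (hσρ g) (hσlt g) (hσ g) haA.2 hbA.2 hab
      (by omega) (by omega)
    have hlt := hσlt g
    rw [Int.card_Icc] at hJc
    rw [Int.card_Ioo]
    zify
    rw [Int.toNat_of_nonneg hN.le, Int.toNat_of_nonneg (by omega : 0 ≤ σ g - g - 1)]
    have hJc' : b + 1 - a ≤ ((J s g).card : ℤ) := by omega
    calc N * ((A s g).card : ℤ) ≤ N * (((Finset.Icc a b).filter ρ).card : ℤ) := by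
          have : ((A s g).card : ℤ) ≤ (((Finset.Icc a b).filter ρ).card : ℤ) := by
            exact_mod_cast hAc
          nlinarith
      _ < _ := this
      _ ≤ _ := by
          apply mul_le_mul_of_nonneg_left _ (by positivity)
          omega
  have hP0 : 0 < P.card := Finset.card_pos.2 ⟨0, by simp [hP, h0, hN]⟩
  have sumlt : ∀ s : ℤ, (s = m ∨ s = -m) → (∀ a, ρ a → ¬ ρ (a + s)) →
      N.toNat * P.card < P.card * (((Finset.Ico 0 N).filter (Sheltered ρ s)).card +
        ((Finset.Ico 0 N).filter fun x => ¬ Sheltered ρ (-s) x).card) := by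
    intro s hs hsno
    have hne : (Hit s).Nonempty := by
      by_contra h
      have := h1 s hsno
      rw [Finset.not_nonempty_iff_eq_empty.1 h, Finset.sum_empty] at this
      omega
    calc N.toNat * P.card ≤ N.toNat * ∑ g ∈ Hit s, (A s g).card :=
          Nat.mul_le_mul_left _ (h1 s hsno)
      _ < ∑ g ∈ Hit s, P.card * ((J s g).card + (Finset.Ioo g (σ g)).card) := by
          rw [Finset.mul_sum]
          exact Finset.sum_lt_sum_of_nonempty hne (key s hs hsno)
      _ ≤ _ := by
          rw [← Finset.mul_sum, Finset.sum_add_distrib]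
          exact Nat.mul_le_mul_left _ (add_le_add (h3 s) (h2 s))
  have e1 := sumlt m (Or.inl rfl) hno
  have e2 := sumlt (-m) (Or.inr rfl) hno'
  rw [neg_neg] at e2
  have e3 := h4 m
  have e4 := h4 (-m)
  nlinarith

end MinBisection

/-! ### Approximate cuts by centroid clusters -/

namespace MinBisection

/-- The nodes `u` and `v` are joined in `T` by a walk avoiding the node `i`. -/
def ConnAvoid {ι : Type*} (T : SimpleGraph ι) (i u v : ι) : Prop :=
  ∃ p : T.Walk u v, i ∉ p.support

namespace ConnAvoid

variable {ι : Type*} {T : SimpleGraph ι} {i u v w : ι}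

theorem symm (h : ConnAvoid T i u v) : ConnAvoid T i v u := by
  obtain ⟨p, hp⟩ := h
  exact ⟨p.reverse, by simpa using hp⟩

theorem trans (h : ConnAvoid T i u v) (h' : ConnAvoid T i v w) : ConnAvoid T i u w := by
  obtain ⟨p, hp⟩ := h
  obtain ⟨q, hq⟩ := h'
  exact ⟨p.append q, by simp [SimpleGraph.Walk.mem_support_append_iff, hp, hq]⟩

theorem ne_left (h : ConnAvoid T i u v) : u ≠ i := by
  obtain ⟨p, hp⟩ := h
  rintro rfl
  exact hp p.start_mem_support

/-- In a tree no node is reachable from both ends of an edge while avoiding the respective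
other end, because every edge is a bridge. -/
theorem not_both (hT : T.IsTree) (hadj : T.Adj u v) (h : ConnAvoid T u v w)
    (h' : ConnAvoid T v u w) : False := by
  obtain ⟨p, hp⟩ := h
  obtain ⟨q, hq⟩ := h'
  have hb := SimpleGraph.isAcyclic_iff_forall_adj_isBridge.1 hT.isAcyclic hadj
  rw [SimpleGraph.isBridge_iff_forall_walk_mem_edges] at hb
  have := hb (q.append p.reverse)
  rw [SimpleGraph.Walk.edges_append, List.mem_append] at this
  rcases this with h | h
  · exact hq (SimpleGraph.Walk.snd_mem_support_of_mem_edges _ h)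
  · rw [SimpleGraph.Walk.edges_reverse, List.mem_reverse] at h
    exact hp (SimpleGraph.Walk.fst_mem_support_of_mem_edges _ h)

end ConnAvoid

variable {V ι : Type*}

/-- All nodes whose clusters contain a fixed vertex `x ∉ X i` lie in one component of `T - i`. -/
theorem IsTreeDecomp.connAvoid {G : SimpleGraph V} {T : SimpleGraph ι} {X : ι → Finset V}
    (h : IsTreeDecomp G T X) {i j j' : ι} {x : V} (hi : x ∉ X i) (hj : x ∈ X j)
    (hj' : x ∈ X j') : ConnAvoid T i j j' := by
  obtain ⟨p, hp⟩ := h.isTree.connected.exists_isPath j j'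
  refine ⟨p, fun hip => hi (h.inter_subset p hp i hip (Finset.mem_inter.2 ⟨hj, hj'⟩))⟩

/-- A centroid node: every component of `T - i` carries at most half of the vertices of `S`.
The map `home` picks for each vertex a node whose cluster contains it. -/
theorem exists_centroid [Fintype ι] {T : SimpleGraph ι} (hT : T.IsTree) (X : ι → Finset V)
    (home : V → ι) (S : Finset V) :
    ∃ i, ∀ c, 2 * (S.filter fun x => x ∉ X i ∧ ConnAvoid T i c (home x)).card ≤ S.card := by
  by_contra hcon
  push Not at hcon
  choose f hf using hcon
  have : Nonempty ι := hT.connected.nonempty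
  -- a heavy component with the fewest nodes
  obtain ⟨i, -, hmin⟩ := Finset.exists_min_image (Finset.univ : Finset ι)
    (fun i => (Finset.univ.filter fun u => ConnAvoid T i (f i) u).card) Finset.univ_nonempty
  have hne : f i ≠ i := by
    have hpos : 0 < (S.filter fun x => x ∉ X i ∧ ConnAvoid T i (f i) (home x)).card := by
      have := hf i
      omega
    obtain ⟨x, hx⟩ := Finset.card_pos.1 hpos
    exact (Finset.mem_filter.1 hx).2.2.ne_left
  obtain ⟨j, hadj, hij⟩ : ∃ j, T.Adj i j ∧ ConnAvoid T i (f i) j := by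
    obtain ⟨p, hp⟩ := hT.connected.exists_isPath i (f i)
    generalize f i = c at *
    cases p with
    | nil => exact absurd rfl hne
    | @cons _ j _ hadj q =>
      rw [SimpleGraph.Walk.cons_isPath_iff] at hp
      exact ⟨j, hadj, ConnAvoid.symm ⟨q, hp.2⟩⟩
  by_cases hji : ConnAvoid T j (f j) i
  · have hd : Disjoint (S.filter fun x => x ∉ X i ∧ ConnAvoid T i (f i) (home x))
        (S.filter fun x => x ∉ X j ∧ ConnAvoid T j (f j) (home x)) := by
      rw [Finset.disjoint_left]
      intro x hx hx'
      exact ConnAvoid.not_both hT hadj (hij.symm.trans (Finset.mem_filter.1 hx).2.2)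
        (hji.symm.trans (Finset.mem_filter.1 hx').2.2)
    have := Finset.card_union_of_disjoint hd
    have h2 := Finset.card_le_card (Finset.union_subset
      (Finset.filter_subset (fun x => x ∉ X i ∧ ConnAvoid T i (f i) (home x)) S)
      (Finset.filter_subset (fun x => x ∉ X j ∧ ConnAvoid T j (f j) (home x)) S))
    have h3 := hf i
    have h4 := hf j
    omega
  · have hss : (Finset.univ.filter fun u => ConnAvoid T j (f j) u) ⊂
        (Finset.univ.filter fun u => ConnAvoid T i (f i) u) := by
      rw [Finset.ssubset_iff_of_subset]
      · refine ⟨j, by simpa using hij, ?_⟩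
        simp only [Finset.mem_filter, Finset.mem_univ, true_and]
        exact fun h => h.symm.ne_left rfl
      · intro u hu
        simp only [Finset.mem_filter, Finset.mem_univ, true_and] at hu ⊢
        obtain ⟨r, hr⟩ := hT.connected.exists_isPath j u
        refine hij.trans ⟨r, fun hi => hji ?_⟩
        refine hu.trans (ConnAvoid.symm ⟨r.dropUntil i hi, fun hj => ?_⟩)
        -- a path from `j` cannot return to `j` after reaching `i`
        have hn := hr.support_nodup
        rw [← r.take_spec hi, SimpleGraph.Walk.support_append, List.nodup_append] at hn
        have : j ∈ (r.dropUntil i hi).support.tail := by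
          rw [← SimpleGraph.Walk.cons_tail_support, List.mem_cons] at hj
          rcases hj with hj | hj
          · exact absurd hj hadj.ne'
          · exact hj
        exact hn.2.2 j (SimpleGraph.Walk.start_mem_support _) j this rfl
    exact absurd (hmin j (Finset.mem_univ _)) (not_le.2 (Finset.card_lt_card hss))

/-- With `k` clusters one can separate from `S` a part whose size lies in a prescribed window,
provided the window has length at least `|S| / 2 ^ k`. -/
theorem exists_approx_cut [Fintype ι] {G : SimpleGraph V} {T : SimpleGraph ι}
    {X : ι → Finset V} (hTD : IsTreeDecomp G T X) (k : ℕ) :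
    ∀ (S : Finset V) (lo hi : ℕ), lo ≤ hi → hi ≤ S.card → S.card ≤ 2 ^ k * (hi - lo) →
      ∃ U ⊆ S, lo ≤ U.card ∧ U.card ≤ hi ∧ ∃ C : Finset ι, C.card ≤ k ∧
        ∀ x ∈ S, ∀ y ∈ S, G.Adj x y → (∀ i ∈ C, x ∉ X i) → (∀ i ∈ C, y ∉ X i) →
          (x ∈ U ↔ y ∈ U) := by
  induction k with
  | zero =>
    intro S lo hi _ _ h3
    refine ⟨∅, by simp, ?_, by simp, ∅, by simp, by simp⟩
    simp at h3 ⊢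
    omega
  | succ k ih =>
    intro S lo hi hlo hhi h3
    choose home hhome using hTD.mem_cluster
    obtain ⟨i, hcen⟩ := exists_centroid hTD.isTree X home S
    have hadj : ∀ x y, G.Adj x y → x ∉ X i → y ∉ X i → ConnAvoid T i (home x) (home y) := by
      intro x y hxy hx hy
      obtain ⟨j, hxj, hyj⟩ := hTD.edge_cluster hxy
      exact (hTD.connAvoid hx (hhome x) hxj).trans (hTD.connAvoid hy hyj (hhome y))
    let F : Finset (Finset V) := S.powerset.filter fun U => U.card ≤ hi ∧
      ∀ x ∈ S, ∀ y ∈ S, x ∉ X i → y ∉ X i → ConnAvoid T i (home x) (home y) →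
        (x ∈ U → y ∈ U)
    obtain ⟨U, hU, hmax⟩ := Finset.exists_max_image F Finset.card ⟨∅, by simp [F]⟩
    have hmem : ∀ U, U ∈ F ↔ U ⊆ S ∧ U.card ≤ hi ∧ ∀ x ∈ S, ∀ y ∈ S, x ∉ X i → y ∉ X i →
        ConnAvoid T i (home x) (home y) → (x ∈ U → y ∈ U) := by
      intro U
      simp only [F, Finset.mem_filter, Finset.mem_powerset]
    obtain ⟨hUS, hUhi, hUcl⟩ := (hmem U).1 hU
    by_cases hloU : lo ≤ U.card
    · refine ⟨U, hUS, hloU, hUhi, {i}, by simp, ?_⟩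
      intro x hx y hy hxy hxi hyi
      have hxi := hxi i (by simp)
      have hyi := hyi i (by simp)
      have := hadj x y hxy hxi hyi
      exact ⟨hUcl x hx y hy hxi hyi this, hUcl y hy x hx hyi hxi this.symm⟩
    · obtain ⟨x, hxS, hxU⟩ : ∃ x ∈ S, x ∉ U := by
        by_contra h
        push Not at h
        have := Finset.card_le_card (show S ⊆ U from h)
        omega
      have hxi : x ∉ X i := by
        intro hxi
        have hmem' : insert x U ∈ F := by
          rw [hmem]
          refine ⟨Finset.insert_subset hxS hUS, ?_, ?_⟩
          · rw [Finset.card_insert_of_notMem hxU]; omega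
          · intro a ha b hb hai hbi hab h
            rw [Finset.mem_insert] at h ⊢
            rcases h with rfl | h
            · exact absurd hxi hai
            · exact Or.inr (hUcl a ha b hb hai hbi hab h)
        have := hmax _ hmem'
        rw [Finset.card_insert_of_notMem hxU] at this
        omega
      set D := S.filter fun y => y ∉ X i ∧ ConnAvoid T i (home x) (home y) with hD
      have hDS : D ⊆ S := Finset.filter_subset _ _
      have hxD : x ∈ D := by
        rw [hD, Finset.mem_filter]
        exact ⟨hxS, hxi, hTD.connAvoid hxi (hhome x) (hhome x)⟩
      have hDU : Disjoint U D := by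
        rw [Finset.disjoint_left]
        intro y hyU hyD
        obtain ⟨hyS, hyi, hxy⟩ := Finset.mem_filter.1 hyD
        exact hxU (hUcl y hyS x hxS hyi hxi hxy.symm hyU)
      have hDcl : ∀ a ∈ S, ∀ b ∈ S, a ∉ X i → b ∉ X i → ConnAvoid T i (home a) (home b) →
          (a ∈ D → b ∈ D) := by
        intro a _ b hb _ hbi hab haD
        rw [hD, Finset.mem_filter] at haD ⊢
        exact ⟨hb, hbi, haD.2.2.trans hab⟩
      have hbig : hi < U.card + D.card := by
        by_contra h
        have hmem' : U ∪ D ∈ F := by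
          rw [hmem]
          refine ⟨Finset.union_subset hUS hDS, ?_, ?_⟩
          · rw [Finset.card_union_of_disjoint hDU]; omega
          · intro a ha b hb hai hbi hab h
            rw [Finset.mem_union] at h ⊢
            exact h.imp (hUcl a ha b hb hai hbi hab) (hDcl a ha b hb hai hbi hab)
        have := hmax _ hmem'
        rw [Finset.card_union_of_disjoint hDU] at this
        have := Finset.card_pos.2 ⟨x, hxD⟩
        omega
      have hhalf : 2 * D.card ≤ S.card := hcen _
      obtain ⟨U', hU'D, h1, h2, C, hC, hcut⟩ := ih D (lo - U.card) (hi - U.card) (by omega)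
        (by omega) (by
          have : hi - U.card - (lo - U.card) = hi - lo := by omega
          rw [this]
          rw [pow_succ] at h3
          nlinarith)
      have hUU' : Disjoint U U' := hDU.mono_right hU'D
      refine ⟨U ∪ U', Finset.union_subset hUS (hU'D.trans hDS), ?_, ?_, insert i C, ?_, ?_⟩
      · rw [Finset.card_union_of_disjoint hUU']; omega
      · rw [Finset.card_union_of_disjoint hUU']; omega
      · exact (Finset.card_insert_le _ _).trans (by omega)
      · intro a ha b hb hab hai hbi
        have hai' := hai i (by simp)
        have hbi' := hbi i (by simp)
        have hconn := hadj a b hab hai' hbi'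
        have e1 : a ∈ U ↔ b ∈ U :=
          ⟨hUcl a ha b hb hai' hbi' hconn, hUcl b hb a ha hbi' hai' hconn.symm⟩
        have e2 : a ∈ D ↔ b ∈ D :=
          ⟨hDcl a ha b hb hai' hbi' hconn, hDcl b hb a ha hbi' hai' hconn.symm⟩
        have e3 : a ∈ U' ↔ b ∈ U' := by
          by_cases haD : a ∈ D
          · exact hcut a haD b (e2.1 haD) hab (fun j hj => hai j (by simp [hj]))
              (fun j hj => hbi j (by simp [hj]))
          · exact ⟨fun h => absurd (hU'D h) haD, fun h => absurd (e2.2 (hU'D h)) haD⟩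
        rw [Finset.mem_union, Finset.mem_union, e1, e3]

end MinBisection

/-! ### Levels along a path of the decomposition tree -/

namespace MinBisection

section PathProjection

variable {V ι : Type*} {T : SimpleGraph ι} {i₀ j₀ : ι}

theorem mem_edges_getVert (p : T.Walk i₀ j₀) {k : ℕ} (hk : k < p.length) :
    s(p.getVert k, p.getVert (k + 1)) ∈ p.edges := by
  induction p generalizing k with
  | nil => simp at hk
  | cons h p ih =>
    cases k with
    | zero => simp
    | succ k =>
      simp only [SimpleGraph.Walk.getVert_cons_succ, SimpleGraph.Walk.edges_cons, List.mem_cons]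
      exact Or.inr (ih (by simpa using hk))

theorem exists_getVert_of_mem_edges (p : T.Walk i₀ j₀) {u v : ι} (h : s(u, v) ∈ p.edges) :
    ∃ k < p.length, (u = p.getVert k ∧ v = p.getVert (k + 1)) ∨
      (v = p.getVert k ∧ u = p.getVert (k + 1)) := by
  induction p with
  | nil => simp at h
  | cons hadj p ih =>
    rw [SimpleGraph.Walk.edges_cons, List.mem_cons] at h
    rcases h with h | h
    · refine ⟨0, by simp, ?_⟩
      rw [Sym2.eq_iff] at h
      simp only [SimpleGraph.Walk.getVert_zero, zero_add, SimpleGraph.Walk.getVert_cons_succ]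
      tauto
    · obtain ⟨k, hk, h⟩ := ih h
      exact ⟨k + 1, by simpa using hk, by simpa using h⟩

/-- A segment of a walk, run through backwards. -/
theorem exists_walk_getVert (p : T.Walk i₀ j₀) {a b : ℕ} (hab : a ≤ b) (hb : b ≤ p.length) :
    ∃ w : T.Walk (p.getVert b) (p.getVert a), ∀ e ∈ w.edges, ∃ l, a ≤ l ∧ l < b ∧
      e = s(p.getVert l, p.getVert (l + 1)) := by
  induction b, hab using Nat.le_induction with
  | base => exact ⟨.nil, by simp⟩
  | succ b hab ih =>
    obtain ⟨w, hw⟩ := ih (by omega)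
    refine ⟨.cons (p.adj_getVert_succ (by omega)).symm w, ?_⟩
    intro e he
    rw [SimpleGraph.Walk.edges_cons, List.mem_cons] at he
    rcases he with rfl | he
    · exact ⟨b, hab, by omega, Sym2.eq_swap⟩
    · obtain ⟨l, h1, h2, h3⟩ := hw e he
      exact ⟨l, h1, by omega, h3⟩

/-- `j` and `u` lie in the same component of `T - E(p)`. -/
def SameBranch (p : T.Walk i₀ j₀) (j u : ι) : Prop :=
  ∃ w : T.Walk j u, ∀ e ∈ w.edges, e ∉ p.edges

theorem exists_branch (hT : T.IsTree) (p : T.Walk i₀ j₀) (j : ι) :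
    ∃ k ≤ p.length, SameBranch p j (p.getVert k) := by
  obtain ⟨w⟩ := hT.connected.preconnected j i₀
  induction w with
  | nil => exact ⟨0, by simp, by simpa using ⟨.nil, by simp⟩⟩
  | @cons u v _ hadj w ih =>
    obtain ⟨k, hk, w', hw'⟩ := ih p
    by_cases he : s(u, v) ∈ p.edges
    · obtain ⟨l, hl, h⟩ := SimpleGraph.Walk.mem_support_iff_exists_getVert.1
        (SimpleGraph.Walk.fst_mem_support_of_mem_edges _ he)
      exact ⟨l, h, by rw [hl]; exact ⟨.nil, by simp⟩⟩
    · refine ⟨k, hk, .cons hadj w', ?_⟩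
      intro e h
      rw [SimpleGraph.Walk.edges_cons, List.mem_cons] at h
      rcases h with rfl | h
      · exact he
      · exact hw' e h

/-- Two path nodes never lie in the same component of `T - E(p)`, since each edge of `p`
is a bridge of the tree. -/
theorem branch_unique (hT : T.IsTree) {p : T.Walk i₀ j₀} (hp : p.IsPath) {j : ι} {a b : ℕ}
    (ha : a ≤ p.length) (hb : b ≤ p.length) (hja : SameBranch p j (p.getVert a))
    (hjb : SameBranch p j (p.getVert b)) : a = b := by
  wlog hab : a < b generalizing a b
  · rcases Nat.lt_trichotomy a b with h | h | h
    · exact absurd h hab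
    · exact h
    · exact (this hb ha hjb hja h).symm
  exfalso
  obtain ⟨wa, hwa⟩ := hja
  obtain ⟨wb, hwb⟩ := hjb
  obtain ⟨w, hw⟩ := exists_walk_getVert p (show a + 1 ≤ b by omega) hb
  have hbr := SimpleGraph.isAcyclic_iff_forall_adj_isBridge.1 hT.isAcyclic
    (p.adj_getVert_succ (show a < p.length by omega))
  rw [SimpleGraph.isBridge_iff_forall_walk_mem_edges] at hbr
  have he := hbr ((wa.reverse.append wb).append w)
  have hmem := mem_edges_getVert p (show a < p.length by omega)
  simp only [SimpleGraph.Walk.edges_append, SimpleGraph.Walk.edges_reverse, List.mem_append,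
    List.mem_reverse] at he
  rcases he with (h | h) | h
  · exact hwa _ h hmem
  · exact hwb _ h hmem
  · obtain ⟨l, h1, h2, h3⟩ := hw _ h
    have inj := hp.getVert_injOn
    rw [Sym2.eq_iff] at h3
    rcases h3 with ⟨h3, -⟩ | ⟨h3, -⟩
    · have := inj (show a ∈ {i | i ≤ p.length} by simpa using ha)
        (show l ∈ {i | i ≤ p.length} by simp; omega) h3
      omega
    · have := inj (show a ∈ {i | i ≤ p.length} by simpa using ha)
        (show l + 1 ∈ {i | i ≤ p.length} by simp; omega) h3
      omega

/-- Projection of the tree onto a path: it is constant along edges off the path, so a walk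
avoiding the `k`-th path node stays before, at, or behind position `k`. -/
theorem exists_proj (hT : T.IsTree) {p : T.Walk i₀ j₀} (hp : p.IsPath) :
    ∃ proj : ι → ℕ, (∀ j, proj j ≤ p.length) ∧ (∀ k ≤ p.length, proj (p.getVert k) = k) ∧
      ∀ k ≤ p.length, ∀ u v, ConnAvoid T (p.getVert k) u v →
        (proj u < k ↔ proj v < k) ∧ (k < proj u ↔ k < proj v) := by
  choose proj hle hproj using exists_branch hT p
  have hid : ∀ k ≤ p.length, proj (p.getVert k) = k := fun k hk =>
    branch_unique hT hp (hle _) hk (hproj _) ⟨.nil, by simp⟩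
  refine ⟨proj, hle, hid, fun k hk u v huv => ?_⟩
  obtain ⟨w, hw⟩ := huv
  induction w with
  | nil => simp
  | @cons u v _ hadj w ih =>
    rw [SimpleGraph.Walk.support_cons, List.mem_cons, not_or] at hw
    rw [← (ih hw.2).1, ← (ih hw.2).2]
    by_cases he : s(u, v) ∈ p.edges
    · have hv : p.getVert k ≠ v := fun h => hw.2 (h ▸ w.start_mem_support)
      obtain ⟨l, hl, ⟨h1, h2⟩ | ⟨h1, h2⟩⟩ := exists_getVert_of_mem_edges p he
      · have e1 : proj u = l := by rw [h1]; exact hid l hl.le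
        have e2 : proj v = l + 1 := by rw [h2]; exact hid _ hl
        have n1 : k ≠ l := fun h => hw.1 (by rw [h, h1])
        have n2 : k ≠ l + 1 := fun h => hv (by rw [h, h2])
        omega
      · have e1 : proj v = l := by rw [h1]; exact hid l hl.le
        have e2 : proj u = l + 1 := by rw [h2]; exact hid _ hl
        have n1 : k ≠ l := fun h => hv (by rw [h, h1])
        have n2 : k ≠ l + 1 := fun h => hw.1 (by rw [h, h2])
        omega
    · have : proj u = proj v := by
        obtain ⟨w', hw'⟩ := hproj v
        refine branch_unique hT hp (hle _) (hle _) (hproj u) ⟨.cons hadj w', ?_⟩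
        intro e h
        rw [SimpleGraph.Walk.edges_cons, List.mem_cons] at h
        rcases h with rfl | h
        · exact he
        · exact hw' e h
      rw [this]
      simp

/-- The vertices of `G` receive levels along the path `p`, and every level is attained on the set
`R` of vertices in path clusters. Removing the cluster attached to the level of some `v ∈ R` leaves
no edge between vertices below, at, and above that level. A vertex of `R` gets the position of the
first path cluster containing it; any other vertex gets its projection to the path, rounded down
to a position which introduces a new vertex (positions before the first such are rounded up). -/
theorem exists_levels {G : SimpleGraph V} {X : ι → Finset V} (hTD : IsTreeDecomp G T X)
    {p : T.Walk i₀ j₀} (hp : p.IsPath) (R : Finset V)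
    (hR : ∀ x, x ∈ R ↔ ∃ k ≤ p.length, x ∈ X (p.getVert k)) (hne : R.Nonempty) :
    ∃ (q : V → ℕ) (c : ℕ → ι), (∀ v ∈ R, v ∈ X (c (q v))) ∧ (∀ x, ∃ v ∈ R, q v = q x) ∧
      ∀ v ∈ R, ∀ x y, G.Adj x y → x ∉ X (c (q v)) → y ∉ X (c (q v)) →
        (q x < q v ↔ q y < q v) ∧ (q v < q x ↔ q v < q y) := by
  obtain ⟨proj, hle, hid, hproj⟩ := exists_proj hTD.isTree hp
  obtain ⟨h, hh, hhR⟩ : ∃ h : V → ι, (∀ x, x ∈ X (h x)) ∧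
      ∀ x ∈ R, ∃ k ≤ p.length, h x = p.getVert k ∧ ∀ l, x ∈ X (p.getVert l) → k ≤ l := by
    have : ∀ x, ∃ j, x ∈ X j ∧
        (x ∈ R → ∃ k ≤ p.length, j = p.getVert k ∧ ∀ l, x ∈ X (p.getVert l) → k ≤ l) := by
      intro x
      by_cases hx : x ∈ R
      · obtain ⟨k, hk, hxk⟩ := (hR x).1 hx
        have hex : ∃ k, x ∈ X (p.getVert k) := ⟨k, hxk⟩
        exact ⟨_, Nat.find_spec hex, fun _ => ⟨Nat.find hex, (Nat.find_min' hex hxk).trans hk,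
          rfl, fun l hl => Nat.find_min' hex hl⟩⟩
      · obtain ⟨j, hj⟩ := hTD.mem_cluster x
        exact ⟨j, hj, fun h => absurd h hx⟩
    choose h h1 h2 using this
    exact ⟨h, h1, h2⟩
  set q₀ : V → ℕ := fun x => proj (h x) with hq₀
  have hq₀R : ∀ x ∈ R, x ∈ X (p.getVert (q₀ x)) ∧ ∀ l, x ∈ X (p.getVert l) → q₀ x ≤ l := by
    intro x hx
    obtain ⟨k, hk, hxk, hmin⟩ := hhR x hx
    have : q₀ x = k := by simp only [hq₀, hxk]; exact hid k hk
    rw [this]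
    exact ⟨hxk ▸ hh x, hmin⟩
  have htri : ∀ k ≤ p.length, ∀ x j, x ∉ X (p.getVert k) → x ∈ X j →
      (q₀ x < k ↔ proj j < k) ∧ (k < q₀ x ↔ k < proj j) := fun k hk x j hx hj =>
    hproj k hk _ _ (hTD.connAvoid hx (hh x) hj)
  -- the positions whose cluster introduces a new vertex
  let I : ℕ → Prop := fun k => ∃ v ∈ R, q₀ v = k
  have hI : ∃ k, I k := by
    obtain ⟨v, hv⟩ := hne
    exact ⟨q₀ v, v, hv, rfl⟩
  set k₀ := Nat.find hI with hk₀
  let φ : ℕ → ℕ := fun k => max k₀ (Nat.findGreatest I k)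
  have hk₀I : I k₀ := Nat.find_spec hI
  have hφI : ∀ k, I (φ k) := by
    intro k
    by_cases hk : k₀ ≤ k
    · have h1 : I (Nat.findGreatest I k) := Nat.findGreatest_spec hk hk₀I
      have h2 : k₀ ≤ Nat.findGreatest I k := Nat.le_findGreatest hk hk₀I
      simp only [φ, max_eq_right h2]
      exact h1
    · have h1 : Nat.findGreatest I k ≤ k := Nat.findGreatest_le k
      have : φ k = k₀ := max_eq_left (by omega)
      rw [this]
      exact hk₀I
  have hφid : ∀ k, I k → φ k = k := by
    intro k hk
    have h1 : Nat.findGreatest I k ≤ k := Nat.findGreatest_le k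
    have h2 : k ≤ Nat.findGreatest I k := Nat.le_findGreatest le_rfl hk
    have h3 : k₀ ≤ k := Nat.find_min' hI hk
    simp only [φ]
    omega
  have hqR : ∀ v ∈ R, φ (q₀ v) = q₀ v := fun v hv => hφid _ ⟨v, hv, rfl⟩
  refine ⟨fun x => φ (q₀ x), p.getVert, ?_, ?_, ?_⟩
  · intro v hv
    simp only [hqR v hv]
    exact (hq₀R v hv).1
  · intro x
    obtain ⟨v, hv, hvx⟩ := hφI (q₀ x)
    exact ⟨v, hv, (hqR v hv).trans hvx⟩
  · intro v hv x y hxy hx hy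
    simp only [hqR v hv] at hx hy ⊢
    have hvI : I (q₀ v) := ⟨v, hv, rfl⟩
    have hvle : q₀ v ≤ p.length := hle _
    generalize q₀ v = k at *
    obtain ⟨j, hxj, hyj⟩ := hTD.edge_cluster hxy
    have hk₀k : k₀ ≤ k := Nat.find_min' hI hvI
    constructor
    · have e : ∀ n, φ n < k ↔ k₀ < k ∧ n < k := by
        intro n
        have h1 : Nat.findGreatest I n ≤ n := Nat.findGreatest_le n
        have h2 : k ≤ n → k ≤ Nat.findGreatest I n := fun h => Nat.le_findGreatest h hvI
        simp only [φ]
        omega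
      rw [e, e, (htri k hvle x j hx hxj).1, (htri k hvle y j hy hyj).1]
    · by_cases hex : ∃ k', I k' ∧ k < k'
      · obtain ⟨hk₂, hkk₂⟩ := Nat.find_spec hex
        have hmin : ∀ k', I k' → k < k' → Nat.find hex ≤ k' := fun k' h1 h2 =>
          Nat.find_min' hex ⟨h1, h2⟩
        generalize Nat.find hex = k₂ at *
        have hk₂le : k₂ ≤ p.length := by
          obtain ⟨v', -, rfl⟩ := hk₂
          exact hle _
        have e : ∀ n, k < φ n ↔ k₂ - 1 < n := by
          intro n
          have h1 : Nat.findGreatest I n ≤ n := Nat.findGreatest_le n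
          have h2 : k₂ ≤ n → k₂ ≤ Nat.findGreatest I n := fun h => Nat.le_findGreatest h hk₂
          have h3 := hmin _ (hφI n)
          simp only [φ] at h3 ⊢
          omega
        -- no vertex is introduced between positions `k` and `k₂`
        have hsub : ∀ z, z ∈ X (p.getVert (k₂ - 1)) → z ∈ X (p.getVert k) := by
          intro z hz
          by_contra hzk
          have hzR : z ∈ R := (hR z).2 ⟨k₂ - 1, by omega, hz⟩
          have h1 := (hq₀R z hzR).2 _ hz
          have h2 := hmin (q₀ z) ⟨z, hzR, rfl⟩
          have h3 := htri k hvle z _ hzk hz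
          rw [hid (k₂ - 1) (by omega)] at h3
          have h4 : q₀ z ≠ k := fun h => hzk (h ▸ (hq₀R z hzR).1)
          omega
        rw [e, e, (htri (k₂ - 1) (by omega) x j (fun h => hx (hsub x h)) hxj).2,
          (htri (k₂ - 1) (by omega) y j (fun h => hy (hsub y h)) hyj).2]
      · push Not at hex
        have := hex _ (hφI (q₀ x))
        have := hex _ (hφI (q₀ y))
        omega

end PathProjection

end MinBisection

/-! ### Linear layouts and their cyclic segments -/

namespace MinBisection

section Cyclic

variable {V ι : Type*} {G : SimpleGraph V} {X : ι → Finset V} {R : Finset V} {q : V → ℕ}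
  {c : ℕ → ι} {key : V → ℕ}

/-- A linear arrangement of the vertices along a path of clusters: vertices are sorted by their
level `q`, within a level the vertices of `R` come first, and `key` encodes the resulting order.
The cluster `X (c k)` contains all vertices of `R` on level `k` and separates the levels below `k`,
level `k`, and the levels above `k` from each other. -/
structure IsLayout (G : SimpleGraph V) (X : ι → Finset V) (R : Finset V) (q : V → ℕ)
    (c : ℕ → ι) (key : V → ℕ) : Prop where
  mem : ∀ v ∈ R, v ∈ X (c (q v))
  cut : ∀ v ∈ R, ∀ x y, G.Adj x y → x ∉ X (c (q v)) → y ∉ X (c (q v)) →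
    (q x < q v ↔ q y < q v) ∧ (q v < q x ↔ q v < q y)
  key_inj : Function.Injective key
  key_lt : ∀ x y, q x < q y → key x < key y
  key_lt_of_mem : ∀ x y, q x = q y → x ∈ R → y ∉ R → key x < key y

theorem IsLayout.q_le (h : IsLayout G X R q c key) {x y : V} (hxy : key x ≤ key y) :
    q x ≤ q y := by
  by_contra hlt
  have := h.key_lt y x (by omega)
  omega

theorem IsLayout.key_lt_iff (h : IsLayout G X R q c key) {v x : V} (hv : v ∈ R)
    (hx : x ∉ X (c (q v))) : key x < key v ↔ q x < q v := by
  constructor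
  · intro hlt
    rcases (h.q_le hlt.le).lt_or_eq with h' | h'
    · exact h'
    · have hxR : x ∉ R := fun hxR => hx (h' ▸ h.mem x hxR)
      have := h.key_lt_of_mem v x h'.symm hv hxR
      omega
  · exact h.key_lt x v

/-- `Z` contains, for each of its vertices, a vertex of `R` on the same level. -/
def IsAnchored (R : Finset V) (q : V → ℕ) (Z : Finset V) : Prop :=
  ∀ x ∈ Z, ∃ v ∈ R, v ∈ Z ∧ q v = q x

/-- `e` enumerates `Z` cyclically in the order given by `key`, with period `|Z|`; `pos` is the
position in `[0, |Z|)`. -/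
structure IsEnum (key : V → ℕ) (Z : Finset V) (pos : V → ℤ) (e : ℤ → V) : Prop where
  mem : ∀ x, e x ∈ Z
  pos_nonneg : ∀ v ∈ Z, 0 ≤ pos v
  pos_lt : ∀ v ∈ Z, pos v < Z.card
  e_pos : ∀ v ∈ Z, e (pos v) = v
  pos_e : ∀ x, pos (e x) = x % Z.card
  lt_iff : ∀ v ∈ Z, ∀ w ∈ Z, pos v < pos w ↔ key v < key w

theorem exists_enum (hinj : Function.Injective key) {Z : Finset V} (hZ : Z.Nonempty) :
    ∃ pos e, IsEnum key Z pos e := by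
  let rk : V → ℕ := fun v => (Z.filter fun w => key w < key v).card
  have hlt : ∀ v ∈ Z, ∀ w ∈ Z, key v < key w → rk v < rk w := by
    intro v hv w hw h
    apply Finset.card_lt_card
    rw [Finset.ssubset_iff_of_subset]
    · exact ⟨v, by simp [hv, h], by simp⟩
    · intro u hu
      simp only [Finset.mem_filter] at hu ⊢
      exact ⟨hu.1, hu.2.trans h⟩
  have hiff : ∀ v ∈ Z, ∀ w ∈ Z, rk v < rk w ↔ key v < key w := by
    intro v hv w hw
    refine ⟨fun h => ?_, hlt v hv w hw⟩
    rcases Nat.lt_trichotomy (key v) (key w) with h' | h' | h'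
    · exact h'
    · rw [hinj h'] at h; omega
    · have := hlt w hw v hv h'
      omega
  have hrk : ∀ v ∈ Z, rk v < Z.card := by
    intro v hv
    apply Finset.card_lt_card
    rw [Finset.ssubset_iff_of_subset (Finset.filter_subset _ _)]
    exact ⟨v, hv, by simp⟩
  have hrkinj : Set.InjOn rk Z := by
    intro v hv w hw h
    apply hinj
    have h1 := hiff v hv w hw
    have h2 := hiff w hw v hv
    omega
  have hsurj : ∀ n < Z.card, ∃ v ∈ Z, rk v = n := by
    intro n hn
    have := Finset.surjOn_of_injOn_of_card_le (s := Z) (t := Finset.range Z.card) rk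
      (fun v hv => by simpa using hrk v hv) hrkinj (by simp)
    obtain ⟨v, hv, h⟩ := this (show n ∈ _ by simpa using hn)
    exact ⟨v, hv, h⟩
  have hpos : (0 : ℤ) < Z.card := by exact_mod_cast Finset.card_pos.2 hZ
  have : ∀ x : ℤ, ∃ v ∈ Z, (rk v : ℤ) = x % Z.card := by
    intro x
    have h1 := Int.emod_nonneg x hpos.ne'
    have h2 := Int.emod_lt_of_pos x hpos
    obtain ⟨v, hv, h⟩ := hsurj (x % Z.card).toNat (by omega)
    exact ⟨v, hv, by omega⟩
  choose e he1 he2 using this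
  refine ⟨fun v => rk v, e, he1, fun v _ => by positivity, fun v hv => by exact_mod_cast hrk v hv,
    fun v hv => ?_, he2, fun v hv w hw => by exact_mod_cast hiff v hv w hw⟩
  apply hrkinj (he1 _) hv
  have h1 := he2 (rk v)
  rw [Int.emod_eq_of_lt (by positivity) (by exact_mod_cast hrk v hv)] at h1
  exact_mod_cast h1

namespace IsEnum

variable {Z : Finset V} {pos : V → ℤ} {e : ℤ → V}

theorem card_pos (h : IsEnum key Z pos e) : (0 : ℤ) < Z.card := by
  exact_mod_cast Finset.card_pos.2 ⟨_, h.mem 0⟩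

theorem eq_iff (h : IsEnum key Z pos e) {x y : ℤ} : e x = e y ↔ x % Z.card = y % Z.card := by
  rw [← h.pos_e, ← h.pos_e]
  refine ⟨fun h' => by rw [h'], fun h' => ?_⟩
  rw [← h.e_pos _ (h.mem x), ← h.e_pos _ (h.mem y), h']

theorem add_card (h : IsEnum key Z pos e) (x : ℤ) : e (x + Z.card) = e x := by
  rw [h.eq_iff]; simp

theorem add_mul_card (h : IsEnum key Z pos e) (x k : ℤ) : e (x + Z.card * k) = e x := by
  rw [h.eq_iff]; simp

theorem pos_eq (h : IsEnum key Z pos e) {x : ℤ} (h0 : 0 ≤ x) (h1 : x < Z.card) :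
    pos (e x) = x := by
  rw [h.pos_e, Int.emod_eq_of_lt h0 h1]

theorem injOn (h : IsEnum key Z pos e) (u : ℤ) : Set.InjOn e (Set.Ico u (u + Z.card)) := by
  intro x hx y hy hxy
  have hN := h.card_pos
  obtain ⟨k, hk⟩ := Int.ModEq.dvd (show x ≡ y [ZMOD Z.card] from h.eq_iff.1 hxy)
  have h1 : k < 1 := by
    by_contra hc
    have := hx.1; have := hy.2
    nlinarith
  have h2 : -1 < k := by
    by_contra hc
    have := hx.2; have := hy.1
    nlinarith
  have : k = 0 := by omega
  subst this
  omega

/-- The cyclic segment of `Z` occupying the positions in `[u, w)`. -/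
noncomputable def seg (e : ℤ → V) (u w : ℤ) : Finset V := (Finset.Ico u w).image e

theorem seg_subset (h : IsEnum key Z pos e) (u w : ℤ) : seg e u w ⊆ Z := by
  intro x hx
  obtain ⟨z, -, rfl⟩ := Finset.mem_image.1 hx
  exact h.mem z

theorem injOn_Ico (h : IsEnum key Z pos e) {u w : ℤ} (hw : w ≤ u + Z.card) :
    Set.InjOn e (Finset.Ico u w : Finset ℤ) := by
  refine (h.injOn u).mono fun x hx => ?_
  rw [Finset.coe_Ico] at hx
  exact ⟨hx.1, hx.2.trans_le hw⟩

theorem card_seg (h : IsEnum key Z pos e) {u w : ℤ} (hw : w ≤ u + Z.card) :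
    (seg e u w).card = (w - u).toNat := by
  rw [seg, Finset.card_image_of_injOn (h.injOn_Ico hw), Int.card_Ico]

theorem card_seg_filter (h : IsEnum key Z pos e) {u w : ℤ} (hw : w ≤ u + Z.card) :
    ((seg e u w).filter (· ∈ R)).card = ((Finset.Ico u w).filter fun x => e x ∈ R).card := by
  rw [seg, Finset.filter_image, Finset.card_image_of_injOn]
  exact (h.injOn_Ico hw).mono (Finset.coe_subset.2 (Finset.filter_subset _ _))

theorem seg_zero_card (h : IsEnum key Z pos e) : seg e 0 Z.card = Z := by
  refine (h.seg_subset _ _).antisymm fun v hv => Finset.mem_image.2 ⟨pos v, ?_, h.e_pos v hv⟩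
  rw [Finset.mem_Ico]
  exact ⟨h.pos_nonneg v hv, h.pos_lt v hv⟩

theorem disjoint_seg (h : IsEnum key Z pos e) {u v u' v' : ℤ} (h1 : v ≤ u')
    (h2 : v' ≤ u + Z.card) : Disjoint (seg e u v) (seg e u' v') := by
  rw [Finset.disjoint_left]
  intro x hx hx'
  obtain ⟨z, hz, rfl⟩ := Finset.mem_image.1 hx
  obtain ⟨z', hz', he⟩ := Finset.mem_image.1 hx'
  rw [Finset.mem_Ico] at hz hz'
  have := h.injOn u (show z' ∈ Set.Ico u (u + Z.card) from ⟨by omega, by omega⟩)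
    (show z ∈ Set.Ico u (u + Z.card) from ⟨by omega, by omega⟩) he
  omega

/-- Which turn of the cyclic order, cut open before position `u`, the vertex `x` lies on. A cyclic
segment consists of the vertices whose turns relative to its two ends differ. -/
def turn (Z : Finset V) (pos : V → ℤ) (u : ℤ) (x : V) : ℤ := (pos x - u) / Z.card

theorem mem_seg_iff (h : IsEnum key Z pos e) {u w : ℤ} (huw : u ≤ w) (hw : w ≤ u + Z.card)
    {x : V} (hx : x ∈ Z) : x ∈ seg e u w ↔ turn Z pos u x ≠ turn Z pos w x := by
  have hN := h.card_pos
  set N : ℤ := (Z.card : ℤ) with hNdef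
  unfold turn
  rw [← hNdef]
  have hdm := Int.emod_add_mul_ediv (pos x - u) N
  have ht0 := Int.emod_nonneg (pos x - u) hN.ne'
  have ht1 := Int.emod_lt_of_pos (pos x - u) hN
  set t := (pos x - u) % N with ht
  set k := (pos x - u) / N
  have hw' : pos x - w = (t - (w - u)) + N * k := by linarith
  rw [hw', Int.add_mul_ediv_left _ _ hN.ne']
  have hmem : x ∈ seg e u w ↔ t < w - u := by
    constructor
    · intro hxs
      obtain ⟨z, hz, rfl⟩ := Finset.mem_image.1 hxs
      rw [Finset.mem_Ico] at hz
      have : t = z - u := by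
        rw [ht, h.pos_e, ← hNdef, Int.emod_sub_emod, Int.emod_eq_of_lt (by omega) (by omega)]
      omega
    · intro hlt
      refine Finset.mem_image.2 ⟨u + t, by rw [Finset.mem_Ico]; omega, ?_⟩
      rw [← h.e_pos x hx, show pos x = u + t + N * k by linarith]
      exact (h.add_mul_card _ _).symm
  rw [hmem]
  constructor
  · intro hlt
    have : (t - (w - u)) / N = -1 := by
      rw [Int.ediv_eq_iff_of_pos hN]
      constructor <;> linarith
    omega
  · intro hne
    by_contra hge
    apply hne
    rw [Int.ediv_eq_zero_of_lt (by omega) (by omega)]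
    omega

theorem turn_add (h : IsEnum key Z pos e) (u k : ℤ) (x : V) :
    turn Z pos (u + Z.card * k) x = turn Z pos u x - k := by
  unfold turn
  rw [show pos x - (u + Z.card * k) = (pos x - u) + Z.card * (-k) by ring,
    Int.add_mul_ediv_left _ _ h.card_pos.ne']
  ring

/-- For `0 ≤ u ≤ |Z|` the turn of a vertex only depends on whether its position is before `u`. -/
theorem turn_eq (h : IsEnum key Z pos e) {u : ℤ} (hu0 : 0 ≤ u) (hu : u ≤ Z.card) {x y : V}
    (hx : x ∈ Z) (hy : y ∈ Z) (hxy : pos x < u ↔ pos y < u) :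
    turn Z pos u x = turn Z pos u y := by
  have key : ∀ z ∈ Z, turn Z pos u z = if pos z < u then -1 else 0 := by
    intro z hz
    have h0 := h.pos_nonneg z hz
    have h1 := h.pos_lt z hz
    unfold turn
    rw [Int.ediv_eq_iff_of_pos h.card_pos]
    split_ifs <;> constructor <;> linarith
  rw [key x hx, key y hy]
  simp only [hxy]

/-- The first vertex of an anchored set belongs to `R`. -/
theorem zero_mem (h : IsEnum key Z pos e) (hL : IsLayout G X R q c key)
    (hZ : IsAnchored R q Z) : e 0 ∈ R := by
  by_contra h0
  obtain ⟨v, hvR, hvZ, hq⟩ := hZ _ (h.mem 0)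
  have h1 := hL.key_lt_of_mem v (e 0) hq hvR h0
  rw [← h.lt_iff v hvZ _ (h.mem 0), h.pos_eq le_rfl h.card_pos] at h1
  have := h.pos_nonneg v hvZ
  omega

/-- Cutting the cyclic order just before `g`, just after `g`, or just before the next element `g'`
of `R` is possible at the cost of the single cluster attached to `g`. -/
theorem turn_invariant (h : IsEnum key Z pos e) (hL : IsLayout G X R q c key)
    (hZ : IsAnchored R q Z) {g : ℤ} (hg : e g ∈ R) {x y : V} (hx : x ∈ Z) (hy : y ∈ Z)
    (hxy : G.Adj x y) (hxg : x ∉ X (c (q (e g)))) (hyg : y ∉ X (c (q (e g)))) :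
    turn Z pos g x = turn Z pos g y ∧ turn Z pos (g + 1) x = turn Z pos (g + 1) y ∧
      ∀ g', g < g' → e g' ∈ R → (∀ z, g < z → z < g' → e z ∉ R) →
        turn Z pos g' x = turn Z pos g' y := by
  have hN := h.card_pos
  -- reduce to a position in `[0, |Z|)`
  wlog hg0 : 0 ≤ g ∧ g < Z.card generalizing g
  · have hdm := Int.emod_add_mul_ediv g Z.card
    have heq : e (g % Z.card) = e g := by rw [h.eq_iff]; simp
    obtain ⟨h1, h2, h3⟩ := this (g := g % Z.card) (heq ▸ hg) (heq ▸ hxg) (heq ▸ hyg)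
      ⟨Int.emod_nonneg _ hN.ne', Int.emod_lt_of_pos _ hN⟩
    set k := g / Z.card
    set r := g % Z.card
    have hshift : ∀ u, turn Z pos u x = turn Z pos u y →
        turn Z pos (u + Z.card * k) x = turn Z pos (u + Z.card * k) y := by
      intro u hu
      rw [h.turn_add, h.turn_add, hu]
    refine ⟨?_, ?_, ?_⟩
    · rw [← hdm]; exact hshift _ h1
    · rw [← hdm, add_right_comm]; exact hshift _ h2
    · intro g' hgg' hg'R hgap
      have := h3 (g' - Z.card * k) (by linarith) ?_ ?_
      · simpa using hshift _ this
      · have := h.add_mul_card g' (-k)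
        rw [show g' + Z.card * -k = g' - Z.card * k by ring] at this
        rwa [this]
      · intro z hz1 hz2
        rw [← h.add_mul_card z k]
        exact hgap _ (by linarith) (by linarith)
  obtain ⟨hg0, hgN⟩ := hg0
  have hposg := h.pos_eq hg0 hgN
  have hlt : ∀ z ∈ Z, z ∉ X (c (q (e g))) → (pos z < g ↔ q z < q (e g)) := by
    intro z hz hzg
    rw [← hL.key_lt_iff hg hzg, ← h.lt_iff z hz _ (h.mem g), hposg]
  have hneg : ∀ z ∈ Z, z ∉ X (c (q (e g))) → pos z ≠ g := by
    rintro z hz hzg rfl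
    rw [h.e_pos z hz] at hzg hg
    exact hzg (hL.mem z hg)
  obtain ⟨hc1, hc2⟩ := hL.cut (e g) hg x y hxy hxg hyg
  have hgxy : pos x < g ↔ pos y < g := by rw [hlt x hx hxg, hlt y hy hyg, hc1]
  have hxne := hneg x hx hxg
  have hyne := hneg y hy hyg
  refine ⟨h.turn_eq hg0 hgN.le hx hy hgxy, h.turn_eq (by omega) (by omega) hx hy (by omega), ?_⟩
  intro g' hgg' hg'R hgap
  have h0R := h.zero_mem hL hZ
  have hg'N : g' ≤ Z.card := by
    by_contra hcon
    refine hgap Z.card hgN (by omega) ?_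
    have := h.add_card 0
    rw [zero_add] at this
    rwa [this]
  refine h.turn_eq (by omega) hg'N hx hy ?_
  rcases hg'N.eq_or_lt with rfl | hg'N
  · have := h.pos_lt x hx
    have := h.pos_lt y hy
    tauto
  have hposg' := h.pos_eq (by omega) hg'N
  have hkgg' : key (e g) < key (e g') := by
    rw [← h.lt_iff _ (h.mem _) _ (h.mem _), hposg, hposg']
    exact hgg'
  -- a vertex strictly inside the gap is on the level of `g`
  have hgapR : ∀ z ∈ Z, g < pos z → pos z < g' → z ∉ R ∧ q z = q (e g) := by
    intro z hz h1 h2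
    have hzR : z ∉ R := by
      have := hgap (pos z) h1 h2
      rwa [h.e_pos z hz] at this
    refine ⟨hzR, le_antisymm ?_ (hL.q_le ?_)⟩
    · obtain ⟨v, hvR, hvZ, hq⟩ := hZ z hz
      have h3 := hL.key_lt_of_mem v z hq hvR hzR
      rw [← h.lt_iff v hvZ z hz] at h3
      have h4 : pos v ≤ g := by
        by_contra hcon
        exact hgap (pos v) (by omega) (by omega) (by rwa [h.e_pos v hvZ])
      rw [← hq]
      apply hL.q_le
      by_contra hcon
      rw [not_le, ← h.lt_iff _ (h.mem g) v hvZ, hposg] at hcon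
      omega
    · rw [← hposg, h.lt_iff _ (h.mem g) z hz] at h1
      exact h1.le
  rcases (hL.q_le hkgg'.le).eq_or_lt with hqq | hqq
  · -- `g'` lies on the same level, so there is nothing in between
    have : ∀ z ∈ Z, pos z ≠ g → (pos z < g' ↔ pos z < g) := by
      intro z hz hne
      refine ⟨fun h1 => ?_, fun h1 => by omega⟩
      by_contra h2
      obtain ⟨hzR, hzq⟩ := hgapR z hz (by omega) h1
      have h3 := hL.key_lt_of_mem (e g') z (by omega) hg'R hzR
      rw [← h.lt_iff _ (h.mem g') z hz, hposg'] at h3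
      omega
    rw [this x hx hxne, this y hy hyne, hgxy]
  · have : ∀ z ∈ Z, z ∉ X (c (q (e g))) → (pos z < g' ↔ ¬ q (e g) < q z) := by
      intro z hz hzg
      have hne := hneg z hz hzg
      constructor
      · intro h1
        rcases lt_or_gt_of_ne hne with h2 | h2
        · have := (hlt z hz hzg).1 h2
          omega
        · have := (hgapR z hz h2 h1).2
          omega
      · intro h1
        have h2 := hL.key_lt z (e g') (by omega)
        rwa [← h.lt_iff z hz _ (h.mem g'), hposg'] at h2
    rw [this x hx hxg, this y hy hyg, hc2]

/-- A cyclic segment from one element of `R` to another is again anchored. -/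
theorem anchored_seg (h : IsEnum key Z pos e) (hL : IsLayout G X R q c key)
    (hZ : IsAnchored R q Z) {a b : ℤ} (ha : e a ∈ R) : IsAnchored R q (seg e a b) := by
  have hN := h.card_pos
  intro x hx
  by_cases hxR : x ∈ R
  · exact ⟨x, hxR, hx, rfl⟩
  obtain ⟨z, hz, rfl⟩ := Finset.mem_image.1 hx
  rw [Finset.mem_Ico] at hz
  obtain ⟨p, hp, hpz, hpmax⟩ := exists_prev hN (ρ := fun z => e z ∈ R) (h.zero_mem hL hZ)
    (fun x => by rw [h.add_card]) z
  have hap : a ≤ p := by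
    by_contra hcon
    exact hpmax a (by omega) hz.1 ha
  refine ⟨e p, hp, Finset.mem_image.2 ⟨p, by rw [Finset.mem_Ico]; omega, rfl⟩, ?_⟩
  obtain ⟨v, hvR, hvZ, hq⟩ := hZ _ (h.mem z)
  have hdm := Int.emod_add_mul_ediv z Z.card
  set k := z / Z.card
  have hzN := Int.emod_lt_of_pos z hN
  have hposz := h.pos_e z
  have h1 := hL.key_lt_of_mem v _ hq hvR hxR
  rw [← h.lt_iff v hvZ _ (h.mem z)] at h1
  have hv0 := h.pos_nonneg v hvZ
  have hvp : pos v ≤ p - Z.card * k := by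
    by_contra hcon
    refine hpmax (pos v + Z.card * k) (by linarith) (by linarith) ?_
    rw [h.add_mul_card, h.e_pos v hvZ]
    exact hvR
  have hep : e (p - Z.card * k) = e p := by
    have := h.add_mul_card p (-k)
    rwa [show p + Z.card * -k = p - Z.card * k by ring] at this
  have hposp : pos (e p) = p - Z.card * k := by
    rw [← hep]
    exact h.pos_eq (by linarith) (by linarith)
  apply le_antisymm
  · apply hL.q_le
    by_contra hcon
    rw [not_le, ← h.lt_iff _ (h.mem z) _ (h.mem p)] at hcon
    linarith
  · rw [← hq]
    apply hL.q_le
    by_contra hcon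
    rw [not_le, ← h.lt_iff _ (h.mem p) _ hvZ] at hcon
    linarith

end IsEnum

end Cyclic

end MinBisection

/-! ### One round of splitting, and its iteration -/

namespace MinBisection

section Step

variable {V ι : Type*} {G : SimpleGraph V} {T : SimpleGraph ι} {X : ι → Finset V}
  {R : Finset V} {q : V → ℕ} {c : ℕ → ι} {key : V → ℕ}

/-- By removing at most `k + 3` clusters one can separate disjoint parts `B` and `Z'` of `Z` from
each other and from the rest such that `B` has at most `m` elements, `B ∪ Z'` has at least
`m` elements, and the density of `R` in `Z'` is at least twice the density in `Z`. -/
def Splits (G : SimpleGraph V) (X : ι → Finset V) (R : Finset V) (q : V → ℕ) (Z : Finset V)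
    (m k : ℕ) : Prop :=
  ∃ B Z' : Finset V, B ⊆ Z ∧ Z' ⊆ Z ∧ Disjoint B Z' ∧ B.card ≤ m ∧ m ≤ B.card + Z'.card ∧
    IsAnchored R q Z' ∧
    2 * (Z.filter (· ∈ R)).card * Z'.card ≤ Z.card * (Z'.filter (· ∈ R)).card ∧
    ∃ C : Finset ι, C.card ≤ k + 3 ∧ ∀ x ∈ Z, ∀ y ∈ Z, G.Adj x y →
      (∀ i ∈ C, x ∉ X i) → (∀ i ∈ C, y ∉ X i) → (x ∈ B ↔ y ∈ B) ∧ (x ∈ Z' ↔ y ∈ Z')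

/-- Passing to the complement. -/
theorem Splits.compl {Z : Finset V} {m k : ℕ} (hm : m ≤ Z.card)
    (h : Splits G X R q Z (Z.card - m) k) : Splits G X R q Z m k := by
  obtain ⟨B, Z', hB, hZ', hd, h1, h2, h3, h4, C, hC, hcut⟩ := h
  have hcard : (Z \ (B ∪ Z')).card = Z.card - (B.card + Z'.card) := by
    rw [Finset.card_sdiff_of_subset (Finset.union_subset hB hZ'), Finset.card_union_of_disjoint hd]
  have hle := Finset.card_le_card (Finset.union_subset hB hZ')
  rw [Finset.card_union_of_disjoint hd] at hle
  refine ⟨Z \ (B ∪ Z'), Z', Finset.sdiff_subset, hZ', ?_, by omega, by omega, h3, h4, C, hC, ?_⟩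
  · rw [Finset.disjoint_left]
    intro x hx hx'
    simp [hx'] at hx
  · intro x hx y hy hxy hxC hyC
    obtain ⟨e1, e2⟩ := hcut x hx y hy hxy hxC hyC
    refine ⟨?_, e2⟩
    simp only [Finset.mem_sdiff, Finset.mem_union, hx, hy, e1, e2]

/-- If two elements of `R` are at cyclic distance `m`, the segment between them has exactly
`m` elements and two clusters suffice. -/
theorem splits_of_exact {Z : Finset V} {pos : V → ℤ} {e : ℤ → V} (hL : IsLayout G X R q c key)
    (hE : IsEnum key Z pos e) (hZ : IsAnchored R q Z) {m : ℕ} (k : ℕ) (hm : m ≤ Z.card) {a : ℤ}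
    (ha : e a ∈ R) (ham : e (a + m) ∈ R) : Splits G X R q Z m k := by
  have hcard : (IsEnum.seg e a (a + m)).card = m := by
    rw [hE.card_seg (by omega)]; omega
  refine ⟨IsEnum.seg e a (a + m), ∅, hE.seg_subset _ _, by simp, by simp, hcard.le, by omega,
    by simp [IsAnchored], by simp, {c (q (e a)), c (q (e (a + m)))},
    Finset.card_le_two.trans (by omega), ?_⟩
  intro x hx y hy hxy hxC hyC
  refine ⟨?_, by simp⟩
  rw [hE.mem_seg_iff (by omega) (by omega) hx, hE.mem_seg_iff (by omega) (by omega) hy,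
    (hE.turn_invariant hL hZ ha hx hy hxy (hxC _ (by simp)) (hyC _ (by simp))).1,
    (hE.turn_invariant hL hZ ham hx hy hxy (hxC _ (by simp)) (hyC _ (by simp))).1]

/-- The marked segment `[a, b]` shifted by `m` fits into the gap between `g` and `g'`. The set `B`
consists of the positions in `(b, g]` and a part of the gap split off by an approximate cut, and
`Z'` is the segment `[a, b]`. -/
theorem splits_of_gap [Fintype ι] (hTD : IsTreeDecomp G T X) {Z : Finset V} {pos : V → ℤ} {e : ℤ → V}
    (hL : IsLayout G X R q c key) (hE : IsEnum key Z pos e) (hZ : IsAnchored R q Z) {m k : ℕ}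
    (hm : m ≤ Z.card) (hk : Z.card ≤ 2 ^ k * (Z.filter (· ∈ R)).card) {g g' a b : ℤ}
    (hg : e g ∈ R) (hg' : e g' ∈ R) (hgg' : g < g') (hgap : ∀ y, g < y → y < g' → e y ∉ R)
    (ha : e a ∈ R) (hb : e b ∈ R) (hab : a ≤ b) (hgam : g < a + m) (hbmg : b + m < g')
    (hdens : ((Z.filter (· ∈ R)).card : ℤ) * ((b + 1 - a) + (g' - g - 1)) ≤
      Z.card * (((Finset.Icc a b).filter fun z => e z ∈ R).card : ℤ)) :
    Splits G X R q Z m k := by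
  have hN := hE.card_pos
  have hbg : b ≤ g := by
    by_contra h
    exact hgap b (by omega) (by omega) hb
  have hg'a : g' ≤ a + Z.card := by
    by_contra h
    refine hgap (a + Z.card) (by omega) (by omega) ?_
    rwa [hE.add_card]
  have hIco : Finset.Ico a (b + 1) = Finset.Icc a b := by
    ext z; simp only [Finset.mem_Ico, Finset.mem_Icc]; omega
  have hA : (((Finset.Icc a b).filter fun z => e z ∈ R).card : ℤ) ≤ b + 1 - a := by
    have := Finset.card_filter_le (Finset.Icc a b) fun z => e z ∈ R
    rw [Int.card_Icc] at this
    omega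
  set A := (((Finset.Icc a b).filter fun z => e z ∈ R).card : ℤ) with hAdef
  set P := ((Z.filter (· ∈ R)).card : ℤ) with hP
  have hkZ : (Z.card : ℤ) ≤ 2 ^ k * P := by
    rw [hP]; exact_mod_cast hk
  have hP0 : 0 < P := by
    by_contra h
    have : P = 0 := by omega
    rw [this] at hkZ
    omega
  have hwin : g' - g - 1 ≤ 2 ^ k * (b + 1 - a) := by
    have h1 : (Z.card : ℤ) * A ≤ 2 ^ k * P * (b + 1 - a) :=
      (mul_le_mul_of_nonneg_left hA hN.le).trans
        (mul_le_mul_of_nonneg_right hkZ (by omega))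
    refine le_of_mul_le_mul_left ?_ hP0
    nlinarith
  have hScard := hE.card_seg (u := g + 1) (w := g') (by omega)
  have hZ'card := hE.card_seg (u := a) (w := b + 1) (by omega)
  have hMcard := hE.card_seg (u := b + 1) (w := g + 1) (by omega)
  obtain ⟨U, hUS, hlo, hhi, C, hC, hcut⟩ := exists_approx_cut hTD k (IsEnum.seg e (g + 1) g')
    (a + m - g - 1).toNat (b + m - g).toNat (by omega) (by omega) (by
      have : ((b + m - g).toNat - (a + m - g - 1).toNat : ℕ) = (b + 1 - a).toNat := by omega
      rw [hScard, this]
      zify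
      rw [Int.toNat_of_nonneg (by omega), Int.toNat_of_nonneg (by omega)]
      linarith)
  have hdMU : Disjoint (IsEnum.seg e (b + 1) (g + 1)) U :=
    (hE.disjoint_seg le_rfl (by omega)).mono_right hUS
  have hBcard := Finset.card_union_of_disjoint hdMU
  refine ⟨IsEnum.seg e (b + 1) (g + 1) ∪ U, IsEnum.seg e a (b + 1),
    Finset.union_subset (hE.seg_subset _ _) (hUS.trans (hE.seg_subset _ _)), hE.seg_subset _ _,
    ?_, by omega, by omega, hE.anchored_seg hL hZ ha, ?_,
    {c (q (e a)), c (q (e b)), c (q (e g))} ∪ C, ?_, ?_⟩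
  · rw [Finset.disjoint_union_left]
    exact ⟨(hE.disjoint_seg le_rfl (by omega)).symm,
      ((hE.disjoint_seg (by omega) (by omega)).mono_right hUS).symm⟩
  · rw [hE.card_seg_filter (by omega), hIco]
    zify
    rw [← hAdef, ← hP, hZ'card, Int.toNat_of_nonneg (by omega)]
    nlinarith
  · refine (Finset.card_union_le _ _).trans ?_
    have : ({c (q (e a)), c (q (e b)), c (q (e g))} : Finset ι).card ≤ 3 := Finset.card_le_three
    omega
  · intro x hx y hy hxy hxC hyC
    have ta := hE.turn_invariant hL hZ ha hx hy hxy (hxC _ (by simp)) (hyC _ (by simp))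
    have tb := hE.turn_invariant hL hZ hb hx hy hxy (hxC _ (by simp)) (hyC _ (by simp))
    have tg := hE.turn_invariant hL hZ hg hx hy hxy (hxC _ (by simp)) (hyC _ (by simp))
    have hM : x ∈ IsEnum.seg e (b + 1) (g + 1) ↔ y ∈ IsEnum.seg e (b + 1) (g + 1) := by
      rw [hE.mem_seg_iff (by omega) (by omega) hx, hE.mem_seg_iff (by omega) (by omega) hy,
        tb.2.1, tg.2.1]
    have hS : x ∈ IsEnum.seg e (g + 1) g' ↔ y ∈ IsEnum.seg e (g + 1) g' := by
      rw [hE.mem_seg_iff (by omega) (by omega) hx, hE.mem_seg_iff (by omega) (by omega) hy,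
        tg.2.1, tg.2.2 g' hgg' hg' hgap]
    have hU : x ∈ U ↔ y ∈ U := by
      by_cases hxS : x ∈ IsEnum.seg e (g + 1) g'
      · exact hcut x hxS y (hS.1 hxS) hxy (fun i hi => hxC i (by simp [hi]))
          (fun i hi => hyC i (by simp [hi]))
      · exact ⟨fun h => absurd (hUS h) hxS, fun h => absurd (hS.2 (hUS h)) hxS⟩
    refine ⟨by rw [Finset.mem_union, Finset.mem_union, hM, hU], ?_⟩
    rw [hE.mem_seg_iff (by omega) (by omega) hx, hE.mem_seg_iff (by omega) (by omega) hy,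
      ta.1, tb.2.1]

theorem exists_splits [Fintype ι] (hTD : IsTreeDecomp G T X) (hL : IsLayout G X R q c key) {Z : Finset V}
    (hne : Z.Nonempty) (hZ : IsAnchored R q Z) {m k : ℕ} (hm : m ≤ Z.card)
    (hk : Z.card ≤ 2 ^ k * (Z.filter (· ∈ R)).card) : Splits G X R q Z m k := by
  obtain ⟨pos, e, hE⟩ := exists_enum hL.key_inj hne
  by_cases hex : ∃ a : ℤ, e a ∈ R ∧ e (a + m) ∈ R
  · obtain ⟨a, ha, ham⟩ := hex
    exact splits_of_exact hL hE hZ k hm ha ham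
  push Not at hex
  obtain ⟨s, hs, g, g', a, b, hg, hg', hgg', hgap, ha, hb, hab, h1, h2, hdens⟩ :=
    gap_exists hE.card_pos (ρ := fun z => e z ∈ R) (hE.zero_mem hL hZ)
      (fun x => by rw [hE.add_card]) m hex
  have hPcard : ((Finset.Ico (0 : ℤ) Z.card).filter fun z => e z ∈ R).card =
      (Z.filter (· ∈ R)).card := by
    rw [← hE.card_seg_filter (by omega), hE.seg_zero_card]
  replace hdens : ((Z.filter (· ∈ R)).card : ℤ) * ((b + 1 - a) + (g' - g - 1)) ≤
      Z.card * (((Finset.Icc a b).filter fun z => e z ∈ R).card : ℤ) := by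
    rw [← hPcard]
    convert hdens
  rcases hs with rfl | rfl
  · exact splits_of_gap hTD hL hE hZ hm hk hg hg' hgg' hgap ha hb hab h1 h2 hdens
  · -- a backward shift by `m` is a forward shift by `|Z| - m`
    refine Splits.compl hm (splits_of_gap hTD hL hE hZ (Nat.sub_le _ _) hk (g := g + Z.card)
      (g' := g' + Z.card) (by rwa [hE.add_card]) (by rwa [hE.add_card]) (by omega) ?_ ha hb hab
      (by omega) (by omega) ?_)
    · intro y hy1 hy2
      have := hgap (y - Z.card) (by omega) (by omega)
      have h3 := hE.add_card (y - Z.card)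
      rw [sub_add_cancel] at h3
      rwa [h3]
    · convert hdens using 2
      ring

theorem IsAnchored.card_filter_pos {Z : Finset V} (hZ : IsAnchored R q Z) (hne : Z.Nonempty) :
    0 < (Z.filter (· ∈ R)).card := by
  obtain ⟨x, hx⟩ := hne
  obtain ⟨v, hvR, hvZ, -⟩ := hZ x hx
  exact Finset.card_pos.2 ⟨v, Finset.mem_filter.2 ⟨hvZ, hvR⟩⟩

/-- With `L` the binary logarithm of the inverse density of `R` in `Z`, one round of splitting costs
at most `L + 4` clusters and decreases `L` by at least `1`. The bound
`f L = (L ^ 2 + 9 * L + 8) / 2` satisfies `f L = f (L - 1) + (L + 4)` and is increasing for `0 ≤ L`,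
so it survives each round. -/
theorem exists_cut [Fintype ι] (hTD : IsTreeDecomp G T X) (hL : IsLayout G X R q c key)
    (Z : Finset V) (hne : Z.Nonempty) (hZ : IsAnchored R q Z) (m : ℕ) (hm : m ≤ Z.card) :
    ∃ B ⊆ Z, B.card = m ∧ ∃ C : Finset ι,
      (C.card : ℝ) ≤ (Real.logb 2 (Z.card / (Z.filter (· ∈ R)).card) ^ 2 +
        9 * Real.logb 2 (Z.card / (Z.filter (· ∈ R)).card) + 8) / 2 ∧
      ∀ x ∈ Z, ∀ y ∈ Z, G.Adj x y → (∀ i ∈ C, x ∉ X i) → (∀ i ∈ C, y ∉ X i) →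
        (x ∈ B ↔ y ∈ B) := by
  induction hn : Z.card using Nat.strong_induction_on generalizing Z m with
  | _ n ih =>
  subst hn
  have hP0 := hZ.card_filter_pos hne
  have hPle := Finset.card_filter_le Z (· ∈ R)
  have hlog : ∀ {a b : ℕ}, 0 < b → b ≤ a → 0 ≤ Real.logb 2 ((a : ℝ) / b) := by
    intro a b h1 h2
    apply Real.logb_nonneg one_lt_two
    rw [le_div_iff₀ (by exact_mod_cast h1), one_mul]
    exact_mod_cast h2
  have hL0 := hlog hP0 hPle
  set P := (Z.filter (· ∈ R)).card with hP
  set L := Real.logb 2 ((Z.card : ℝ) / P) with hLdef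
  have hPR : (0 : ℝ) < P := by exact_mod_cast hP0
  have hZR : (0 : ℝ) < Z.card := by exact_mod_cast Finset.card_pos.2 hne
  have hk : Z.card ≤ 2 ^ ⌈L⌉₊ * P := by
    have h1 : (Z.card : ℝ) / P ≤ 2 ^ (⌈L⌉₊ : ℝ) :=
      (Real.logb_le_iff_le_rpow one_lt_two (by positivity)).1 (Nat.le_ceil L)
    rw [div_le_iff₀ hPR, Real.rpow_natCast] at h1
    exact_mod_cast h1
  obtain ⟨B, Z', hB, hZ', hd, h1, h2, hZ'a, hdens, C, hC, hcut⟩ := exists_splits hTD hL hne hZ hm hk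
  have hCR : (C.card : ℝ) ≤ L + 4 := by
    have h3 : (C.card : ℝ) ≤ ⌈L⌉₊ + 3 := by exact_mod_cast hC
    have := Nat.ceil_lt_add_one hL0
    linarith
  rcases Z'.eq_empty_or_nonempty with rfl | hne'
  · refine ⟨B, hB, ?_, C, ?_, fun x hx y hy hxy h3 h4 => (hcut x hx y hy hxy h3 h4).1⟩
    · rw [Finset.card_empty] at h2
      omega
    · nlinarith
  have hP'0 := hZ'a.card_filter_pos hne'
  have hP'le := Finset.card_filter_le Z' (· ∈ R)
  have hlt : Z'.card < Z.card := by
    refine lt_of_le_of_ne (Finset.card_le_card hZ') fun h => ?_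
    have := Finset.eq_of_subset_of_card_le hZ' h.ge
    rw [this, ← hP] at hdens
    have := Finset.card_pos.2 hne
    nlinarith
  obtain ⟨B', hB', hB'c, C', hC', hcut'⟩ := ih _ hlt Z' hne' hZ'a (m - B.card) (by omega) rfl
  have hL'0 := hlog hP'0 hP'le
  set P' := (Z'.filter (· ∈ R)).card with hP'
  set L' := Real.logb 2 ((Z'.card : ℝ) / P') with hL'def
  have hP'R : (0 : ℝ) < P' := by exact_mod_cast hP'0
  have hZ'R : (0 : ℝ) < Z'.card := by exact_mod_cast Finset.card_pos.2 hne'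
  have hL'L : L' ≤ L - 1 := by
    have h3 : (Z'.card : ℝ) / P' ≤ Z.card / P / 2 := by
      rw [div_div, div_le_div_iff₀ hP'R (by positivity)]
      have : (2 * P * Z'.card : ℝ) ≤ Z.card * P' := by exact_mod_cast hdens
      linarith
    have h4 : Real.logb 2 ((Z.card : ℝ) / P / 2) = L - 1 := by
      rw [Real.logb_div (by positivity) (by norm_num), Real.logb_self_eq_one one_lt_two]
    rw [← h4]
    exact Real.logb_le_logb_of_le one_lt_two (by positivity) h3
  refine ⟨B ∪ B', Finset.union_subset hB (hB'.trans hZ'), ?_, C ∪ C', ?_, ?_⟩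
  · rw [Finset.card_union_of_disjoint (hd.mono_right hB')]
    omega
  · have h3 : ((C ∪ C').card : ℝ) ≤ C.card + C'.card := by exact_mod_cast Finset.card_union_le C C'
    nlinarith
  · intro x hx y hy hxy hxC hyC
    obtain ⟨e1, e2⟩ := hcut x hx y hy hxy (fun i hi => hxC i (by simp [hi]))
      (fun i hi => hyC i (by simp [hi]))
    have e3 : x ∈ B' ↔ y ∈ B' := by
      by_cases hxZ : x ∈ Z'
      · exact hcut' x hxZ y (e2.1 hxZ) hxy (fun i hi => hxC i (by simp [hi]))
          (fun i hi => hyC i (by simp [hi]))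
      · exact ⟨fun h => absurd (hB' h) hxZ, fun h => absurd (e2.2 (hB' h)) hxZ⟩
    rw [Finset.mem_union, Finset.mem_union, e1, e3]

end Step

end MinBisection

/-! ### The heaviest path and the width of the cut -/

namespace MinBisection

section Assembly

variable {V ι : Type*} [Fintype V] {G : SimpleGraph V} {T : SimpleGraph ι} {X : ι → Finset V}

/-- If every edge of the cut `(B, Bᶜ)` meets one of the clusters in `C`, then each cut edge is
incident to one of at most `|C| * t` vertices. -/
theorem cutWidth_le (B : Finset V) (C : Finset ι) {t : ℕ} (hw : ∀ i, (X i).card ≤ t)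
    (hcut : ∀ x y, G.Adj x y → (∀ i ∈ C, x ∉ X i) → (∀ i ∈ C, y ∉ X i) → (x ∈ B ↔ y ∈ B)) :
    cutWidth G B ≤ C.card * t * maxDeg G := by
  let E : Finset (Sym2 V) := (C.biUnion X).biUnion fun v =>
    (Finset.univ.filter fun u => G.Adj v u).image fun u => s(v, u)
  have hdeg : ∀ v, (Finset.univ.filter fun u => G.Adj v u).card ≤ maxDeg G := by
    intro v
    have h : Nat.card {u // G.Adj v u} ≤ maxDeg G :=
      Finset.le_sup (f := fun v => Nat.card {u // G.Adj v u}) (Finset.mem_univ v)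
    rwa [Nat.card_eq_fintype_card, Fintype.card_subtype] at h
  have hE : E.card ≤ C.card * t * maxDeg G :=
    (Finset.card_biUnion_le_card_mul _ _ _ fun v _ =>
      Finset.card_image_le.trans (hdeg v)).trans
      (Nat.mul_le_mul_right _ (Finset.card_biUnion_le_card_mul _ _ _ fun i _ => hw i))
  refine le_trans ?_ hE
  rw [cutWidth, ← Set.ncard_coe_finset]
  refine Set.ncard_le_ncard (s := {e | ∃ x y, G.Adj x y ∧ x ∈ B ∧ y ∉ B ∧ e = s(x, y)}) ?_
    (Finset.finite_toSet E)
  rintro _ ⟨x, y, hxy, hxB, hyB, rfl⟩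
  rw [Finset.mem_coe]
  by_cases hx : ∀ i ∈ C, x ∉ X i
  · by_cases hy : ∀ i ∈ C, y ∉ X i
    · exact absurd ((hcut x y hxy hx hy).1 hxB) hyB
    · push Not at hy
      obtain ⟨i, hi, hyi⟩ := hy
      refine Finset.mem_biUnion.2 ⟨y, Finset.mem_biUnion.2 ⟨i, hi, hyi⟩, ?_⟩
      exact Finset.mem_image.2 ⟨x, by simpa using hxy.symm, Sym2.eq_swap⟩
  · push Not at hx
    obtain ⟨i, hi, hxi⟩ := hx
    refine Finset.mem_biUnion.2 ⟨x, Finset.mem_biUnion.2 ⟨i, hi, hxi⟩, ?_⟩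
    exact Finset.mem_image.2 ⟨y, by simpa using hxy, rfl⟩

theorem isBisection_of_card {B : Finset V} (h : B.card = Fintype.card V / 2) : IsBisection B := by
  have := Finset.card_compl B
  unfold IsBisection
  omega

theorem minBis_le_cutWidth {B : Finset V} (h : IsBisection B) : minBis G ≤ cutWidth G B :=
  Nat.sInf_le ⟨B, h, rfl⟩

/-- The vertices in the clusters of a path give rise to a layout of the whole vertex set. -/
theorem exists_layout (hTD : IsTreeDecomp G T X) {i j : ι} {p : T.Walk i j} (hp : p.IsPath)
    (hne : (p.support.toFinset.biUnion X).Nonempty) :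
    ∃ q c key, IsLayout G X (p.support.toFinset.biUnion X) q c key ∧
      IsAnchored (p.support.toFinset.biUnion X) q Finset.univ := by
  set R := p.support.toFinset.biUnion X with hR
  have hmemR : ∀ x, x ∈ R ↔ ∃ k ≤ p.length, x ∈ X (p.getVert k) := by
    intro x
    simp only [hR, Finset.mem_biUnion, List.mem_toFinset,
      SimpleGraph.Walk.mem_support_iff_exists_getVert]
    constructor
    · rintro ⟨_, ⟨k, rfl, hk⟩, hx⟩
      exact ⟨k, hk, hx⟩
    · rintro ⟨k, hk, hx⟩
      exact ⟨_, ⟨k, rfl, hk⟩, hx⟩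
  obtain ⟨q, c, hmem, hanch, hcut⟩ := exists_levels hTD hp R hmemR hne
  let idx : V → ℕ := fun x => Fintype.equivFin V x
  have hidx : ∀ x, idx x < Fintype.card V := fun x => (Fintype.equivFin V x).2
  have hinj : Function.Injective idx := Fin.val_injective.comp (Fintype.equivFin V).injective
  -- lexicographic order by level, then membership in `R`, then index
  let off : V → ℕ := fun x => (if x ∈ R then 0 else Fintype.card V) + idx x
  have hoff : ∀ x, off x < 2 * Fintype.card V := by
    intro x
    have := hidx x
    simp only [off]
    split_ifs <;> omega
  have hlt : ∀ x y, q x < q y →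
      q x * (2 * Fintype.card V) + off x < q y * (2 * Fintype.card V) + off y := by
    intro x y h
    have h1 := hoff x
    have h2 := Nat.mul_le_mul_right (2 * Fintype.card V) (show q x + 1 ≤ q y from h)
    linarith [Nat.add_mul (q x) 1 (2 * Fintype.card V), Nat.zero_le (off y)]
  refine ⟨q, c, fun x => q x * (2 * Fintype.card V) + off x,
    ⟨hmem, hcut, ?_, hlt, ?_⟩, fun x _ => ?_⟩
  · intro x y hxy
    rcases Nat.lt_trichotomy (q x) (q y) with h | h | h
    · exact absurd hxy (hlt x y h).ne
    · simp only [h, add_right_inj, off] at hxy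
      apply hinj
      have := hidx x
      have := hidx y
      split_ifs at hxy <;> omega
    · exact absurd hxy (hlt y x h).ne'
  · intro x y hq hx hy
    have := hidx x
    simp only [hq, off, if_pos hx, if_neg hy]
    omega
  · obtain ⟨v, hv, hvx⟩ := hanch x
    exact ⟨v, hv, Finset.mem_univ v, hvx⟩

/-- A heaviest path exists, and it is nonempty in the sense that its clusters contain a vertex. -/
theorem exists_heaviest [Nonempty V] (hTD : IsTreeDecomp G T X) :
    ∃ (i j : ι) (p : T.Walk i j), p.IsPath ∧ (p.support.toFinset.biUnion X).Nonempty ∧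
      rTD T X = ((p.support.toFinset.biUnion X).card : ℝ) / Fintype.card V := by
  set W := {w : ℕ | ∃ (i j : ι) (p : T.Walk i j), p.IsPath ∧ w = walkWeight X p} with hW
  have hbdd : BddAbove W := by
    refine ⟨Fintype.card V, ?_⟩
    rintro _ ⟨i, j, p, -, rfl⟩
    exact Finset.card_le_univ _
  obtain ⟨v⟩ := ‹Nonempty V›
  obtain ⟨i, hi⟩ := hTD.mem_cluster v
  have hiW : (X i).card ∈ W := ⟨i, i, .nil, by simp, by simp [walkWeight]⟩
  obtain ⟨i', j', p, hp, hw⟩ := Nat.sSup_mem ⟨_, hiW⟩ hbdd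
  refine ⟨i', j', p, hp, ?_, ?_⟩
  · have h1 : (X i).card ≤ sSup W := le_csSup hbdd hiW
    have h2 := Finset.card_pos.2 ⟨v, hi⟩
    rw [hw] at h1
    exact Finset.card_pos.1 (h2.trans_le h1)
  · rw [rTD, ← hW, hw, walkWeight]

end Assembly

end MinBisection

/-- Every graph `G` that admits a tree decomposition `(T, X)` of width `t - 1`
satisfies `MinBis(G) ≤ (1/2) t Δ(G) ((log₂(1/r(T,X)))² + 9 log₂(1/r(T,X)) + 8)`. -/
theorem MinBisection.minBis_le_of_treeDecomp {V ι : Type*} [Fintype V] [Fintype ι]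
    (G : SimpleGraph V) (T : SimpleGraph ι) (X : ι → Finset V) (t : ℕ)
    (hTD : IsTreeDecomp G T X) (hwidth : ∀ i, (X i).card ≤ t) :
    (minBis G : ℝ) ≤ (1 / 2) * t * maxDeg G *
      ((Real.logb 2 (1 / rTD T X)) ^ 2 + 9 * Real.logb 2 (1 / rTD T X) + 8) := by
  cases isEmpty_or_nonempty V with
  | inl hV =>
    -- without vertices both sides vanish
    have h0 : minBis G = 0 := by
      have h1 := minBis_le_cutWidth (G := G) (B := ∅) (isBisection_of_card (by simp))
      have h2 := cutWidth_le (G := G) (X := X) ∅ ∅ hwidth (fun x => isEmptyElim x)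
      simp only [Finset.card_empty, zero_mul] at h2
      omega
    have h1 : maxDeg G = 0 := by simp [maxDeg]
    simp [h0, h1]
  | inr hV =>
    obtain ⟨i, j, p, hp, hne, hr⟩ := exists_heaviest hTD
    obtain ⟨q, c, key, hL, hZ⟩ := exists_layout hTD hp hne
    set R := p.support.toFinset.biUnion X
    obtain ⟨B, -, hB, C, hC, hcut⟩ := exists_cut hTD hL Finset.univ Finset.univ_nonempty hZ
      (Fintype.card V / 2) (by rw [Finset.card_univ]; omega)
    have hfilter : Finset.univ.filter (· ∈ R) = R := by ext; simp
    rw [hfilter, Finset.card_univ] at hC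
    have hlog : 1 / rTD T X = (Fintype.card V : ℝ) / R.card := by rw [hr, one_div_div]
    rw [hlog]
    have hwid : minBis G ≤ C.card * t * maxDeg G :=
      (minBis_le_cutWidth (isBisection_of_card hB)).trans
        (cutWidth_le B C hwidth fun x y => hcut x (Finset.mem_univ x) y (Finset.mem_univ y))
    have hwidR : (minBis G : ℝ) ≤ C.card * (t * maxDeg G) := by
      rw [← mul_assoc]
      exact_mod_cast hwid
    have := mul_le_mul_of_nonneg_right hC (by positivity : (0 : ℝ) ≤ t * maxDeg G)
    linarith
end

section
/- Every graph G that admits a tree decomposition (T,X) of width t−1 satisfies MinBis(G) ≤ 8·t·Δ(G) / r(T,X), where Δ(G) is the maximum degree of G. -/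
/-!
Write `n = |V|`, let `p` be a path of `T` of maximal weight, `R` the union of its clusters, and
`K = t Δ(G)`. Since `r(T, X) = |R| / n`, the claim is that some bisection has width at most
`8 K n / |R|`. Two properties of the tree decomposition are used.

* `IsTreeDecomp.exists_ranking`: `V` has a linear order whose cut directly after any vertex of
  `R` has at most `K` edges. Hence, reading the order circularly, the cut around an arc with both
  ends directly after vertices of `R` costs at most `2 K`, and two adjacent arcs cost at most `3 K`.
* `IsTreeDecomp.hasHalfCuts`: every `A ⊆ V` and `u ≤ |A|` admit a set `C ⊆ A` with
  `u / 2 ≤ |C| ≤ u` cut off from `A \ C` by at most `K` edges. Iterating, `j` steps miss the size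
  `u` by at most `u / 2 ^ j` (`HasHalfCuts.approx`).

`goodCuts` combines them: if `Z ⊆ V` has `N` vertices, `ℓ ≥ 1` of them in `R`, then `G[Z]` has cuts
of every size `m ≤ N` with at most `8 K N / ℓ` edges. Arrange `Z` in a circle. If two
vertices of `R` are at distance `m`, the arc between them will do. Otherwise compare the circle with
its rotation by `m`. Passing to `N - m` if necessary, at most half of the points have
the preceding rotated point of `R` closer than the preceding point of `R` (`half_period`). By
averaging over the maximal runs of rotated points of `R`, one run `b₁ < ... < b₂`, followed by a
vertex `y` of `R`, is at least twice as dense in `[b₁, y)` as `R` is in the circle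
(`exists_dense_run`). The arc `(b₂ - m, y]` exceeds the size `m` by `e = y - b₂`. If
`e ≤ N / (2 ℓ)`, then `e` half cuts remove exactly `e` vertices. Otherwise `N / ℓ + 1` half cuts
remove between `e` and `y - b₁` vertices, and the missing ones, at most `b₂ - b₁`, are taken from
the arc `(b₁ - m, b₂ - m]` by recursion. The relative frequency of `R` there has doubled, so the
recursion costs at most half of the bound, and the other half pays for this step.
-/

open scoped Classical

namespace MinBisection

/-! ### Periodic marked sets on the integers -/

section Periodic

/-- Over any two periods of the same length, a periodic predicate on `ℤ` holds equally often. -/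
lemma card_filter_period (p : ℤ → Prop) (N : ℕ) (hp : ∀ c, p (c + N) ↔ p c) (a b : ℤ) :
    ((Finset.Ico a (a + N)).filter p).card = ((Finset.Ico b (b + N)).filter p).card := by
  have step : ∀ a : ℤ, ((Finset.Ico a (a + N)).filter p).card
      = ((Finset.Ico (a + 1) (a + 1 + N)).filter p).card := by
    intro a
    rcases Nat.eq_zero_or_pos N with rfl | hN
    · simp
    have h1 : Finset.Ico a (a + N) = insert a (Finset.Ico (a + 1) (a + N)) := by
      ext c; simp only [Finset.mem_insert, Finset.mem_Ico]; omega
    have h2 : Finset.Ico (a + 1) (a + 1 + N) = insert (a + N) (Finset.Ico (a + 1) (a + N)) := by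
      ext c; simp only [Finset.mem_insert, Finset.mem_Ico]; omega
    rw [h1, h2, Finset.filter_insert, Finset.filter_insert]
    by_cases h : p a
    · rw [if_pos h, if_pos ((hp a).2 h), Finset.card_insert_of_notMem (by simp),
        Finset.card_insert_of_notMem (by simp)]
    · rw [if_neg h, if_neg (fun h' => h ((hp a).1 h'))]
  have key : ∀ (k : ℕ) (a : ℤ), ((Finset.Ico a (a + N)).filter p).card
      = ((Finset.Ico (a + k) (a + k + N)).filter p).card := by
    intro k
    induction k with
    | zero => intro a; simp
    | succ k ih =>
      intro a
      rw [ih a, step (a + k)]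
      push_cast
      rw [show a + (k : ℤ) + 1 = a + (k + 1) by ring]
  rcases le_total a b with h | h
  · have := key (b - a).toNat a
    rwa [Int.toNat_of_nonneg (by omega), show a + (b - a) = b by ring] at this
  · have := key (a - b).toNat b
    rw [Int.toNat_of_nonneg (by omega), show b + (a - b) = a by ring] at this
    exact this.symm

lemma card_filter_shift (p : ℤ → Prop) (a b s : ℤ) :
    ((Finset.Ico a b).filter fun c => p (c + s)).card
      = ((Finset.Ico (a + s) (b + s)).filter p).card := by
  refine Finset.card_bij (fun c _ => c + s) ?_ ?_ ?_
  · intro c hc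
    simp only [Finset.mem_filter, Finset.mem_Ico] at hc ⊢
    exact ⟨by omega, hc.2⟩
  · intro c _ c' _ h
    simpa using h
  · intro c hc
    simp only [Finset.mem_filter, Finset.mem_Ico] at hc
    refine ⟨c - s, ?_, by ring⟩
    simp only [Finset.mem_filter, Finset.mem_Ico, sub_add_cancel]
    exact ⟨by omega, hc.2⟩

/-- `Nearer p a b`: going backwards one step at a time, a point of `p` is met from `a` strictly
earlier than from `b`. -/
def Nearer (p : ℤ → Prop) (a b : ℤ) : Prop :=
  ∃ k : ℕ, p (a - k) ∧ ∀ i : ℕ, i ≤ k → ¬ p (b - i)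

lemma Nearer.asymm {p : ℤ → Prop} {a b : ℤ} (h : Nearer p a b) : ¬ Nearer p b a := by
  rintro ⟨l, hl, hl'⟩
  obtain ⟨k, hk, hk'⟩ := h
  rcases le_total k l with h | h
  · exact hl' k h hk
  · exact hk' l h hl

/-- The set `{c | Nearer p (c - m) c}` occupies at most half of a period, for the shift `m` or for
the complementary shift `N - m`. -/
lemma half_period (p : ℤ → Prop) (N m : ℕ) (hmN : m ≤ N) (hp : ∀ c, p (c + N) ↔ p c) (a : ℤ) :
    2 * ((Finset.Ico a (a + N)).filter fun c => Nearer p (c - m) c).card ≤ N ∨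
    2 * ((Finset.Ico a (a + N)).filter fun c => Nearer p (c - ((N - m : ℕ) : ℤ)) c).card ≤ N := by
  have hper : ∀ c : ℤ, (Nearer p (c + N) (c + N - m) ↔ Nearer p c (c - m)) := by
    intro c
    unfold Nearer
    refine exists_congr fun k => and_congr ?_ (forall_congr' fun i => imp_congr_right fun _ => ?_)
    · rw [show c + (N : ℤ) - k = c - k + N by ring, hp]
    · rw [show c + (N : ℤ) - m - i = c - m - i + N by ring, hp]
  have h2 : ((Finset.Ico a (a + N)).filter fun c => Nearer p (c - ((N - m : ℕ) : ℤ)) c).card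
      = ((Finset.Ico a (a + N)).filter fun c => Nearer p c (c - m)).card := by
    rw [card_filter_period (fun c => Nearer p c (c - m)) N hper a (a + m),
      show a + (m : ℤ) + N = (a + N) + m by ring,
      ← card_filter_shift (fun c => Nearer p c (c - m)) a (a + N) m]
    congr 1
    refine Finset.filter_congr fun c _ => ?_
    unfold Nearer
    refine exists_congr fun k => and_congr ?_ (forall_congr' fun i => imp_congr_right fun _ => ?_)
    · rw [← hp]
      congr! 1
      push_cast [hmN]
      ring
    · rw [show c + (m : ℤ) - m - i = c - i by ring]
  have h3 : ((Finset.Ico a (a + N)).filter fun c => Nearer p (c - m) c).card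
      + ((Finset.Ico a (a + N)).filter fun c => Nearer p c (c - m)).card ≤ N := by
    rw [← Finset.card_union_of_disjoint]
    · refine (Finset.card_le_card (Finset.union_subset (Finset.filter_subset _ _)
        (Finset.filter_subset _ _))).trans ?_
      simp
    · rw [Finset.disjoint_filter]
      exact fun c _ h => h.asymm
  rw [h2]
  omega

/-- The doubling step on a circle of length `N` carrying `ℓ` marked points, no two of which differ
by `m`. If `{c | Nearer p (c - m) c}` has at most `N / 2` elements per period, then some marked
point `y` is preceded, before any other marked point, by a run of marked points shifted by `m` that
starts at `b₁`, ends at `b₂`, and is at least twice as dense in `[b₁, y)` as the marked points are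
on the whole circle. -/
lemma exists_dense_run (p : ℤ → Prop) (N m ℓ : ℕ) (hp : ∀ c, p (c + N) ↔ p c)
    (y₀ : ℤ) (hy₀ : p y₀) (hℓ : ((Finset.Ico y₀ (y₀ + N)).filter p).card = ℓ) (hN : 0 < N)
    (hne : ∀ x, p x → ¬ p (x + m))
    (hU : 2 * ((Finset.Ico y₀ (y₀ + N)).filter fun c => Nearer p (c - m) c).card ≤ N) :
    ∃ y b₁ b₂ : ℤ, p y ∧ p (b₁ - m) ∧ p (b₂ - m) ∧ b₁ ≤ b₂ ∧ b₂ < y ∧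
      (∀ c, b₁ ≤ c → c < y → ¬ p c) ∧
      (2 * ℓ : ℤ) * (y - b₁) ≤
        ((Finset.Icc b₁ b₂).filter fun c => p (c - m)).card * N := by
  -- `nxt c` is the first marked point after `c`.
  have hnxt : ∀ c : ℤ, c ∈ Finset.Ico y₀ (y₀ + N) →
      ∃ y, c < y ∧ y ≤ y₀ + N ∧ p y ∧ ∀ d, c < d → d < y → ¬ p d := by
    intro c hc
    rw [Finset.mem_Ico] at hc
    have hex : ∃ k : ℕ, p (c + 1 + k) := by
      refine ⟨(y₀ + N - c - 1).toNat, ?_⟩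
      rw [Int.toNat_of_nonneg (by omega), show c + 1 + (y₀ + N - c - 1) = y₀ + N by ring, hp]
      exact hy₀
    refine ⟨c + 1 + Nat.find hex, by omega, ?_, Nat.find_spec hex, ?_⟩
    · have : Nat.find hex ≤ (y₀ + N - c - 1).toNat := by
        apply Nat.find_min'
        rw [Int.toNat_of_nonneg (by omega), show c + 1 + (y₀ + N - c - 1) = y₀ + N by ring, hp]
        exact hy₀
      omega
    · intro d h1 h2 hd
      apply Nat.find_min hex (m := (d - c - 1).toNat) (by omega)
      rwa [Int.toNat_of_nonneg (by omega), show c + 1 + (d - c - 1) = d by ring]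
  choose! nxt hn1 hn2 hn3 hn4 using hnxt
  set I := Finset.Ico y₀ (y₀ + N) with hI
  set U := I.filter fun c => Nearer p (c - m) c with hUdef
  set Q := I.filter fun c => p (c - m) with hQ
  have hQcard : Q.card = ℓ := by
    have h := card_filter_shift p y₀ (y₀ + N) (-m)
    rw [show y₀ + (N : ℤ) + -m = (y₀ + -m) + N by ring,
      card_filter_period p N hp _ y₀, hℓ] at h
    simpa [hQ, hI, sub_eq_add_neg] using h
  have hℓpos : 0 < ℓ := by
    rw [← hℓ, Finset.card_pos]
    exact ⟨y₀, by simp [hI, hy₀, hN]⟩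
  set T := Q.image nxt with hT
  have hTne : T.Nonempty := by
    rw [hT, Finset.image_nonempty, ← Finset.card_pos]
    omega
  have hQsum : Q.card = ∑ y ∈ T, (Q.filter fun c => nxt c = y).card :=
    Finset.card_eq_sum_card_fiberwise fun c hc => Finset.mem_image_of_mem _ hc
  have hUsum : ∑ y ∈ T, (U.filter fun c => nxt c = y).card ≤ U.card := by
    rw [← Finset.card_biUnion]
    · exact Finset.card_le_card (Finset.biUnion_subset.2 fun y _ => Finset.filter_subset _ _)
    · intro x _ y _ hxy
      rw [Function.onFun, Finset.disjoint_filter]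
      rintro c _ rfl h
      exact hxy h
  obtain ⟨y, hyT, hy⟩ : ∃ y ∈ T, 2 * ℓ * (U.filter fun c => nxt c = y).card ≤
      (Q.filter fun c => nxt c = y).card * N := by
    apply Finset.exists_le_of_sum_le hTne
    rw [← Finset.mul_sum, ← Finset.sum_mul, ← hQsum, hQcard]
    calc _ ≤ 2 * ℓ * U.card := Nat.mul_le_mul_left _ hUsum
      _ = ℓ * (2 * U.card) := by ring
      _ ≤ ℓ * N := Nat.mul_le_mul_left _ hU
  set Qy := Q.filter fun c => nxt c = y with hQy
  have hQyne : Qy.Nonempty := by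
    obtain ⟨c, hc, rfl⟩ := Finset.mem_image.1 hyT
    exact ⟨c, by simp [hQy, hc]⟩
  have hmem : ∀ c ∈ Qy, c ∈ I ∧ p (c - m) ∧ nxt c = y := by
    intro c hc
    simp only [hQy, hQ, Finset.mem_filter] at hc
    exact ⟨hc.1.1, hc.1.2, hc.2⟩
  obtain ⟨hb1I, hb1p, hb1y⟩ := hmem _ (Qy.min'_mem hQyne)
  obtain ⟨hb2I, hb2p, hb2y⟩ := hmem _ (Qy.max'_mem hQyne)
  set b₁ := Qy.min' hQyne
  set b₂ := Qy.max' hQyne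
  have hlt : b₂ < y := hb2y ▸ hn1 _ hb2I
  have hb12 : b₁ ≤ b₂ := Finset.min'_le_max' _ _
  have hyN : y ≤ y₀ + N := hb1y ▸ hn2 _ hb1I
  have hgap : ∀ c, b₁ ≤ c → c < y → ¬ p c := by
    intro c h1 h2 hc
    rcases h1.eq_or_lt with rfl | h1
    · have := hne _ hb1p
      rw [sub_add_cancel] at this
      exact this hc
    · exact hn4 _ hb1I c h1 (by rwa [hb1y]) hc
  refine ⟨y, b₁, b₂, hb1y ▸ hn3 _ hb1I, hb1p, hb2p, hb12, hlt, hgap, ?_⟩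
  have hcard1 : (y - b₁).toNat ≤ (U.filter fun c => nxt c = y).card := by
    rw [← Int.card_Ico]
    refine Finset.card_le_card fun c hc => ?_
    rw [Finset.mem_Ico] at hc
    have hcI : c ∈ I := by
      simp only [hI, Finset.mem_Ico] at hb1I ⊢
      omega
    have hpy : p y := hb1y ▸ hn3 _ hb1I
    simp only [hUdef, Finset.mem_filter]
    refine ⟨⟨hcI, (c - b₁).toNat, ?_, ?_⟩, ?_⟩
    · rwa [Int.toNat_of_nonneg (by omega), show c - (m : ℤ) - (c - b₁) = b₁ - m by ring]
    · intro i hi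
      exact hgap _ (by omega) (by omega)
    · rcases lt_trichotomy (nxt c) y with h | h | h
      · exact absurd (hn3 c hcI) (hgap _ (by have := hn1 c hcI; omega) h)
      · exact h
      · exact absurd hpy (hn4 c hcI y hc.2 h)
  have hcard2 : Qy.card ≤ ((Finset.Icc b₁ b₂).filter fun c => p (c - m)).card := by
    refine Finset.card_le_card fun c hc => ?_
    rw [Finset.mem_filter, Finset.mem_Icc]
    exact ⟨⟨Finset.min'_le _ _ hc, Finset.le_max' _ _ hc⟩, (hmem c hc).2.1⟩
  have h1 : (y - b₁ : ℤ) = ((y - b₁).toNat : ℤ) := (Int.toNat_of_nonneg (by omega)).symm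
  rw [h1]
  have : 2 * ℓ * (y - b₁).toNat ≤
      ((Finset.Icc b₁ b₂).filter fun c => p (c - m)).card * N :=
    (Nat.mul_le_mul_left _ hcard1).trans (hy.trans (Nat.mul_le_mul_right _ hcard2))
  exact_mod_cast this

end Periodic

/-! ### Cuts and half cuts -/

section Cuts

/-- The edges of `G[Z]` with exactly one endpoint in `S`. -/
noncomputable def cutE {V : Type*} [Fintype V] (G : SimpleGraph V) (Z S : Finset V) :
    Finset (Sym2 V) :=
  Finset.univ.filter fun e => ∃ u v, G.Adj u v ∧ u ∈ Z ∧ v ∈ Z ∧ u ∈ S ∧ v ∉ S ∧ e = s(u, v)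

variable {V : Type*} [Fintype V] {G : SimpleGraph V}

lemma mem_cutE {Z S : Finset V} {e : Sym2 V} : e ∈ cutE G Z S ↔
    ∃ u v, G.Adj u v ∧ u ∈ Z ∧ v ∈ Z ∧ u ∈ S ∧ v ∉ S ∧ e = s(u, v) := by
  simp [cutE]

lemma mk_mem_cutE {Z S : Finset V} {u v : V} (h : G.Adj u v) (hu : u ∈ Z) (hv : v ∈ Z)
    (hS : ¬ (u ∈ S ↔ v ∈ S)) : s(u, v) ∈ cutE G Z S := by
  rw [mem_cutE]
  by_cases hu' : u ∈ S
  · exact ⟨u, v, h, hu, hv, hu', fun h' => hS (by tauto), rfl⟩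
  · exact ⟨v, u, h.symm, hv, hu, by tauto, hu', Sym2.eq_swap⟩

lemma cutE_sdiff_self (Z S : Finset V) : cutE G Z (Z \ S) = cutE G Z S := by
  ext e
  constructor
  · rw [mem_cutE]
    rintro ⟨u, v, h, hu, hv, hu', hv', rfl⟩
    rw [Finset.mem_sdiff] at hu' hv'
    exact mk_mem_cutE h hu hv (by tauto)
  · rw [mem_cutE]
    rintro ⟨u, v, h, hu, hv, hu', hv', rfl⟩
    refine mk_mem_cutE h hu hv ?_
    rw [Finset.mem_sdiff, Finset.mem_sdiff]
    tauto

lemma cutE_mono {Z Z' : Finset V} (h : Z ⊆ Z') (S : Finset V) :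
    cutE G Z S ⊆ cutE G Z' S := by
  intro e
  rw [mem_cutE, mem_cutE]
  rintro ⟨u, v, h1, hu, hv, h2⟩
  exact ⟨u, v, h1, h hu, h hv, h2⟩

lemma card_cutE_le_of_cover {Z S Y : Finset V}
    (h : ∀ u v, G.Adj u v → u ∈ Z → v ∈ Z → u ∈ S → v ∉ S → u ∈ Y ∨ v ∈ Y) :
    (cutE G Z S).card ≤ Y.card * maxDeg G := by
  have hsub : cutE G Z S ⊆
      Y.biUnion fun y => (Finset.univ.filter fun w => G.Adj y w).image fun w => s(y, w) := by
    intro e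
    rw [mem_cutE]
    rintro ⟨u, v, h1, hu, hv, hu', hv', rfl⟩
    simp only [Finset.mem_biUnion, Finset.mem_image, Finset.mem_filter, Finset.mem_univ, true_and]
    rcases h u v h1 hu hv hu' hv' with hY | hY
    · exact ⟨u, hY, v, h1, rfl⟩
    · exact ⟨v, hY, u, h1.symm, Sym2.eq_swap⟩
  refine (Finset.card_le_card hsub).trans (Finset.card_biUnion_le_card_mul _ _ _ fun y _ => ?_)
  refine Finset.card_image_le.trans ?_
  have : (Finset.univ.filter fun w => G.Adj y w).card = Nat.card {u // G.Adj y u} := by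
    rw [Nat.card_eq_fintype_card, Fintype.card_subtype]
  rw [this]
  exact Finset.le_sup (f := fun v => Nat.card {u // G.Adj v u}) (Finset.mem_univ y)

/-- Every vertex set `A` has, for every target `u ≤ |A|`, a subset whose size is within a factor
two of `u` and which at most `K` edges separate from the rest of `A`. -/
def HasHalfCuts (G : SimpleGraph V) (K : ℕ) : Prop :=
  ∀ (A : Finset V) (u : ℕ), u ≤ A.card →
    ∃ C ⊆ A, C.card ≤ u ∧ u ≤ 2 * C.card ∧ (cutE G A C).card ≤ K

/-- Repeated halving: with `j` half cuts the target size `u` is missed by at most `u / 2 ^ j`. -/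
lemma HasHalfCuts.approx {K : ℕ} (hG : HasHalfCuts G K) (j : ℕ) (A : Finset V) (u : ℕ)
    (hu : u ≤ A.card) :
    ∃ C ⊆ A, C.card ≤ u ∧ (u - C.card) * 2 ^ j ≤ u ∧ (cutE G A C).card ≤ j * K := by
  induction j generalizing A u with
  | zero =>
    refine ⟨∅, by simp, by simp, by simp, ?_⟩
    simp [cutE]
  | succ j ih =>
    obtain ⟨C₁, h1, h2, h3, h4⟩ := hG A u hu
    obtain ⟨C₂, k1, k2, k3, k4⟩ := ih (A \ C₁) (u - C₁.card)
      (by rw [Finset.card_sdiff_of_subset h1]; omega)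
    have hd : Disjoint C₁ C₂ := by
      rw [Finset.disjoint_left]
      exact fun x hx hx' => (Finset.mem_sdiff.1 (k1 hx')).2 hx
    refine ⟨C₁ ∪ C₂, Finset.union_subset h1 (k1.trans Finset.sdiff_subset), ?_, ?_, ?_⟩
    · rw [Finset.card_union_of_disjoint hd]; omega
    · rw [Finset.card_union_of_disjoint hd, ← Nat.sub_sub, pow_succ, ← mul_assoc]
      omega
    · have hsub : cutE G A (C₁ ∪ C₂) ⊆ cutE G A C₁ ∪ cutE G (A \ C₁) C₂ := by
        intro e
        rw [mem_cutE, Finset.mem_union]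
        rintro ⟨u, v, ha, hu, hv, hu', hv', rfl⟩
        rw [Finset.mem_union] at hu' hv'
        push Not at hv'
        by_cases h : u ∈ C₁
        · exact Or.inl (mk_mem_cutE ha hu hv (by tauto))
        · exact Or.inr (mk_mem_cutE ha (Finset.mem_sdiff.2 ⟨hu, h⟩)
            (Finset.mem_sdiff.2 ⟨hv, hv'.1⟩) (by tauto))
      calc _ ≤ _ := Finset.card_le_card hsub
        _ ≤ _ := Finset.card_union_le _ _
        _ ≤ K + j * K := add_le_add h4 k4
        _ = _ := by ring

end Cuts

/-! ### Vertices in circular order -/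

section Circle

variable {V : Type*}

/-- `ζ` winds the vertices of `Z` around a circle of length `|Z|` in the order given by the
ranking `κ`: it is `|Z|`-periodic and hits every element of `Z` once per period. The last field
says that two vertices lying in different arcs out of `(x, y]` and `(y, x + |Z|]` are separated
in the linear order by the cut after `ζ x` or by the cut after `ζ y`. -/
structure IsCircular (κ : V → ℕ) (Z : Finset V) (ζ : ℤ → V) : Prop where
  periodic : ∀ c, ζ (c + Z.card) = ζ c
  mem : ∀ c, ζ c ∈ Z
  surj : ∀ v ∈ Z, ∀ a : ℤ, ∃ c, a < c ∧ c ≤ a + Z.card ∧ ζ c = v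
  inj : ∀ a b c : ℤ, a < b → b ≤ a + Z.card → a < c → c ≤ a + Z.card → ζ b = ζ c → b = c
  sep : ∀ x a y b : ℤ, x < a → a ≤ y → y < b → b ≤ x + Z.card →
    ¬ (κ (ζ a) ≤ κ (ζ x) ↔ κ (ζ b) ≤ κ (ζ x)) ∨ ¬ (κ (ζ a) ≤ κ (ζ y) ↔ κ (ζ b) ≤ κ (ζ y))

lemma exists_isCircular {κ : V → ℕ} (hκ : Function.Injective κ) (Z : Finset V)
    (hZ : 0 < Z.card) : ∃ ζ, IsCircular κ Z ζ := by
  obtain ⟨N, hN⟩ : ∃ N, Z.card = N := ⟨_, rfl⟩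
  rw [hN] at hZ
  have hN' : (Z.image κ).card = N := by rw [Finset.card_image_of_injective _ hκ, hN]
  let f := (Z.image κ).orderEmbOfFin hN'
  have hf : ∀ i, ∃ v ∈ Z, κ v = f i := fun i =>
    Finset.mem_image.1 ((Z.image κ).orderEmbOfFin_mem hN' i)
  choose z hz hzf using hf
  have hlt : ∀ c : ℤ, (c % N).toNat < N := fun c => by
    have h1 := Int.emod_nonneg c (b := (N : ℤ)) (by omega)
    have h2 := Int.emod_lt_of_pos c (b := (N : ℤ)) (by omega)
    omega
  have hκζ : ∀ a b : ℤ, κ (z ⟨_, hlt a⟩) ≤ κ (z ⟨_, hlt b⟩) ↔ a % N ≤ b % N := by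
    intro a b
    rw [hzf, hzf, f.le_iff_le, Fin.mk_le_mk]
    have h1 := Int.emod_nonneg a (b := (N : ℤ)) (by omega)
    have h2 := Int.emod_nonneg b (b := (N : ℤ)) (by omega)
    omega
  -- Within one turn after `x`, residues advance by the distance from `x`, up to one wrap.
  have hmod : ∀ x a : ℤ, x ≤ a → a ≤ x + N →
      (a % N = x % N + (a - x) ∧ x % N + (a - x) < N) ∨
      (a % N = x % N + (a - x) - N ∧ N ≤ x % N + (a - x)) := by
    intro x a h1 h2
    have h3 := Int.emod_nonneg x (b := (N : ℤ)) (by omega)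
    have h4 := Int.emod_lt_of_pos x (b := (N : ℤ)) (by omega)
    have h5 : a % N = (x % N + (a - x)) % N := by
      rw [Int.emod_add_emod]; congr 1; ring
    rcases lt_or_ge (x % N + (a - x)) N with h | h
    · left
      exact ⟨by rw [h5, Int.emod_eq_of_lt (by omega) h], h⟩
    · right
      refine ⟨?_, h⟩
      rw [h5, ← Int.sub_emod_right, Int.emod_eq_of_lt (by omega) (by omega)]
  refine ⟨fun c => z ⟨_, hlt c⟩, ?_, fun c => hz _, ?_, ?_, ?_⟩
  · intro c
    simp [hN]
  · intro v hv a
    obtain ⟨i, hi⟩ : κ v ∈ Set.range f := by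
      rw [(Z.image κ).range_orderEmbOfFin hN']
      exact_mod_cast Finset.mem_image_of_mem κ hv
    rw [hN]
    have hi0 : (i : ℕ) < N := i.2
    have h3 := Int.emod_nonneg ((i : ℤ) - a - 1) (b := (N : ℤ)) (by omega)
    have h4 := Int.emod_lt_of_pos ((i : ℤ) - a - 1) (b := (N : ℤ)) (by omega)
    refine ⟨a + 1 + ((i : ℤ) - a - 1) % N, by omega, by omega, ?_⟩
    apply hκ
    have h5 : (a + 1 + ((i : ℤ) - a - 1) % N) % N = i := by
      rw [Int.add_emod_emod, show a + 1 + ((i : ℤ) - a - 1) = i by ring,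
        Int.emod_eq_of_lt (by omega) (by omega)]
    rw [hzf, ← hi]
    congr 1
    apply Fin.ext
    simp only [h5, Int.toNat_natCast]
  · intro a b c h1 h2 h3 h4 h
    rw [hN] at h2 h4
    have e1 := (hκζ b c).1 (le_of_eq (congrArg κ h))
    have e2 := (hκζ c b).1 (le_of_eq (congrArg κ h.symm))
    have := hmod a b (by omega) h2
    have := hmod a c (by omega) h4
    omega
  · intro x a y b h1 h2 h3 h4
    rw [hN] at h4
    simp only [hκζ]
    have m1 := hmod x a (by omega) (by omega)
    have m2 := hmod x y (by omega) (by omega)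
    have m3 := hmod x b (by omega) (by omega)
    have h3 := Int.emod_nonneg x (b := (N : ℤ)) (by omega)
    have h4 := Int.emod_lt_of_pos x (b := (N : ℤ)) (by omega)
    omega

namespace IsCircular

variable {κ : V → ℕ} {Z : Finset V} {ζ : ℤ → V}

lemma mem_arc (hζ : IsCircular κ Z ζ) {x a b c : ℤ} (ha : x ≤ a) (hb : b ≤ x + Z.card)
    (hc : x < c) (hc' : c ≤ x + Z.card) :
    ζ c ∈ (Finset.Ioc a b).image ζ ↔ a < c ∧ c ≤ b := by
  rw [Finset.mem_image]
  constructor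
  · rintro ⟨d, hd, h⟩
    rw [Finset.mem_Ioc] at hd
    obtain rfl := hζ.inj x d c (by omega) (by omega) hc hc' h
    exact hd
  · exact fun h => ⟨c, Finset.mem_Ioc.2 h, rfl⟩

lemma card_filter_arc (hζ : IsCircular κ Z ζ) {a b : ℤ} (hb : b ≤ a + Z.card)
    (q : V → Prop) : (((Finset.Ioc a b).image ζ).filter q).card
      = ((Finset.Ioc a b).filter fun c => q (ζ c)).card := by
  rw [Finset.filter_image, Finset.card_image_of_injOn]
  intro c hc d hd h
  simp only [Finset.coe_filter, Finset.mem_Ioc, Set.mem_ofPred_eq] at hc hd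
  exact hζ.inj a c d hc.1.1 (by omega) hd.1.1 (by omega) h

lemma card_arc (hζ : IsCircular κ Z ζ) {a b : ℤ} (hb : b ≤ a + Z.card) :
    ((Finset.Ioc a b).image ζ).card = (b - a).toNat := by
  have := hζ.card_filter_arc hb fun _ => True
  simpa using this

lemma arc_subset (hζ : IsCircular κ Z ζ) (a b : ℤ) : (Finset.Ioc a b).image ζ ⊆ Z := by
  intro v hv
  obtain ⟨c, _, rfl⟩ := Finset.mem_image.1 hv
  exact hζ.mem c

/-- Removing `C` from the arc `(x₂, y]` and adding part `B` of the arc `(x₁, x₂]` costs, besides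
the edges cut inside the two arcs, only the linear cuts after `ζ x₁`, `ζ x₂` and `ζ y`. -/
lemma card_cutE_arcs [Fintype V] {G : SimpleGraph V} (hζ : IsCircular κ Z ζ) {K : ℕ}
    {x₁ x₂ y : ℤ} (h12 : x₁ ≤ x₂) (h2y : x₂ ≤ y) (hy : y ≤ x₁ + Z.card)
    (hK : ∀ x, x = x₁ ∨ x = x₂ ∨ x = y →
      (cutE G Finset.univ (Finset.univ.filter fun v => κ v ≤ κ (ζ x))).card ≤ K)
    {B C : Finset V} (hC : C ⊆ (Finset.Ioc x₂ y).image ζ) (hB : B ⊆ (Finset.Ioc x₁ x₂).image ζ) :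
    (((Finset.Ioc x₂ y).image ζ \ C) ∪ B).card = (y - x₂).toNat - C.card + B.card ∧
    (cutE G Z (((Finset.Ioc x₂ y).image ζ \ C) ∪ B)).card ≤
      3 * K + (cutE G ((Finset.Ioc x₂ y).image ζ) C).card
        + (cutE G ((Finset.Ioc x₁ x₂).image ζ) B).card := by
  set A := (Finset.Ioc x₂ y).image ζ with hA
  set Q := (Finset.Ioc x₁ x₂).image ζ with hQ
  set L : ℤ → Finset V := fun x => Finset.univ.filter fun v => κ v ≤ κ (ζ x) with hL
  have hAQ : Disjoint A Q := by
    rw [Finset.disjoint_left]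
    intro v hvA hvQ
    obtain ⟨c, hc, rfl⟩ := Finset.mem_image.1 hvQ
    rw [Finset.mem_Ioc] at hc
    have := (hζ.mem_arc h12 hy hc.1 (by omega)).1 hvA
    omega
  refine ⟨?_, ?_⟩
  · rw [Finset.card_union_of_disjoint (hAQ.mono Finset.sdiff_subset hB),
      Finset.card_sdiff_of_subset hC, hA, hζ.card_arc (by omega)]
  have hsub : cutE G Z ((A \ C) ∪ B) ⊆ ((cutE G Finset.univ (L x₁) ∪ cutE G Finset.univ (L x₂)) ∪
      cutE G Finset.univ (L y)) ∪ cutE G A C ∪ cutE G Q B := by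
    intro e
    rw [mem_cutE]
    rintro ⟨u, v, ha, hu, hv, hu', hv', rfl⟩
    have hsep : ∀ x, ¬ (κ u ≤ κ (ζ x) ↔ κ v ≤ κ (ζ x)) →
        s(u, v) ∈ cutE G Finset.univ (L x) := by
      intro x hx
      refine mk_mem_cutE ha (Finset.mem_univ _) (Finset.mem_univ _) ?_
      simpa [hL] using hx
    obtain ⟨a, ha1, ha2, rfl⟩ := hζ.surj u hu x₁
    obtain ⟨b, hb1, hb2, rfl⟩ := hζ.surj v hv x₁
    have memA := fun c h1 h2 => hζ.mem_arc (x := x₁) (a := x₂) (b := y) (c := c) h12 hy h1 h2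
    have memQ := fun c h1 h2 => hζ.mem_arc (x := x₁) (a := x₁) (b := x₂) (c := c) le_rfl
      (by omega) h1 h2
    rw [← hA] at memA
    rw [← hQ] at memQ
    have hdA := Finset.disjoint_left.1 hAQ
    simp only [Finset.mem_union, Finset.mem_sdiff] at hu' hv' ⊢
    by_cases haQ : a ≤ x₂
    · by_cases hbQ : b ≤ x₂
      · have q1 := (memQ a ha1 ha2).2 ⟨ha1, haQ⟩
        have q2 := (memQ b hb1 hb2).2 ⟨hb1, hbQ⟩
        have q3 : ζ a ∈ B := hu'.resolve_left fun h => hdA h.1 q1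
        exact Or.inr (mk_mem_cutE ha q1 q2 fun h => hv' (Or.inr (h.1 q3)))
      · rcases hζ.sep x₁ a x₂ b ha1 haQ (by omega) hb2 with h | h
        · exact Or.inl (Or.inl (Or.inl (Or.inl (hsep _ h))))
        · exact Or.inl (Or.inl (Or.inl (Or.inr (hsep _ h))))
    · by_cases hbQ : b ≤ x₂
      · rcases hζ.sep x₁ b x₂ a hb1 hbQ (by omega) ha2 with h | h
        · exact Or.inl (Or.inl (Or.inl (Or.inl (hsep _ fun h' => h h'.symm))))
        · exact Or.inl (Or.inl (Or.inl (Or.inr (hsep _ fun h' => h h'.symm))))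
      · have q0 : ζ a ∉ B := fun h => haQ ((memQ a ha1 ha2).1 (hB h)).2
        have q1 := hu'.resolve_right q0
        have haA := ((memA a ha1 ha2).1 q1.1).2
        by_cases hbA : b ≤ y
        · have q2 := (memA b hb1 hb2).2 ⟨by omega, hbA⟩
          have q3 : ζ b ∈ C := by
            by_contra h
            exact hv' (Or.inl ⟨q2, h⟩)
          exact Or.inl (Or.inr (mk_mem_cutE ha q1.1 q2 fun h => q1.2 (h.2 q3)))
        · rcases hζ.sep x₁ a y b ha1 haA (by omega) hb2 with h | h
          · exact Or.inl (Or.inl (Or.inl (Or.inl (hsep _ h))))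
          · exact Or.inl (Or.inl (Or.inr (hsep _ h)))
  have c1 := hK x₁ (by tauto)
  have c2 := hK x₂ (by tauto)
  have c3 := hK y (by tauto)
  have l0 := Finset.card_le_card hsub
  have l1 := Finset.card_union_le ((cutE G Finset.univ (L x₁) ∪ cutE G Finset.univ (L x₂)) ∪
      cutE G Finset.univ (L y) ∪ cutE G A C) (cutE G Q B)
  have l2 := Finset.card_union_le ((cutE G Finset.univ (L x₁) ∪ cutE G Finset.univ (L x₂)) ∪
      cutE G Finset.univ (L y)) (cutE G A C)
  have l3 := Finset.card_union_le (cutE G Finset.univ (L x₁) ∪ cutE G Finset.univ (L x₂))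
      (cutE G Finset.univ (L y))
  have l4 := Finset.card_union_le (cutE G Finset.univ (L x₁)) (cutE G Finset.univ (L x₂))
  simp only [hL] at *
  omega

end IsCircular

end Circle

/-! ### The doubling argument -/

section Doubling

variable {V : Type*} [Fintype V] {G : SimpleGraph V}

/-- `G[Z]` has cuts of every size `m ≤ |Z|` with at most `8 K |Z| / |R ∩ Z|` edges. The bound is
multiplied by `|R ∩ Z|`, so that it stays within `ℕ`. -/
def GoodCuts (G : SimpleGraph V) (R : Set V) (K : ℕ) (Z : Finset V) : Prop :=
  ∀ m ≤ Z.card, ∃ B ⊆ Z, B.card = m ∧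
    (cutE G Z B).card * (Z.filter (· ∈ R)).card ≤ 8 * Z.card * K

set_option maxHeartbeats 1000000 in
/-- One doubling step. Shifting the dense run of `exists_dense_run` back by `m` gives an arc
`(x₁, x₂]` whose proportion of vertices of `R` is at least doubled, next to an arc `(x₂, y]` of
size slightly more than `m`. The surplus is corrected roughly by `HasHalfCuts` and exactly by
recursion in the dense arc. -/
lemma doubling_step {κ : V → ℕ} {R : Set V} {K : ℕ} (hG : HasHalfCuts G K)
    (hbd : ∀ x ∈ R, (cutE G Finset.univ (Finset.univ.filter fun v => κ v ≤ κ x)).card ≤ K)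
    {Z : Finset V} {N : ℕ} (hZ : Z.card = N) (hN : 0 < N)
    (ih : ∀ Q : Finset V, Q.card < N → 1 ≤ (Q.filter (· ∈ R)).card → GoodCuts G R K Q)
    {ζ : ℤ → V} (hζ : IsCircular κ Z ζ) {m ℓ : ℕ} (hmN : m ≤ N) {y₀ : ℤ} (hy₀ : ζ y₀ ∈ R)
    (hℓ : ((Finset.Ico y₀ (y₀ + N)).filter fun c => ζ c ∈ R).card = ℓ)
    (hne : ∀ x, ζ x ∈ R → ζ (x + m) ∉ R)
    (hU : 2 * ((Finset.Ico y₀ (y₀ + N)).filter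
      fun c => Nearer (fun c => ζ c ∈ R) (c - m) c).card ≤ N) :
    ∃ B ⊆ Z, B.card = m ∧ (cutE G Z B).card * ℓ ≤ 8 * N * K := by
  have hper : ∀ c, ζ (c + N) = ζ c := hZ ▸ hζ.periodic
  obtain ⟨y, b₁, b₂, hpy, hp1, hp2, hb12, hb2y, hgap, hdense⟩ :=
    exists_dense_run (fun c => ζ c ∈ R) N m ℓ (fun c => by simp only [hper]) y₀ hy₀ hℓ hN hne hU
  obtain ⟨q, hq⟩ : ∃ q : ℕ, b₂ = b₁ + q := ⟨(b₂ - b₁).toNat, by omega⟩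
  obtain ⟨e, he⟩ : ∃ e : ℕ, y = b₂ + e := ⟨(y - b₂).toNat, by omega⟩
  have hyN : y ≤ b₁ - m + N := by
    by_contra h
    refine hgap (b₁ - m + N) (by omega) (by omega) ?_
    simpa only [hper] using hp1
  obtain ⟨r, hr⟩ : ∃ r, ((Finset.Icc b₁ b₂).filter fun c => ζ (c - m) ∈ R).card = r + 1 := by
    refine Nat.exists_eq_add_one_of_ne_zero fun h => ?_
    rw [Finset.card_eq_zero] at h
    have : b₁ ∈ ((Finset.Icc b₁ b₂).filter fun c => ζ (c - m) ∈ R) := by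
      simp [hb12, hp1]
    simp [h] at this
  have hdense' : 2 * ℓ * (q + e) ≤ (r + 1) * N := by
    rw [hr, he, hq, show b₁ + (q : ℤ) + e - b₁ = ((q + e : ℕ) : ℤ) by push_cast; ring] at hdense
    exact_mod_cast hdense
  have hrq : r ≤ q := by
    have := Finset.card_filter_le (Finset.Icc b₁ b₂) fun c => ζ (c - m) ∈ R
    rw [hr, Int.card_Icc] at this
    omega
  have hℓN : 2 * ℓ ≤ N := by
    refine Nat.le_of_mul_le_mul_right (hdense'.trans (?_ : _ ≤ N * (q + e))) (by omega)
    rw [mul_comm]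
    exact Nat.mul_le_mul_left _ (by omega)
  set x₁ := b₁ - (m : ℤ) with hx₁
  set x₂ := b₂ - (m : ℤ) with hx₂
  set A := (Finset.Ioc x₂ y).image ζ with hA
  have hAcard : A.card = m + e := by
    rw [hA, hζ.card_arc (by omega)]
    omega
  have hK : ∀ x, x = x₁ ∨ x = x₂ ∨ x = y →
      (cutE G Finset.univ (Finset.univ.filter fun v => κ v ≤ κ (ζ x))).card ≤ K := by
    rintro x (rfl | rfl | rfl)
    · exact hbd _ hp1
    · exact hbd _ hp2
    · exact hbd _ hpy
  have hAZ : A ⊆ Z := hζ.arc_subset _ _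
  rcases le_or_gt (2 * ℓ * e) N with hcase | hcase
  · -- The surplus `e` is at most `N / (2 ℓ)`, so that `e` half cuts remove it exactly.
    obtain ⟨C, hCA, hC1, hC2, hC3⟩ := hG.approx e A e (by omega)
    have hCe : C.card = e := by
      by_contra h
      have h1 : 1 * 2 ^ e ≤ (e - C.card) * 2 ^ e := Nat.mul_le_mul_right _ (by omega)
      have h2 : e < 2 ^ e := Nat.lt_two_pow_self
      omega
    have h := hζ.card_cutE_arcs (x₁ := x₂) (x₂ := x₂) (y := y) (G := G) (K := K) (B := ∅)
      le_rfl (by omega) (by omega) (fun x hx => hK x (by tauto)) hCA (by simp)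
    refine ⟨(A \ C) ∪ ∅, Finset.union_subset (Finset.sdiff_subset.trans hAZ)
      (Finset.empty_subset _), ?_, ?_⟩
    · rw [h.1]
      simp
      omega
    · have h2 := h.2
      have h3 : (cutE G ((Finset.Ioc x₂ x₂).image ζ) ∅).card = 0 := by simp [cutE]
      rw [h3, ← hA] at h2
      calc _ ≤ (3 * K + e * K) * ℓ := Nat.mul_le_mul_right _ (by omega)
        _ = (3 * ℓ + ℓ * e) * K := by ring
        _ ≤ _ := Nat.mul_le_mul_right _ (by linarith)
  · set Q := (Finset.Ioc x₁ x₂).image ζ with hQ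
    have hQcard : Q.card = q := by
      rw [hQ, hζ.card_arc (by omega)]
      omega
    have hqr : 2 * ℓ * q ≤ r * N := by linarith
    have hr1 : 1 ≤ r := by
      rcases Nat.eq_zero_or_pos r with rfl | h
      · linarith [Nat.zero_le (ℓ * q)]
      · exact h
    have hQR : (Q.filter (· ∈ R)).card = r := by
      rw [hQ, hζ.card_filter_arc (by omega)]
      have h1 : ((Finset.Ioc x₁ x₂).filter fun c => ζ c ∈ R).card =
          ((Finset.Ioc b₁ b₂).filter fun c => ζ (c - m) ∈ R).card := by
        refine Finset.card_bij (fun c _ => c + m) ?_ ?_ ?_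
        · intro c hc
          simp only [Finset.mem_filter, Finset.mem_Ioc, add_sub_cancel_right] at hc ⊢
          exact ⟨by omega, hc.2⟩
        · intro c _ c' _ h
          simpa using h
        · intro c hc
          simp only [Finset.mem_filter, Finset.mem_Ioc] at hc
          refine ⟨c - m, ?_, by ring⟩
          simp only [Finset.mem_filter, Finset.mem_Ioc]
          exact ⟨by omega, hc.2⟩
      have h2 : Finset.Icc b₁ b₂ = insert b₁ (Finset.Ioc b₁ b₂) := by
        ext c; simp only [Finset.mem_insert, Finset.mem_Icc, Finset.mem_Ioc]; omega
      rw [h2, Finset.filter_insert, if_pos hp1, Finset.card_insert_of_notMem (by simp)] at hr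
      omega
    have hℓ1 : 1 ≤ ℓ := by
      rcases Nat.eq_zero_or_pos ℓ with rfl | h
      · simp at hcase
      · exact h
    obtain ⟨j, hj⟩ : ∃ j, j = N / ℓ + 1 := ⟨_, rfl⟩
    have hj1 : N ≤ j * ℓ := by
      have h1 := Nat.div_add_mod' N ℓ
      have h2 := Nat.mod_lt N hℓ1
      rw [hj, add_one_mul]; omega
    have hj2 : j * ℓ ≤ N + ℓ := by
      have := Nat.div_mul_le_self N ℓ
      rw [hj, add_one_mul]; omega
    have hj3 : q + e ≤ 2 ^ j * q := by
      refine Nat.le_of_mul_le_mul_left (?_ : ℓ * (q + e) ≤ _) hℓ1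
      have h1 : ℓ * (q + e) ≤ q * N := by
        have : (r + 1) * N ≤ 2 * q * N := Nat.mul_le_mul_right _ (by omega)
        linarith
      have h2 : j ≤ 2 ^ j := Nat.lt_two_pow_self.le
      calc _ ≤ q * N := h1
        _ ≤ q * (j * ℓ) := Nat.mul_le_mul_left _ hj1
        _ ≤ q * (2 ^ j * ℓ) := Nat.mul_le_mul_left _ (Nat.mul_le_mul_right _ h2)
        _ = _ := by ring
    obtain ⟨C, hCA, hC1, hC2, hC3⟩ : ∃ C ⊆ A, e ≤ C.card ∧ C.card ≤ q + e ∧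
        (cutE G A C).card ≤ j * K := by
      rcases le_or_gt (q + e) A.card with h | h
      · obtain ⟨C, h1, h2, h3, h4⟩ := hG.approx j A (q + e) h
        refine ⟨C, h1, ?_, h2, h4⟩
        have : q + e - C.card ≤ q := by
          refine Nat.le_of_mul_le_mul_right (h3.trans (hj3.trans_eq (mul_comm _ _))) ?_
          positivity
        omega
      · refine ⟨A, subset_rfl, by omega, by omega, ?_⟩
        have h0 : cutE G A A = ∅ := by
          ext s
          rw [mem_cutE]
          simp only [Finset.notMem_empty, iff_false]
          rintro ⟨u, v, _, _, hv, _, hv', _⟩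
          exact hv' hv
        simp [h0]
    obtain ⟨B, hBQ, hBcard, hBcut⟩ := ih Q (by omega) (by omega) (C.card - e) (by omega)
    have h := hζ.card_cutE_arcs (x₁ := x₁) (x₂ := x₂) (y := y) (G := G) (K := K) (B := B)
      (by omega) (by omega) (by omega) hK hCA hBQ
    refine ⟨(A \ C) ∪ B, Finset.union_subset (Finset.sdiff_subset.trans hAZ)
      (hBQ.trans (hζ.arc_subset _ _)), ?_, ?_⟩
    · have := Finset.card_le_card hCA
      rw [h.1]
      omega
    · have h2 := h.2
      rw [hQR, hQcard] at hBcut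
      rw [← hA, ← hQ] at h2
      have hcQ : (cutE G Q B).card * ℓ ≤ 4 * N * K := by
        refine Nat.le_of_mul_le_mul_right (?_ : _ * r ≤ _) hr1
        calc _ = ((cutE G Q B).card * r) * ℓ := by ring
          _ ≤ (8 * q * K) * ℓ := Nat.mul_le_mul_right _ hBcut
          _ = 4 * K * (2 * ℓ * q) := by ring
          _ ≤ 4 * K * (r * N) := Nat.mul_le_mul_left _ hqr
          _ = _ := by ring
      calc _ ≤ (3 * K + j * K + (cutE G Q B).card) * ℓ := Nat.mul_le_mul_right _ (by omega)
        _ = (3 * ℓ + j * ℓ) * K + (cutE G Q B).card * ℓ := by ring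
        _ ≤ (4 * N) * K + 4 * N * K := add_le_add (Nat.mul_le_mul_right _ (by omega)) hcQ
        _ = _ := by ring

/-- If every linear cut of the ranking `κ` right after a vertex of `R` has at most `K` edges, then
`G[Z]` has cuts of every size with `O(K |Z| / |R ∩ Z|)` edges. -/
lemma goodCuts {κ : V → ℕ} (hκ : Function.Injective κ) {R : Set V} {K : ℕ}
    (hG : HasHalfCuts G K)
    (hbd : ∀ x ∈ R, (cutE G Finset.univ (Finset.univ.filter fun v => κ v ≤ κ x)).card ≤ K)
    (Z : Finset V) (hZR : 1 ≤ (Z.filter (· ∈ R)).card) : GoodCuts G R K Z := by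
  obtain ⟨N, hN⟩ : ∃ N, Z.card = N := ⟨_, rfl⟩
  induction N using Nat.strong_induction_on generalizing Z with
  | _ N ih =>
  intro m hm
  obtain ⟨ℓ, hℓ⟩ : ∃ ℓ, (Z.filter (· ∈ R)).card = ℓ := ⟨_, rfl⟩
  rw [hN] at hm ⊢
  rw [hℓ] at hZR ⊢
  have hℓN : ℓ ≤ N := by
    rw [← hℓ, ← hN]; exact Finset.card_filter_le _ _
  have hN0 : 0 < N := by omega
  obtain ⟨ζ, hζ⟩ := exists_isCircular hκ Z (by omega)
  have hper : ∀ c, ζ (c + N) = ζ c := hN ▸ hζ.periodic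
  by_cases hco : ∃ x, ζ x ∈ R ∧ ζ (x + m) ∈ R
  · obtain ⟨x, hx1, hx2⟩ := hco
    have h := hζ.card_cutE_arcs (x₁ := x) (x₂ := x) (y := x + m) (G := G) (K := K) (B := ∅)
      (C := ∅) le_rfl (by omega) (by omega) (by
        rintro z (rfl | rfl | rfl)
        · exact hbd _ hx1
        · exact hbd _ hx1
        · exact hbd _ hx2) (by simp) (by simp)
    refine ⟨((Finset.Ioc x (x + m)).image ζ \ ∅) ∪ ∅,
      Finset.union_subset (Finset.sdiff_subset.trans (hζ.arc_subset _ _))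
      (Finset.empty_subset _), by rw [h.1]; simp, ?_⟩
    have h3 : ∀ W, (cutE G W ∅).card = 0 := by simp [cutE]
    have h2 := h.2
    rw [h3, h3] at h2
    calc _ ≤ (3 * K) * ℓ := Nat.mul_le_mul_right _ h2
      _ = (3 * ℓ) * K := by ring
      _ ≤ _ := Nat.mul_le_mul_right _ (by omega)
  · push Not at hco
    obtain ⟨v, hv⟩ : ∃ v, v ∈ Z.filter (· ∈ R) := Finset.card_pos.1 (by omega)
    rw [Finset.mem_filter] at hv
    obtain ⟨y₀, -, -, rfl⟩ := hζ.surj v hv.1 0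
    have hcount : ((Finset.Ico y₀ (y₀ + N)).filter fun c => ζ c ∈ R).card = ℓ := by
      have h1 : Finset.Ico y₀ (y₀ + N) = Finset.Ioc (y₀ - 1) (y₀ - 1 + N) := by
        ext c; simp only [Finset.mem_Ico, Finset.mem_Ioc]; omega
      rw [h1, ← hζ.card_filter_arc (by omega) (· ∈ R), ← hℓ]
      congr 2
      refine Finset.eq_of_subset_of_card_le (hζ.arc_subset _ _) ?_
      rw [hζ.card_arc (by omega)]
      omega
    have ih' : ∀ Q : Finset V, Q.card < N → 1 ≤ (Q.filter (· ∈ R)).card → GoodCuts G R K Q :=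
      fun Q hQ h => ih _ hQ Q h rfl
    rcases half_period (fun c => ζ c ∈ R) N m hm (fun c => by simp only [hper]) y₀ with hU | hU
    · exact doubling_step hG hbd hN hN0 ih' hζ hm hv.2 hcount hco hU
    · obtain ⟨B, hBZ, hB, hcut⟩ := doubling_step (m := N - m) hG hbd hN hN0 ih' hζ (by omega) hv.2
        hcount (fun x hx hx' => by
          refine hco _ hx' ?_
          rwa [add_assoc, show (((N - m : ℕ) : ℤ) + m) = N by omega, hper]) hU
      refine ⟨Z \ B, Finset.sdiff_subset, ?_, ?_⟩
      · rw [Finset.card_sdiff_of_subset hBZ]; omega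
      · rwa [cutE_sdiff_self]

end Doubling

/-! ### Half cuts from a tree decomposition -/

section Descendants

variable {V ι : Type*} {G : SimpleGraph V} {T : SimpleGraph ι} {X : ι → Finset V}

/-- The descendants of `i` in the tree `T` rooted at `r`: the nodes that cannot be reached from
the root without passing `i`. -/
def desc (T : SimpleGraph ι) (r i : ι) : Set ι := {j | ∀ w : T.Walk r j, i ∈ w.support}

lemma mem_desc_self (r i : ι) : i ∈ desc T r i := fun w => w.end_mem_support

lemma mem_desc_root (r j : ι) : j ∈ desc T r r := fun w => w.start_mem_support

lemma desc_subset {r i i' : ι} (h : i ∈ desc T r i') : desc T r i ⊆ desc T r i' :=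
  fun _ hj w => w.support_takeUntil_subset_support (hj w) (h (w.takeUntil i (hj w)))

lemma mem_support_of_mem_desc {r i j j' : ι} (hj : j ∈ desc T r i) (hj' : j' ∉ desc T r i)
    (q : T.Walk j' j) : i ∈ q.support := by
  simp only [desc, Set.mem_ofPred_eq, not_forall] at hj'
  obtain ⟨w, hw⟩ := hj'
  have := hj (w.append q)
  rw [SimpleGraph.Walk.mem_support_append_iff] at this
  exact this.resolve_left hw

lemma path_edges_subset (hT : T.IsTree) {i j : ι} {p : T.Walk i j} (hp : p.IsPath)
    (w : T.Walk i j) : p.edges ⊆ w.edges := by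
  have : w.bypass = p := congrArg Subtype.val
    ((hT.isAcyclic.subsingleton_path i j).elim ⟨w.bypass, w.bypass_isPath⟩ ⟨p, hp⟩)
  rw [← this]
  exact w.edges_bypass_subset_edges

lemma path_support_subset (hT : T.IsTree) {i j : ι} {p : T.Walk i j} (hp : p.IsPath)
    (w : T.Walk i j) : p.support ⊆ w.support := by
  have : w.bypass = p := congrArg Subtype.val
    ((hT.isAcyclic.subsingleton_path i j).elim ⟨w.bypass, w.bypass_isPath⟩ ⟨p, hp⟩)
  rw [← this]
  exact w.support_bypass_subset_support

/-- The child `s` of `c` on the way from `c` to its proper descendant `j`: the tree edge `cs`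
separates the descendants of `s` from all other nodes. -/
lemma exists_child (hT : T.IsTree) {r c j : ι} (hj : j ∈ desc T r c) (hjc : j ≠ c) :
    ∃ s, j ∈ desc T r s ∧ desc T r s ⊆ desc T r c ∧ c ∉ desc T r s ∧
      ∀ k ∈ desc T r s, ∀ k' ∉ desc T r s, ∀ q : T.Walk k' k, c ∈ q.support := by
  obtain ⟨p, hp⟩ := (hT.connected.preconnected r j).exists_isPath
  obtain ⟨p₁, p₂, rfl⟩ := SimpleGraph.Walk.mem_support_iff_exists_append.1 (hj p)
  cases p₂ with
  | nil => exact absurd rfl hjc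
  | @cons _ s _ hcs p₂ =>
  have hcp₂ : c ∉ p₂.support := ((SimpleGraph.Walk.cons_isPath_iff _ _).1 hp.of_append_right).2
  have hsp₁ : s ∉ p₁.support := by
    intro h
    have hnd := hp.support_nodup
    rw [SimpleGraph.Walk.support_append] at hnd
    exact (List.disjoint_of_nodup_append hnd) h (by simp)
  have hedge : ∀ w : T.Walk r j, s(c, s) ∈ w.edges := by
    intro w
    apply path_edges_subset hT hp w
    simp
  have hedge' : ∀ k ∈ desc T r s, ∀ w : T.Walk r k, s(c, s) ∈ w.edges := by
    intro k hk w
    have h1 := hedge ((w.takeUntil s (hk w)).append p₂)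
    rw [SimpleGraph.Walk.edges_append, List.mem_append] at h1
    rcases h1 with h1 | h1
    · exact w.edges_takeUntil_subset_edges (hk w) h1
    · exact absurd (p₂.fst_mem_support_of_mem_edges h1) hcp₂
  refine ⟨s, fun w => w.snd_mem_support_of_mem_edges (hedge w),
    fun k hk w => w.fst_mem_support_of_mem_edges (hedge' k hk w), fun h => hsp₁ (h p₁), ?_⟩
  intro k hk k' hk' q
  simp only [desc, Set.mem_ofPred_eq, not_forall] at hk'
  obtain ⟨w, hw⟩ := hk'
  have h1 := hedge' k hk (w.append q)
  rw [SimpleGraph.Walk.edges_append, List.mem_append] at h1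
  rcases h1 with h1 | h1
  · exact absurd (w.snd_mem_support_of_mem_edges h1) hw
  · exact q.fst_mem_support_of_mem_edges h1

lemma IsTreeDecomp.mem_of_separates (hTD : IsTreeDecomp G T X) {i j j' : ι}
    (h : ∀ q : T.Walk j' j, i ∈ q.support) {v : V} (hv : v ∈ X j) (hv' : v ∈ X j') : v ∈ X i := by
  obtain ⟨p, hp⟩ := (hTD.isTree.connected.preconnected j' j).exists_isPath
  exact hTD.inter_subset p hp i (h p) (Finset.mem_inter.2 ⟨hv', hv⟩)

/-- Rooting the tree and descending to a lowest node `c` whose descendants still carry `u` vertices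
of `A`, unions of pieces of `A - X c` and of vertices of `X c` reach the size `u` up to a factor
two, and every edge leaving such a union meets the cluster `X c`. -/
lemma IsTreeDecomp.hasHalfCuts [Fintype V] [Fintype ι] (hTD : IsTreeDecomp G T X) {t : ℕ}
    (ht : ∀ i, (X i).card ≤ t) : HasHalfCuts G (t * maxDeg G) := by
  intro A u hu
  obtain ⟨r⟩ := hTD.isTree.connected.nonempty
  let VD : ι → Finset V := fun i => A.filter fun v => ∃ j ∈ desc T r i, v ∈ X j
  obtain ⟨c, hc, hmin⟩ := Finset.exists_min_image
    (Finset.univ.filter fun i => u ≤ (VD i).card) (fun i => (desc T r i).ncard) (by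
      refine ⟨r, ?_⟩
      have : VD r = A := Finset.filter_true_of_mem fun v _ => by
        obtain ⟨j, hj⟩ := hTD.mem_cluster v
        exact ⟨j, mem_desc_root r j, hj⟩
      simpa [this] using hu)
  simp only [Finset.mem_filter, Finset.mem_univ, true_and] at hc hmin
  let Closed : Finset V → Prop := fun C =>
    ∀ x y, G.Adj x y → x ∈ C → y ∈ A → y ∉ C → x ∈ X c ∨ y ∈ X c
  have hunion : ∀ C C', Closed C → Closed C' → Closed (C ∪ C') := by
    intro C C' h h' x y hxy hx hy hy'
    rw [Finset.mem_union, not_or] at hy'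
    rcases Finset.mem_union.1 hx with hx | hx
    · exact h x y hxy hx hy hy'.1
    · exact h' x y hxy hx hy hy'.2
  obtain ⟨C, hC, hmax⟩ := Finset.exists_max_image
    (A.powerset.filter fun C => C.card ≤ u ∧ Closed C) Finset.card
    ⟨∅, by simp [Closed]⟩
  simp only [Finset.mem_filter, Finset.mem_powerset] at hC hmax
  obtain ⟨hCA, hCu, hCc⟩ := hC
  refine ⟨C, hCA, hCu, ?_, ?_⟩
  · by_contra hlt
    push Not at hlt
    obtain ⟨v, hv, hvC⟩ : ∃ v ∈ VD c, v ∉ C := by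
      by_contra! h
      have := Finset.card_le_card (show VD c ⊆ C from h)
      omega
    obtain ⟨hvA, j, hj, hvj⟩ := Finset.mem_filter.1 hv
    have hins : (insert v C).card = C.card + 1 := Finset.card_insert_of_notMem hvC
    by_cases hvc : v ∈ X c
    · have := hmax (insert v C) ⟨Finset.insert_subset hvA hCA, by omega, by
        intro x y hxy hx hy hy'
        rw [Finset.mem_insert, not_or] at hy'
        rcases Finset.mem_insert.1 hx with rfl | hx
        · exact Or.inl hvc
        · exact hCc x y hxy hx hy hy'.2⟩
      omega
    · obtain ⟨s, hjs, hsc, hcs, hsep⟩ := exists_child hTD.isTree hj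
        (by rintro rfl; exact hvc hvj)
      have hs : (VD s).card < u := by
        by_contra! h
        have h1 := hmin s h
        have h2 : (desc T r s).ncard < (desc T r c).ncard :=
          Set.ncard_lt_ncard ⟨hsc, fun h => hcs (h (mem_desc_self r c))⟩ (Set.toFinite _)
        omega
      let W : Finset V := VD s \ X c
      have hWs : W.card ≤ (VD s).card := Finset.card_le_card Finset.sdiff_subset
      have hWA : W ⊆ A := Finset.sdiff_subset.trans (Finset.filter_subset _ _)
      have hWc : Closed W := by
        intro x y hxy hx hy hy'
        right
        by_contra hyc
        obtain ⟨hx1, hxc⟩ := Finset.mem_sdiff.1 hx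
        obtain ⟨-, k₀, hk₀, hxk₀⟩ := Finset.mem_filter.1 hx1
        obtain ⟨k, hxk, hyk⟩ := hTD.edge_cluster hxy
        by_cases hk : k ∈ desc T r s
        · exact hy' (Finset.mem_sdiff.2 ⟨Finset.mem_filter.2 ⟨hy, k, hk, hyk⟩, hyc⟩)
        · exact hxc (hTD.mem_of_separates (hsep k₀ hk₀ k hk) hxk₀ hxk)
      have hvW : v ∈ W := Finset.mem_sdiff.2 ⟨Finset.mem_filter.2 ⟨hvA, j, hjs, hvj⟩, hvc⟩
      rcases le_or_gt u (2 * W.card) with h | h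
      · have := hmax W ⟨hWA, by omega, hWc⟩
        omega
      · have h1 := Finset.card_union_le C W
        have h2 := hmax (C ∪ W) ⟨Finset.union_subset hCA hWA, by omega, hunion _ _ hCc hWc⟩
        have h3 : (insert v C).card ≤ (C ∪ W).card := Finset.card_le_card
          (Finset.insert_subset (Finset.mem_union_right _ hvW) Finset.subset_union_left)
        omega
  · exact (card_cutE_le_of_cover fun x y hxy _ hy hx hy' => hCc x y hxy hx hy hy').trans
      (Nat.mul_le_mul_right _ (ht c))

end Descendants

/-! ### The linear order of a heaviest path -/

section Order

variable {V ι : Type*} {G : SimpleGraph V} {T : SimpleGraph ι} {X : ι → Finset V}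

lemma getVert_mem_desc (hT : T.IsTree) {r e : ι} {p : T.Walk r e} (hp : p.IsPath) {k l : ℕ}
    (hkl : k ≤ l) : p.getVert l ∈ desc T r (p.getVert k) := by
  intro w
  apply path_support_subset hT (hp.take l) w
  have h : (p.take l).getVert k = p.getVert k := by
    rw [SimpleGraph.Walk.take_getVert, min_eq_right hkl]
  rw [← h]
  exact SimpleGraph.Walk.getVert_mem_support _ _

lemma getVert_notMem_desc {r e : ι} {p : T.Walk r e} (hp : p.IsPath) {k l : ℕ}
    (hkl : k < l) (hl : l ≤ p.length) : p.getVert k ∉ desc T r (p.getVert l) := by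
  intro h
  obtain ⟨i, hi, -⟩ := SimpleGraph.Walk.mem_support_iff_exists_getVert.1 (h (p.take k))
  rw [SimpleGraph.Walk.take_getVert] at hi
  have := hp.getVert_injOn (by simp only [Set.mem_ofPred_eq]; omega) (by simpa using hl) hi
  omega

/-- Rank the vertices by the last node `p_k` of the path `p` whose descendants carry them, deep
nodes first, and among the vertices of equal depth put those in clusters of `p` last. Then the
edges of the cut after a vertex in a cluster of `p` all meet a single cluster. -/
lemma IsTreeDecomp.exists_ranking [Fintype V] (hTD : IsTreeDecomp G T X) {t : ℕ}
    (ht : ∀ i, (X i).card ≤ t) {r e : ι} {p : T.Walk r e} (hp : p.IsPath) :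
    ∃ κ : V → ℕ, Function.Injective κ ∧ ∀ x, (∃ i ∈ p.support, x ∈ X i) →
      (cutE G Finset.univ (Finset.univ.filter fun v => κ v ≤ κ x)).card ≤ t * maxDeg G := by
  let A : V → ℕ → Prop := fun v k => ∃ j ∈ desc T r (p.getVert k), v ∈ X j
  have hA0 : ∀ v, A v 0 := fun v => by
    obtain ⟨j, hj⟩ := hTD.mem_cluster v
    refine ⟨j, ?_, hj⟩
    rw [SimpleGraph.Walk.getVert_zero]
    exact mem_desc_root r j
  have hanti : ∀ v k l, k ≤ l → A v l → A v k := by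
    rintro v k l hkl ⟨j, hj, hvj⟩
    exact ⟨j, desc_subset (getVert_mem_desc hTD.isTree hp hkl) hj, hvj⟩
  let h : V → ℕ := fun v => Nat.findGreatest (A v) p.length
  have hL : ∀ v, h v ≤ p.length := fun v => Nat.findGreatest_le _
  have hA : ∀ v, A v (h v) := fun v =>
    Nat.findGreatest_spec (P := A v) (Nat.zero_le _) (hA0 v)
  have hAlt : ∀ v k, h v < k → k ≤ p.length → ¬ A v k := fun v k h1 h2 =>
    Nat.findGreatest_is_greatest h1 h2
  have hR : ∀ x, (∃ i ∈ p.support, x ∈ X i) → x ∈ X (p.getVert (h x)) := by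
    rintro x ⟨i, hi, hx⟩
    obtain ⟨k, rfl, hk⟩ := SimpleGraph.Walk.mem_support_iff_exists_getVert.1 hi
    have hkh : k ≤ h x := by
      by_contra! hlt
      exact hAlt x k hlt hk ⟨_, mem_desc_self _ _, hx⟩
    rcases hkh.eq_or_lt with rfl | hlt
    · exact hx
    · obtain ⟨j, hj, hxj⟩ := hA x
      exact hTD.mem_of_separates
        (mem_support_of_mem_desc hj (getVert_notMem_desc hp hlt (hL x))) hxj hx
  let key : V → ℕ := fun v => 2 * (p.length - h v) + if ∃ i ∈ p.support, v ∈ X i then 1 else 0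
  let idx := Fintype.equivFin V
  let κ : V → ℕ := fun v => (idx v : ℕ) + Fintype.card V * key v
  have hκkey : ∀ u v, κ u ≤ κ v → key u ≤ key v := by
    intro u v huv
    by_contra! hlt
    have h1 : Fintype.card V * (key v + 1) ≤ Fintype.card V * key u := Nat.mul_le_mul_left _ hlt
    have h2 := (idx v).2
    simp only [κ] at huv
    rw [mul_add, mul_one] at h1
    omega
  refine ⟨κ, ?_, ?_⟩
  · intro u v huv
    have h1 := congrArg (· % Fintype.card V) huv
    simp only [κ, Nat.add_mul_mod_self_left, Nat.mod_eq_of_lt (idx _).2] at h1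
    exact idx.injective (Fin.ext h1)
  · intro x hx
    refine (card_cutE_le_of_cover (Y := X (p.getVert (h x))) ?_).trans
      (Nat.mul_le_mul_right _ (ht _))
    intro u v huv _ _ hu hv
    simp only [Finset.mem_filter, Finset.mem_univ, true_and, not_le] at hu hv
    have k1 := hκkey _ _ hu
    have k2 := hκkey _ _ hv.le
    have hLu := hL u
    have hLv := hL v
    have hLx := hL x
    simp only [key, if_pos hx] at k1 k2
    have hux : h x ≤ h u := by omega
    by_cases hvx : h x ≤ h v
    · right
      by_cases hvR : ∃ i ∈ p.support, v ∈ X i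
      · rw [if_pos hvR] at k2
        rw [show h x = h v by omega]
        exact hR v hvR
      · rw [if_neg hvR] at k2
        omega
    · left
      obtain ⟨j, hj, huj⟩ := hanti u _ _ hux (hA u)
      obtain ⟨k, huk, hvk⟩ := hTD.edge_cluster huv
      have hk : k ∉ desc T r (p.getVert (h x)) := fun hk =>
        hAlt v (h x) (by omega) hLx ⟨k, hk, hvk⟩
      exact hTD.mem_of_separates (mem_support_of_mem_desc hj hk) huj huk

lemma cutWidth_le_s3 [Fintype V] (B : Finset V) :
    cutWidth G B ≤ (cutE G Finset.univ B).card := by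
  unfold cutWidth
  rw [Nat.card_eq_fintype_card, Fintype.card_subtype]
  refine Finset.card_le_card fun e he => ?_
  obtain ⟨u, v, h1, h2, h3, rfl⟩ := (Finset.mem_filter.1 he).2
  exact mk_mem_cutE h1 (Finset.mem_univ _) (Finset.mem_univ _) (by tauto)

end Order

end MinBisection

/-- Every graph `G` that admits a tree decomposition `(T, X)` of width `t - 1`
satisfies `MinBis(G) ≤ 8 t Δ(G) / r(T,X)`. -/
theorem MinBisection.minBis_le_of_treeDecomp' {V ι : Type*} [Fintype V] [Fintype ι]
    (G : SimpleGraph V) (T : SimpleGraph ι) (X : ι → Finset V) (t : ℕ)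
    (hTD : IsTreeDecomp G T X) (hwidth : ∀ i, (X i).card ≤ t) :
    (minBis G : ℝ) ≤ 8 * t * maxDeg G / rTD T X := by
  obtain ⟨S, hS⟩ : ∃ S : Set ℕ,
      S = {w : ℕ | ∃ (i j : ι) (p : T.Walk i j), p.IsPath ∧ w = walkWeight X p} := ⟨_, rfl⟩
  have hbdd : BddAbove S := by
    refine ⟨Fintype.card V, ?_⟩
    rw [hS]
    rintro w ⟨i, j, p, -, rfl⟩
    exact Finset.card_le_univ _
  have hmem : ∀ (i j : ι) (p : T.Walk i j), p.IsPath → walkWeight X p ∈ S := by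
    intro i j p hp
    rw [hS]
    exact ⟨i, j, p, hp, rfl⟩
  have hrTD : rTD T X = ((sSup S : ℕ) : ℝ) / (Fintype.card V : ℝ) := by rw [hS]; rfl
  -- For empty `V` the relative weight is the junk value `0 / 0`, but the width is zero as well.
  rcases Nat.eq_zero_or_pos (Fintype.card V) with hn | hn
  · have : minBis G = 0 := by
      refine Nat.le_zero.1 (Nat.sInf_le ⟨∅, ?_, ?_⟩)
      · simp [IsBisection, hn]
      · simp [cutWidth]
    rw [this, Nat.cast_zero, hrTD]
    positivity
  obtain ⟨v₀⟩ := Fintype.card_pos_iff.1 hn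
  obtain ⟨i₀, hi₀⟩ := hTD.mem_cluster v₀
  have hne : S.Nonempty := ⟨_, hmem i₀ i₀ .nil .nil⟩
  have hsup : sSup S ∈ S := Nat.sSup_mem hne hbdd
  have hpos : 0 < sSup S := by
    refine lt_of_lt_of_le ?_ (le_csSup hbdd (hmem i₀ i₀ .nil .nil))
    exact Finset.card_pos.2 ⟨v₀, by simpa using hi₀⟩
  obtain ⟨r, e, p, hp, hw⟩ : ∃ (i j : ι) (p : T.Walk i j), p.IsPath ∧ sSup S = walkWeight X p := by
    rw [hS] at hsup ⊢
    exact hsup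
  obtain ⟨κ, hκ, hbd⟩ := hTD.exists_ranking hwidth hp
  obtain ⟨R, hR⟩ : ∃ R : Set V, ∀ x, x ∈ R ↔ ∃ i ∈ p.support, x ∈ X i := ⟨_, fun _ => Iff.rfl⟩
  have hRcard : (Finset.univ.filter (· ∈ R)).card = sSup S := by
    rw [hw, walkWeight]
    congr 1
    ext x
    simp [hR]
  obtain ⟨B, -, hB, hcut⟩ := goodCuts hκ (R := R)
    (hTD.hasHalfCuts hwidth) (fun x hx => hbd x ((hR x).1 hx)) Finset.univ (by omega) (Fintype.card V / 2)
    (by rw [Finset.card_univ]; omega)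
  rw [hRcard, Finset.card_univ] at hcut
  have hmin : minBis G ≤ (cutE G Finset.univ B).card := by
    have hmin' : minBis G ≤ cutWidth G B := by
      refine Nat.sInf_le ⟨B, ?_, rfl⟩
      unfold IsBisection
      rw [Finset.card_compl, hB]
      omega
    exact hmin'.trans (cutWidth_le_s3 B)
  have hfin : minBis G * sSup S ≤ 8 * t * maxDeg G * Fintype.card V :=
    (Nat.mul_le_mul_right _ hmin).trans (hcut.trans_eq (by ring))
  have hpos' : (0 : ℝ) < (sSup S : ℕ) := by exact_mod_cast hpos
  have hn' : (0 : ℝ) < Fintype.card V := by exact_mod_cast hn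
  rw [hrTD, le_div_iff₀ (by positivity), ← mul_div_assoc, div_le_iff₀ hn']
  exact_mod_cast hfin
end

section
/- For every forest G on n vertices with diam*(G) > 1/2 and every integer m with 1 ≤ m ≤ n, there is a cut (B,W) in G with |B| = m and e_G(B,W) ≤ 2. -/
/-!
The vertices of the forest can be arranged along a line, component by component, and inside each
component along a longest path, every vertex being placed together with the path vertex whose
hanging subtree contains it. The nonempty initial segments made of complete hanging subtrees
form a chain of nonempty vertex sets, each with at most one edge leaving it, and there are
`diam*(G) · n > n / 2` of them. Hence, with `S ⊆ {1, …, n}` the set of their sizes, `S` and its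
cyclic shift by `m` modulo `n` intersect. This gives two members `X`, `Y` of the chain with
`|Y| = |X| + m` or `|Y| + n = |X| + m`, and `Y \ X`, respectively the complement of `X \ Y`,
has exactly `m` elements and at most two edges leaving it.

`exists_chain_of_path` builds the part of the chain inside one component. Its members are the
sides of the bridges forming the path, and `side_subset_side` shows that they are nested.
`exists_chain_of_components` concatenates the chains of the components, and
`exists_shift` is the pigeonhole step.
-/

open scoped Classical

namespace MinBisection

section CutOfLargeDiam

variable {V : Type*}

/-! ### Boundaries of vertex sets -/

/-- The set of edges with one endpoint in `B` and the other outside of `B`. -/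
def boundary (G : SimpleGraph V) (B : Finset V) : Set (Sym2 V) :=
  {e | ∃ x y, G.Adj x y ∧ x ∈ B ∧ y ∉ B ∧ e = s(x, y)}

lemma cutWidth_eq_ncard (G : SimpleGraph V) (B : Finset V) :
    cutWidth G B = (boundary G B).ncard := rfl

lemma boundary_sdiff_subset (G : SimpleGraph V) (X Y : Finset V) :
    boundary G (Y \ X) ⊆ boundary G X ∪ boundary G Y := by
  rintro e ⟨x, y, hxy, hx, hy, rfl⟩
  simp only [Finset.mem_sdiff, not_and, not_not] at hx hy
  by_cases h : y ∈ Y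
  · exact Or.inl ⟨y, x, hxy.symm, hy h, hx.2, Sym2.eq_swap⟩
  · exact Or.inr ⟨x, y, hxy, hx.1, h, rfl⟩

variable [Fintype V]

lemma boundary_compl_subset (G : SimpleGraph V) (X : Finset V) :
    boundary G Xᶜ ⊆ boundary G X := by
  rintro e ⟨x, y, hxy, hx, hy, rfl⟩
  simp only [Finset.mem_compl, not_not] at hx hy
  exact ⟨y, x, hxy.symm, hy, hx, Sym2.eq_swap⟩

lemma cutWidth_le_two (G : SimpleGraph V) {B X Y : Finset V}
    (hX : cutWidth G X ≤ 1) (hY : cutWidth G Y ≤ 1)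
    (h : boundary G B ⊆ boundary G X ∪ boundary G Y) : cutWidth G B ≤ 2 := by
  rw [cutWidth_eq_ncard] at *
  have h1 := Set.ncard_le_ncard h (Set.toFinite _)
  have h2 := Set.ncard_union_le (boundary G X) (boundary G Y)
  omega

/-! ### Sides of bridges -/

/-- The side of the edge `uw` containing `w`: all vertices that can be reached from `w` without
using this edge. -/
noncomputable def side (G : SimpleGraph V) (u w : V) : Finset V :=
  Finset.univ.filter fun x => (G.deleteEdges {s(u, w)}).Reachable w x

lemma mem_side {G : SimpleGraph V} {u w x : V} :
    x ∈ side G u w ↔ (G.deleteEdges {s(u, w)}).Reachable w x := by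
  simp [side]

lemma self_mem_side (G : SimpleGraph V) (u w : V) : w ∈ side G u w :=
  mem_side.2 (SimpleGraph.Reachable.refl _)

/-- In a forest, every edge is a bridge. -/
lemma notMem_side {G : SimpleGraph V} (hF : G.IsAcyclic) {u w : V} (h : G.Adj u w) :
    u ∉ side G u w := by
  rw [mem_side]
  intro hr
  have := SimpleGraph.isAcyclic_iff_forall_adj_isBridge.1 hF h
  rw [SimpleGraph.isBridge_iff] at this
  exact this hr.symm

lemma cutWidth_side (G : SimpleGraph V) (u w : V) : cutWidth G (side G u w) ≤ 1 := by
  rw [cutWidth_eq_ncard]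
  refine (Set.ncard_le_ncard (t := {s(u, w)}) ?_ (Set.toFinite _)).trans
    (Set.ncard_singleton _).le
  rintro e ⟨x, y, hxy, hx, hy, rfl⟩
  rw [mem_side] at hx hy
  by_contra hne
  exact hy (hx.trans (SimpleGraph.Adj.reachable
    (SimpleGraph.deleteEdges_adj.2 ⟨hxy, hne⟩)))

/-- For consecutive edges `tu`, `uw` of a path in a forest, the far side of `uw` is contained in
the far side of `tu`: a walk from `w` avoiding the bridge `uw` never visits `u`, and so does not
use `tu` either. -/
lemma side_subset_side {G : SimpleGraph V} (hF : G.IsAcyclic) {t u w : V}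
    (huw : G.Adj u w) (htw : t ≠ w) : side G u w ⊆ side G t u := by
  intro x hx
  have key : ∀ x, (G.deleteEdges {s(u, w)}).Reachable w x →
      (G.deleteEdges {s(t, u)}).Reachable w x := by
    intro x hx
    rw [SimpleGraph.reachable_iff_reflTransGen] at hx
    induction hx with
    | refl => exact SimpleGraph.Reachable.refl _
    | @tail y z hy hyz ih =>
      rw [← SimpleGraph.reachable_iff_reflTransGen] at hy
      have hz := hy.trans hyz.reachable
      have hyu : y ≠ u := by
        rintro rfl
        exact notMem_side hF huw (mem_side.2 hy)
      have hzu : z ≠ u := by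
        rintro rfl
        exact notMem_side hF huw (mem_side.2 hz)
      refine ih.trans (SimpleGraph.Adj.reachable
        (SimpleGraph.deleteEdges_adj.2 ⟨(SimpleGraph.deleteEdges_adj.1 hyz).1, ?_⟩))
      simp only [Set.mem_singleton_iff, Sym2.eq_iff]
      tauto
  rw [mem_side] at *
  refine SimpleGraph.Reachable.trans (SimpleGraph.Adj.reachable
    (SimpleGraph.deleteEdges_adj.2 ⟨huw, ?_⟩)) (key x hx)
  have := huw.ne
  simp only [Set.mem_singleton_iff, Sym2.eq_iff]
  grind

/-! ### Unions of components -/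

/-- The vertices of `G` lying in one of the components in `s`. -/
noncomputable def compUnion (G : SimpleGraph V) (s : Finset G.ConnectedComponent) : Finset V :=
  Finset.univ.filter fun x => G.connectedComponentMk x ∈ s

lemma mem_compUnion {G : SimpleGraph V} {s : Finset G.ConnectedComponent} {x : V} :
    x ∈ compUnion G s ↔ G.connectedComponentMk x ∈ s := by
  simp [compUnion]

/-- Adding whole components to a set does not create new boundary edges. -/
lemma boundary_compUnion_union_subset (G : SimpleGraph V) (s : Finset G.ConnectedComponent)
    (A : Finset V) : boundary G (compUnion G s ∪ A) ⊆ boundary G A := by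
  rintro e ⟨x, y, hxy, hx, hy, rfl⟩
  rw [Finset.mem_union, mem_compUnion] at hx hy
  rw [SimpleGraph.ConnectedComponent.sound hxy.reachable] at hx
  push Not at hy
  exact ⟨x, y, hxy, hx.resolve_left hy.1, hy.2, rfl⟩

lemma cutWidth_compUnion_union (G : SimpleGraph V) (s : Finset G.ConnectedComponent)
    (A : Finset V) : cutWidth G (compUnion G s ∪ A) ≤ cutWidth G A :=
  Set.ncard_le_ncard (boundary_compUnion_union_subset G s A) (Set.toFinite _)

/-! ### Chains of sets with small boundary -/

/-- `F` is a chain of nonempty subsets of `U`, each with at most one edge leaving it. -/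
structure GoodChain (G : SimpleGraph V) (U : Finset V) (F : Finset (Finset V)) : Prop where
  chain : ∀ X ∈ F, ∀ Y ∈ F, X ⊆ Y ∨ Y ⊆ X
  nonempty : ∀ X ∈ F, X.Nonempty
  subset : ∀ X ∈ F, X ⊆ U
  width : ∀ X ∈ F, cutWidth G X ≤ 1

lemma GoodChain.insert_top {G : SimpleGraph V} {U T : Finset V} {F : Finset (Finset V)}
    (h : GoodChain G U F) (hT : T.Nonempty) (hTU : T ⊆ U) (hw : cutWidth G T ≤ 1)
    (hs : ∀ X ∈ F, X ⊆ T) : GoodChain G U (insert T F) where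
  chain := by
    intro X hX Y hY
    rw [Finset.mem_insert] at hX hY
    rcases hX with rfl | hX <;> rcases hY with rfl | hY
    · exact Or.inl subset_rfl
    · exact Or.inr (hs _ hY)
    · exact Or.inl (hs _ hX)
    · exact h.chain X hX Y hY
  nonempty := (Finset.forall_mem_insert _ _ _).2 ⟨hT, h.nonempty⟩
  subset := (Finset.forall_mem_insert _ _ _).2 ⟨hTU, h.subset⟩
  width := (Finset.forall_mem_insert _ _ _).2 ⟨hw, h.width⟩

lemma side_subset_compUnion (G : SimpleGraph V) {u w : V} :
    side G u w ⊆ compUnion G {G.connectedComponentMk w} := by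
  intro x hx
  rw [mem_side] at hx
  rw [mem_compUnion, Finset.mem_singleton]
  exact (SimpleGraph.ConnectedComponent.sound (hx.mono (SimpleGraph.deleteEdges_le _))).symm

/-- The far sides of the edges of a path starting at `u` form a good chain. The last clause
is what allows the path to be extended at `u`. -/
lemma exists_chain_of_path_aux {G : SimpleGraph V} (hF : G.IsAcyclic) {u v : V}
    (p : G.Walk u v) (hp : p.IsPath) :
    ∃ F : Finset (Finset V), F.card = p.length ∧
      GoodChain G (compUnion G {G.connectedComponentMk u}) F ∧
      ∀ X ∈ F, u ∉ X ∧ ∀ t, t ∉ p.support → X ⊆ side G t u := by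
  induction p with
  | nil => exact ⟨∅, by simp, ⟨by simp, by simp, by simp, by simp⟩, by simp⟩
  | @cons u w v h q ih =>
    rw [SimpleGraph.Walk.cons_isPath_iff] at hp
    obtain ⟨F, hcard, hgood, hext⟩ := ih hp.1
    have hsub : ∀ X ∈ F, X ⊆ side G u w := fun X hX => (hext X hX).2 u hp.2
    have hnot : side G u w ∉ F := fun hmem => (hext _ hmem).1 (self_mem_side G u w)
    rw [SimpleGraph.ConnectedComponent.sound h.reachable]
    refine ⟨insert (side G u w) F, ?_, hgood.insert_top ⟨w, self_mem_side G u w⟩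
      (side_subset_compUnion G) (cutWidth_side G u w) hsub, ?_⟩
    · rw [Finset.card_insert_of_notMem hnot, hcard, SimpleGraph.Walk.length_cons]
    · have hX : ∀ X ∈ insert (side G u w) F, X ⊆ side G u w :=
        (Finset.forall_mem_insert _ _ _).2 ⟨subset_rfl, hsub⟩
      refine fun X hXF => ⟨fun hu => notMem_side hF h (hX X hXF hu), fun t ht => ?_⟩
      refine (hX X hXF).trans (side_subset_side hF h ?_)
      rintro rfl
      exact ht (by simp)

/-- A path on `k` vertices yields a good chain of `k` subsets of its component: the sides of its
edges and the component itself. -/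
lemma exists_chain_of_path {G : SimpleGraph V} (hF : G.IsAcyclic) {u v : V}
    (p : G.Walk u v) (hp : p.IsPath) :
    ∃ F : Finset (Finset V), F.card = p.support.length ∧
      GoodChain G (compUnion G {G.connectedComponentMk u}) F := by
  obtain ⟨F, hcard, hgood, hext⟩ := exists_chain_of_path_aux hF p hp
  have hu : u ∈ compUnion G {G.connectedComponentMk u} := by simp [mem_compUnion]
  refine ⟨insert (compUnion G {G.connectedComponentMk u}) F, ?_,
    hgood.insert_top ⟨u, hu⟩ subset_rfl ?_ hgood.subset⟩
  · rw [Finset.card_insert_of_notMem fun hmem => (hext _ hmem).1 hu, hcard,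
      SimpleGraph.Walk.length_support]
  · have h := cutWidth_compUnion_union G {G.connectedComponentMk u} ∅
    have h0 : boundary G (∅ : Finset V) = ∅ := by simp [boundary]
    rw [Finset.union_empty, cutWidth_eq_ncard G ∅, h0, Set.ncard_empty] at h
    omega

/-- The supremum defining `compLongestPathCard` is attained. -/
lemma exists_path_of_component (G : SimpleGraph V) (c : G.ConnectedComponent) :
    ∃ (u v : V) (p : G.Walk u v), p.IsPath ∧ G.connectedComponentMk u = c ∧
      compLongestPathCard G c = p.support.length := by
  refine Nat.sSup_mem (s := {k | ∃ (u v : V) (p : G.Walk u v), p.IsPath ∧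
    G.connectedComponentMk u = c ∧ k = p.support.length}) ?_ ?_
  · obtain ⟨u, rfl⟩ := c.exists_rep
    exact ⟨_, u, u, .nil, .nil, rfl, rfl⟩
  · refine ⟨Fintype.card V, ?_⟩
    rintro k ⟨u, v, p, hp, -, rfl⟩
    exact hp.support_nodup.length_le_card

/-- Good chains of different components are concatenated by adding all earlier components to each
set of the later chain. -/
lemma exists_chain_of_components {G : SimpleGraph V} (hF : G.IsAcyclic)
    (s : Finset G.ConnectedComponent) :
    ∃ F : Finset (Finset V), F.card = ∑ c ∈ s, compLongestPathCard G c ∧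
      GoodChain G (compUnion G s) F := by
  induction s using Finset.induction_on with
  | empty => exact ⟨∅, by simp, ⟨by simp, by simp, by simp, by simp⟩⟩
  | @insert c s hc ih =>
    obtain ⟨F, hcard, hgood⟩ := ih
    obtain ⟨u, v, p, hp, rfl, hlen⟩ := exists_path_of_component G c
    obtain ⟨A, hAcard, hA⟩ := exists_chain_of_path hF p hp
    set U := compUnion G s with hU
    have hdisj : ∀ X ∈ A, Disjoint U X := by
      intro X hX
      refine Finset.disjoint_left.2 fun x hx hxX => hc ?_
      have := hA.subset X hX hxX
      rw [mem_compUnion, Finset.mem_singleton] at this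
      rwa [← this, ← mem_compUnion]
    have hinj : Set.InjOn (fun X => U ∪ X) (A : Set (Finset V)) := by
      intro X hX Y hY hXY
      rw [← Finset.union_sdiff_cancel_left (hdisj X hX),
        ← Finset.union_sdiff_cancel_left (hdisj Y hY)]
      exact congrArg (· \ U) hXY
    have hFA : Disjoint F (A.image fun X => U ∪ X) := by
      refine Finset.disjoint_left.2 fun Y hY hYA => ?_
      obtain ⟨X, hX, rfl⟩ := Finset.mem_image.1 hYA
      obtain ⟨x, hx⟩ := hA.nonempty X hX
      exact Finset.disjoint_left.1 (hdisj X hX)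
        (hgood.subset _ hY (Finset.mem_union_right _ hx)) hx
    have hUs : U ⊆ compUnion G (insert (G.connectedComponentMk u) s) := by
      intro x hx
      rw [hU, mem_compUnion] at hx
      exact mem_compUnion.2 (Finset.mem_insert_of_mem hx)
    have hCs : compUnion G {G.connectedComponentMk u} ⊆
        compUnion G (insert (G.connectedComponentMk u) s) := by
      intro x hx
      rw [mem_compUnion, Finset.mem_singleton] at hx
      exact mem_compUnion.2 (by simp [hx])
    refine ⟨F ∪ A.image fun X => U ∪ X, ?_, ?_, ?_, ?_, ?_⟩
    · rw [Finset.card_union_of_disjoint hFA, Finset.card_image_of_injOn hinj, hcard, hAcard,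
        Finset.sum_insert hc, hlen, add_comm]
    · have hlow : ∀ X ∈ F, ∀ Y, X ⊆ U ∪ Y := fun X hX Y =>
        (hgood.subset X hX).trans Finset.subset_union_left
      intro X hX Y hY
      rw [Finset.mem_union, Finset.mem_image] at hX hY
      rcases hX with hX | ⟨X, hX, rfl⟩ <;> rcases hY with hY | ⟨Y, hY, rfl⟩
      · exact hgood.chain X hX Y hY
      · exact Or.inl (hlow X hX Y)
      · exact Or.inr (hlow Y hY X)
      · exact (hA.chain X hX Y hY).imp (fun h => Finset.union_subset_union_right h)
          (fun h => Finset.union_subset_union_right h)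
    all_goals
      intro X hX
      rw [Finset.mem_union, Finset.mem_image] at hX
      rcases hX with hX | ⟨X, hX, rfl⟩
    · exact hgood.nonempty X hX
    · exact (hA.nonempty X hX).mono Finset.subset_union_right
    · exact (hgood.subset X hX).trans hUs
    · exact Finset.union_subset hUs ((hA.subset X hX).trans hCs)
    · exact hgood.width X hX
    · exact (cutWidth_compUnion_union G s X).trans (hA.width X hX)

/-! ### Pigeonhole and conclusion -/

/-- A set of more than `n / 2` residues modulo `n`, represented in `{1, …, n}`, intersects its
shift by `m`. -/
lemma exists_shift {n m : ℕ} (hm : m ≤ n) {S : Finset ℕ} (hS : S ⊆ Finset.Icc 1 n)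
    (hcard : n < 2 * S.card) : ∃ a ∈ S, ∃ b ∈ S, b = a + m ∨ b + n = a + m := by
  set f : ℕ → ℕ := fun a => if a + m ≤ n then a + m else a + m - n with hf
  have hS' : ∀ a ∈ S, 1 ≤ a ∧ a ≤ n := fun a ha => Finset.mem_Icc.1 (hS ha)
  have hinj : Set.InjOn f (S : Set ℕ) := by
    intro a ha b hb hab
    have h1 := hS' a ha
    have h2 := hS' b hb
    simp only [hf] at hab
    split_ifs at hab <;> omega
  have hsub : S.image f ⊆ Finset.Icc 1 n := by
    intro b hb
    obtain ⟨a, ha, rfl⟩ := Finset.mem_image.1 hb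
    have h1 := hS' a ha
    simp only [hf, Finset.mem_Icc]
    split_ifs <;> omega
  have hne : ¬ Disjoint S (S.image f) := by
    intro hd
    have h1 := Finset.card_le_card (Finset.union_subset hS hsub)
    rw [Finset.card_union_of_disjoint hd, Finset.card_image_of_injOn hinj, Nat.card_Icc] at h1
    omega
  obtain ⟨b, hb, hb'⟩ := Finset.not_disjoint_iff.1 hne
  obtain ⟨a, ha, rfl⟩ := Finset.mem_image.1 hb'
  refine ⟨a, ha, _, hb, ?_⟩
  simp only [hf]
  split_ifs <;> omega

end CutOfLargeDiam

end MinBisection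

/-- For every forest `G` on `n` vertices with `diam*(G) > 1/2` and every
integer `1 ≤ m ≤ n`, there is a cut `(B, W)` in `G` with `|B| = m` and `e_G(B, W) ≤ 2`. -/
theorem MinBisection.cut_of_large_diamStar {V : Type*} [Fintype V] (G : SimpleGraph V)
    (hF : G.IsAcyclic) (hd : 1 / 2 < forestDiamStar G)
    (m : ℕ) (hm1 : 1 ≤ m) (hmn : m ≤ Fintype.card V) :
    ∃ B : Finset V, B.card = m ∧ cutWidth G B ≤ 2 := by
  let _ : Fintype G.ConnectedComponent := Fintype.ofFinite _
  obtain ⟨F, hcard, hgood⟩ := exists_chain_of_components hF Finset.univ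
  have hbig : Fintype.card V < 2 * F.card := by
    have hpos : (0 : ℝ) < Fintype.card V := by exact_mod_cast hm1.trans hmn
    have h : 1 / 2 < (∑ c : G.ConnectedComponent, (compLongestPathCard G c : ℝ)) /
      (Fintype.card V : ℝ) := hd
    rw [lt_div_iff₀ hpos, ← Nat.cast_sum, ← hcard] at h
    have h2 : (Fintype.card V : ℝ) < 2 * F.card := by linarith
    exact_mod_cast h2
  -- Members of a chain are determined by their sizes.
  have hinj : Set.InjOn Finset.card (F : Set (Finset V)) := by
    intro X hX Y hY hXY
    rcases hgood.chain X hX Y hY with h | h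
    · exact Finset.eq_of_subset_of_card_le h hXY.ge
    · exact (Finset.eq_of_subset_of_card_le h hXY.le).symm
  have hS : F.image Finset.card ⊆ Finset.Icc 1 (Fintype.card V) := by
    intro k hk
    obtain ⟨X, hX, rfl⟩ := Finset.mem_image.1 hk
    exact Finset.mem_Icc.2 ⟨(hgood.nonempty X hX).card_pos, X.card_le_univ⟩
  obtain ⟨a, ha, b, hb, hab⟩ := exists_shift hmn hS
    (by rwa [Finset.card_image_of_injOn hinj])
  obtain ⟨X, hX, rfl⟩ := Finset.mem_image.1 ha
  obtain ⟨Y, hY, rfl⟩ := Finset.mem_image.1 hb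
  have hsub : ∀ A ∈ F, ∀ B ∈ F, A.card ≤ B.card → A ⊆ B := by
    intro A hA B hB hAB
    rcases hgood.chain A hA B hB with h | h
    · exact h
    · exact (Finset.eq_of_subset_of_card_le h hAB).ge
  rcases hab with hab | hab
  · have h := Finset.card_sdiff_add_card_eq_card (hsub X hX Y hY (by omega))
    exact ⟨Y \ X, by omega, cutWidth_le_two G (hgood.width X hX) (hgood.width Y hY)
      (boundary_sdiff_subset G X Y)⟩
  · have h := Finset.card_sdiff_add_card_eq_card (hsub Y hY X hX (by omega))
    have h' := Finset.card_add_card_compl (X \ Y)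
    exact ⟨(X \ Y)ᶜ, by omega, cutWidth_le_two G (hgood.width Y hY) (hgood.width X hX)
      ((boundary_compl_subset G _).trans (boundary_sdiff_subset G Y X))⟩
end
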